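/- arXiv:1703.10347 — 2 statements merged into one kernel-verified Lean document; each statement's English description precedes it below -/
import Mathlib

section
/- Let k ≥ 3 be an integer. (a) The double series Z_k(s, w) = ∑_{h≥1} ∑_{n≥0} r_k(n+h) r_k(n) / ((n+h)^{s + k/2 − 1} h^w) converges absolutely for all s, w ∈ ℂ with Re s > 1 + k/2 and Re w ≥ 0. (b) Define W_k(s) = ∑_{n≥1} r_k(n)²/n^{s+k} + 2 Z_k(s + k/2 + 1, 0). Then for every s ∈ ℂ with Re s > 2 and every real σ with 1 < σ < Re s − 1, the integral below converges absolutely and ∑_{n≥1} S_k(n)²/n^{s+k} = ζ(s+k) + W_k(s) + (1/2π) ∫_{−∞}^{∞} W_k(s − σ − it) ζ(σ + it) Γ(σ + it) Γ(s + k − σ − it) / Γ(s + k) dt. -/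
open scoped Real

/-- `rk k m` = number of ways to write `m` as a sum of `k` integer squares. -/
noncomputable def rk (k m : ℕ) : ℕ :=
  Nat.card {v : Fin k → ℤ // (∑ i, (v i) ^ 2) = (m : ℤ)}

/-- `Sk k t` = number of lattice points of `ℤ^k` in the closed ball of radius `√t`. -/
noncomputable def Sk (k : ℕ) (t : ℝ) : ℕ :=
  Nat.card {v : Fin k → ℤ // (∑ i, ((v i : ℝ)) ^ 2) ≤ t}

/-- `Vk k` = volume of the unit ball in `ℝ^k`. -/
noncomputable def Vk (k : ℕ) : ℝ :=
  Real.pi ^ ((k : ℝ) / 2) / Real.Gamma ((k : ℝ) / 2 + 1)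

/-- `Pk k t` = lattice point discrepancy of the `k`-dimensional ball of radius `√t`. -/
noncomputable def Pk (k : ℕ) (t : ℝ) : ℝ :=
  (Sk k t : ℝ) - Vk k * t ^ ((k : ℝ) / 2)

/-- Value of the (analytically continued) Riemann zeta function at a real point. -/
noncomputable def rzeta (x : ℝ) : ℝ := (riemannZeta (x : ℂ)).re

/-- The Riemann zeta function with its 2-factor removed. -/
noncomputable def rzeta2 (x : ℝ) : ℝ := (1 - (2 : ℝ) ^ (-x)) * rzeta x

/-- The constant `C_k` for `k ≥ 4`. -/
noncomputable def Ck (k : ℕ) : ℝ :=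
  ((k : ℝ) ^ 2 / 24) * (Vk k) ^ 2 +
    Real.pi ^ (k : ℝ) * rzeta ((k : ℝ) - 2) * (1 + (2 : ℝ) ^ ((3 : ℝ) - (k : ℝ))) /
      (12 * (Real.Gamma ((k : ℝ) / 2)) ^ 2 * rzeta2 (k : ℝ))

open Complex MeasureTheory

/-- The shifted convolution sum `Z_k(s, w)`, summing over shifts `h = p.1 + 1 ≥ 1` and
`n = p.2 ≥ 0`. -/
noncomputable def Zk (k : ℕ) (s w : ℂ) : ℂ :=
  ∑' p : ℕ × ℕ, (rk k (p.2 + (p.1 + 1)) : ℂ) * (rk k p.2 : ℂ) /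
    (((p.2 : ℂ) + ((p.1 : ℂ) + 1)) ^ (s + (k : ℂ) / 2 - 1) * ((p.1 : ℂ) + 1) ^ w)

/-- `W_k(s)`, the diagonal plus off-diagonal part. -/
noncomputable def Wk (k : ℕ) (s : ℂ) : ℂ :=
  (∑' n : ℕ, ((rk k (n + 1) : ℂ)) ^ 2 / ((n : ℂ) + 1) ^ (s + (k : ℂ)))
    + 2 * Zk k (s + (k : ℂ) / 2 + 1) 0

namespace Complex

theorem differentiableAt_Gamma_of_re_pos {s : ℂ} (hs : 0 < s.re) : DifferentiableAt ℂ Gamma s :=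
  differentiableAt_Gamma s fun m h => by
    have := congrArg re h
    simp at this
    linarith [(Nat.cast_nonneg m : (0 : ℝ) ≤ m)]

theorem norm_betaIntegral_le (u v : ℂ) :
    ‖betaIntegral u v‖ ≤ ∫ x : ℝ in 0..1, x ^ (u.re - 1) * (1 - x) ^ (v.re - 1) := by
  refine (intervalIntegral.norm_integral_le_integral_norm zero_le_one).trans_eq ?_
  rw [intervalIntegral.integral_of_le zero_le_one, intervalIntegral.integral_of_le zero_le_one,
    integral_Ioc_eq_integral_Ioo, integral_Ioc_eq_integral_Ioo]
  refine setIntegral_congr_fun measurableSet_Ioo fun x hx => ?_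
  have h1 : ‖(x : ℂ) ^ (u - 1)‖ = x ^ (u.re - 1) := by
    rw [norm_cpow_eq_rpow_re_of_pos hx.1]; simp
  have h2 : ‖(1 - (x : ℂ)) ^ (v - 1)‖ = (1 - x) ^ (v.re - 1) := by
    have := norm_cpow_eq_rpow_re_of_pos (sub_pos.2 hx.2) (v - 1)
    simpa using this
  simp [h1, h2]

/-- Raising the first argument of the beta function by `2` makes its decay in vertical strips
explicit. -/
theorem betaIntegral_add_two {u v : ℂ} (hu : 0 < u.re) (hv : 0 < v.re) :
    u * (u + 1) * betaIntegral u v = (u + v) * (u + v + 1) * betaIntegral (u + 2) v := by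
  have hu0 : u ≠ 0 := fun h => by simp [h] at hu
  have hu1 : u + 1 ≠ 0 := fun h => by have := congrArg re h; simp at this; linarith
  have h0 : u + v ≠ 0 := fun h => by have := congrArg re h; simp at this; linarith
  have h1 : u + v + 1 ≠ 0 := fun h => by have := congrArg re h; simp at this; linarith
  have hG : Gamma (u + v) ≠ 0 := Gamma_ne_zero_of_re_pos (by simp; linarith)
  have hGu : Gamma (u + 2) = (u + 1) * (u * Gamma u) := by
    rw [← Gamma_add_one u hu0, ← Gamma_add_one _ hu1]; ring_nf
  have hGuv : Gamma (u + 2 + v) = (u + v + 1) * ((u + v) * Gamma (u + v)) := by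
    rw [← Gamma_add_one _ h0, ← Gamma_add_one _ h1]; ring_nf
  rw [betaIntegral_eq_Gamma_mul_div u v hu hv,
    betaIntegral_eq_Gamma_mul_div (u + 2) v (by simp; linarith) hv, hGu, hGuv]
  field_simp

theorem integrable_Gamma_mul_Gamma {z : ℂ} {σ : ℝ} (hσ : 0 < σ) (hσz : σ < z.re) :
    Integrable (fun t : ℝ => Gamma (σ + t * I) * Gamma (z - (σ + t * I)) / Gamma z) := by
  set C : ℝ := ∫ x : ℝ in 0..1, x ^ (σ + 2 - 1) * (1 - x) ^ (z.re - σ - 1)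
  set c : ℝ := min 1 (σ ^ 2)
  have hc : 0 < c := lt_min one_pos (by positivity)
  refine (integrable_inv_one_add_sq.const_mul (‖z * (z + 1)‖ * C / c)).mono' ?_ ?_
  · refine Continuous.aestronglyMeasurable (continuous_iff_continuousAt.2 fun t => ?_)
    have h1 : ContinuousAt Gamma (σ + t * I) :=
      (differentiableAt_Gamma_of_re_pos (by simpa)).continuousAt
    have h2 : ContinuousAt Gamma (z - (σ + t * I)) :=
      (differentiableAt_Gamma_of_re_pos (by simpa)).continuousAt
    exact ((h1.comp (f := fun t : ℝ => (σ + t * I : ℂ)) (by fun_prop)).mul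
      (h2.comp (f := fun t : ℝ => (z - (σ + t * I) : ℂ)) (by fun_prop))).div_const _
  · refine .of_forall fun t => ?_
    set w : ℂ := σ + t * I with hw
    have hwre : w.re = σ := by simp [hw]
    have hB := betaIntegral_eq_Gamma_mul_div w (z - w) (by rw [hwre]; exact hσ) (by simpa [hwre])
    rw [add_sub_cancel] at hB
    rw [← hB]
    have key := congrArg norm (betaIntegral_add_two (u := w) (v := z - w) (by rw [hwre]; exact hσ)
      (by simpa [hwre]))
    rw [add_sub_cancel, norm_mul, norm_mul _ (betaIntegral (w + 2) _)] at key
    have hle : ‖betaIntegral (w + 2) (z - w)‖ ≤ C := by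
      simpa [hwre, C] using norm_betaIntegral_le (w + 2) (z - w)
    have hw1 : c * (1 + t ^ 2) ≤ ‖w * (w + 1)‖ := by
      have e1 : ‖w‖ ^ 2 = σ ^ 2 + t ^ 2 := by
        rw [Complex.sq_norm, normSq_apply]; simp [hw]; ring
      have e2 : ‖w + 1‖ ^ 2 = (σ + 1) ^ 2 + t ^ 2 := by
        rw [Complex.sq_norm, normSq_apply]; simp [hw]; ring
      have e3 : ‖w‖ ≤ ‖w + 1‖ := by
        refine (sq_le_sq₀ (norm_nonneg _) (norm_nonneg _)).1 ?_
        rw [e1, e2]; nlinarith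
      have e4 : c ≤ 1 := min_le_left _ _
      have e5 : c ≤ σ ^ 2 := min_le_right _ _
      rw [norm_mul]
      nlinarith [norm_nonneg w, sq_nonneg t]
    have hpos : 0 < c * (1 + t ^ 2) := by positivity
    have : ‖betaIntegral w (z - w)‖ * (c * (1 + t ^ 2)) ≤ ‖z * (z + 1)‖ * C := by
      calc _ ≤ ‖betaIntegral w (z - w)‖ * ‖w * (w + 1)‖ := by gcongr
        _ = _ := by rw [mul_comm, key]
        _ ≤ _ := by gcongr
    calc _ ≤ ‖z * (z + 1)‖ * C / (c * (1 + t ^ 2)) := (le_div_iff₀ hpos).2 this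
      _ = _ := by field_simp

end Complex

section
open Set

theorem image_div_one_add_Ioi : (fun x : ℝ => x / (1 + x)) '' Ioi 0 = Ioo 0 1 := by
  ext y
  simp only [mem_image, mem_Ioi, mem_Ioo]
  constructor
  · rintro ⟨x, hx, rfl⟩
    exact ⟨by positivity, by rw [div_lt_one (by positivity)]; linarith⟩
  · rintro ⟨h0, h1⟩
    have : 0 < 1 - y := by linarith
    exact ⟨y / (1 - y), by positivity, by field_simp; ring⟩

theorem injOn_div_one_add_Ioi : InjOn (fun x : ℝ => x / (1 + x)) (Ioi 0) := by
  intro x (hx : 0 < x) y (hy : 0 < y) h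
  have : x * (1 + y) = y * (1 + x) := by
    rwa [div_eq_div_iff (by positivity) (by positivity)] at h
  linarith

theorem hasDerivWithinAt_div_one_add {x : ℝ} (hx : x ∈ Ioi 0) :
    HasDerivWithinAt (fun x : ℝ => x / (1 + x)) (1 / (1 + x) ^ 2) (Ioi 0) x := by
  have hx' : 1 + x ≠ 0 := by have : 0 < x := hx; positivity
  have := ((hasDerivAt_id x).div ((hasDerivAt_id x).const_add 1) hx').hasDerivWithinAt (s := Ioi 0)
  convert! this using 1
  simp

theorem betaIntegrand_comp_div_one_add (w z : ℂ) {x : ℝ} (hx : x ∈ Ioi 0) :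
    |1 / (1 + x) ^ 2| • (((x / (1 + x) : ℝ) : ℂ) ^ (w - 1) *
      (1 - ((x / (1 + x) : ℝ) : ℂ)) ^ (z - w - 1)) =
      (x : ℂ) ^ (w - 1) • ((1 + x : ℝ) : ℂ) ^ (-z) := by
  have hx : 0 < x := hx
  have h1 : 0 < 1 + x := by positivity
  have h1' : ((1 + x : ℝ) : ℂ) ≠ 0 := ofReal_ne_zero.2 h1.ne'
  have e : (1 - ((x / (1 + x) : ℝ) : ℂ)) = (((1 + x)⁻¹ : ℝ) : ℂ) := by
    rw [← ofReal_one, ← ofReal_sub]; congr 1; field_simp; ring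
  have e2 : (((1 + x)⁻¹ : ℝ) : ℂ) ^ (z - w - 1) = ((1 + x : ℝ) : ℂ) ^ (-(z - w - 1)) := by
    rw [ofReal_inv, inv_cpow _ _ (by rw [arg_ofReal_of_nonneg h1.le]; exact Real.pi_ne_zero.symm),
      cpow_neg]
  have e3 : ((x / (1 + x) : ℝ) : ℂ) ^ (w - 1) =
      (x : ℂ) ^ (w - 1) * ((1 + x : ℝ) : ℂ) ^ (-(w - 1)) := by
    rw [div_eq_mul_inv, ofReal_mul, mul_cpow_ofReal_nonneg hx.le (by positivity), ofReal_inv,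
      inv_cpow _ _ (by rw [arg_ofReal_of_nonneg h1.le]; exact Real.pi_ne_zero.symm), cpow_neg]
  have e4 : ((|1 / (1 + x) ^ 2| : ℝ) : ℂ) = ((1 + x : ℝ) : ℂ) ^ (-2 : ℂ) := by
    rw [abs_of_pos (by positivity), cpow_neg, cpow_ofNat]; simp
  rw [e, e2, e3, real_smul, e4, smul_eq_mul]
  have : -z = -2 + (-(w - 1) + -(z - w - 1)) := by ring
  rw [this, cpow_add _ _ h1', cpow_add _ _ h1']
  ring

theorem hasMellin_one_add_cpow_neg {w z : ℂ} (hw : 0 < w.re) (hwz : w.re < z.re) :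
    HasMellin (fun x : ℝ => ((1 + x : ℝ) : ℂ) ^ (-z)) w
      (Complex.Gamma w * Complex.Gamma (z - w) / Complex.Gamma z) := by
  have hv : 0 < (z - w).re := by simpa
  have hint := (intervalIntegrable_iff_integrableOn_Ioo_of_le zero_le_one).1
    (betaIntegral_convergent hw hv)
  have hB := betaIntegral_eq_Gamma_mul_div w (z - w) hw hv
  rw [add_sub_cancel] at hB
  constructor
  · rw [← image_div_one_add_Ioi, integrableOn_image_iff_integrableOn_abs_deriv_smul
      measurableSet_Ioi (fun _ => hasDerivWithinAt_div_one_add) injOn_div_one_add_Ioi] at hint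
    exact hint.congr_fun (fun _ hx => betaIntegrand_comp_div_one_add w z hx) measurableSet_Ioi
  · rw [← hB, betaIntegral, intervalIntegral.integral_of_le zero_le_one,
      integral_Ioc_eq_integral_Ioo, ← image_div_one_add_Ioi,
      integral_image_eq_integral_abs_deriv_smul measurableSet_Ioi
        (fun _ => hasDerivWithinAt_div_one_add) injOn_div_one_add_Ioi]
    exact (setIntegral_congr_fun measurableSet_Ioi
      (fun _ hx => betaIntegrand_comp_div_one_add w z hx)).symm

/-- The Mellin–Barnes integral for `(a + b) ^ (-z)`. -/
theorem mellinBarnes_add_cpow_neg {z : ℂ} {σ : ℝ} (hσ : 0 < σ) (hσz : σ < z.re) {a b : ℝ}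
    (ha : 0 < a) (hb : 0 < b) :
    ((a + b : ℝ) : ℂ) ^ (-z) = (1 / (2 * (π : ℂ))) * ∫ t : ℝ,
      (a : ℂ) ^ (-(z - (σ + t * I))) * (b : ℂ) ^ (-(σ + t * I)) *
        (Complex.Gamma (σ + t * I) * Complex.Gamma (z - (σ + t * I)) / Complex.Gamma z) := by
  set f : ℝ → ℂ := fun x : ℝ => ((1 + x : ℝ) : ℂ) ^ (-z)
  have hx : 0 < b / a := by positivity
  have hM : ∀ t : ℝ, mellin f (σ + t * I) =
      Complex.Gamma (σ + t * I) * Complex.Gamma (z - (σ + t * I)) / Complex.Gamma z := fun t =>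
    (hasMellin_one_add_cpow_neg (by simpa) (by simpa)).2
  have hcont : ContinuousAt f (b / a) := by
    refine ContinuousAt.cpow (by fun_prop) (by fun_prop) (ofReal_mem_slitPlane.2 (by positivity))
  have h := mellinInv_mellin_eq σ f hx
    (hasMellin_one_add_cpow_neg (by simpa) (by simpa)).1
    (by simpa only [VerticalIntegrable, hM] using integrable_Gamma_mul_Gamma hσ hσz) hcont
  have ha' : (a : ℂ) ≠ 0 := ofReal_ne_zero.2 ha.ne'
  have hab : ((a + b : ℝ) : ℂ) ^ (-z) = (a : ℂ) ^ (-z) * f (b / a) := by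
    have : a + b = a * (1 + b / a) := by field_simp
    rw [this, ofReal_mul, mul_cpow_ofReal_nonneg ha.le (by positivity)]
  rw [hab, ← h, mellinInv, real_smul, mul_left_comm, ← integral_const_mul]
  congr 1
  · simp
  · refine integral_congr_ae (.of_forall fun t => ?_)
    have e : ((b / a : ℝ) : ℂ) ^ (-(σ + t * I)) = (a : ℂ) ^ (σ + t * I) * (b : ℂ) ^ (-(σ + t * I)) := by
      rw [div_eq_mul_inv, ofReal_mul, mul_cpow_ofReal_nonneg hb.le (by positivity), ofReal_inv,
        inv_cpow _ _ (by rw [arg_ofReal_of_nonneg ha.le]; exact Real.pi_ne_zero.symm),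
        ← cpow_neg, neg_neg, mul_comm]
    have e2 : -(z - (σ + t * I)) = -z + (σ + t * I) := by ring
    simp only [hM, e, e2, cpow_add _ _ ha', smul_eq_mul]
    ring

end

section Antidiagonal
open Finset

theorem Summable.hasSum_sum_antidiagonal {f : ℕ × ℕ → ℂ} (hf : Summable f) :
    HasSum (fun n => ∑ p ∈ antidiagonal n, f p) (∑' p, f p) := by
  have h := HasAntidiagonal.sigmaAntidiagonalEquivProd.hasSum_iff.2 hf.hasSum
  refine h.sigma fun n => ?_
  have := hasSum_fintype (fun p : antidiagonal n => f p)
  rwa [sum_coe_sort (antidiagonal n) f] at this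

theorem summable_of_summable_sum_antidiagonal {f : ℕ × ℕ → ℝ} (hf0 : 0 ≤ f)
    (hf : Summable fun n => ∑ p ∈ antidiagonal n, f p) : Summable f := by
  rw [← HasAntidiagonal.sigmaAntidiagonalEquivProd.summable_iff]
  refine (summable_sigma_of_nonneg fun _ => hf0 _).2 ?_
  refine ⟨fun n => (hasSum_fintype _).summable, hf.congr fun n => ?_⟩
  rw [tsum_fintype, ← sum_coe_sort (antidiagonal n) f]
  rfl

end Antidiagonal

theorem norm_natCast_add_one_cpow (n : ℕ) (z : ℂ) :
    ‖((n : ℂ) + 1) ^ z‖ = ((n : ℝ) + 1) ^ z.re := by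
  have := norm_cpow_eq_rpow_re_of_pos (x := (n : ℝ) + 1) (by positivity) z
  simpa using this

theorem summable_one_div_natCast_add_one_rpow {x : ℝ} (hx : 1 < x) :
    Summable fun n : ℕ => ‖(1 : ℂ)‖ / ((n : ℝ) + 1) ^ x := by
  simpa using (summable_nat_add_iff 1).2 (Real.summable_one_div_nat_rpow.2 hx)

section DirichletSeries

variable {a : ℕ → ℂ}

theorem continuous_tsum_div_cpow {x : ℝ} {u : ℝ → ℂ} (hu : Continuous u) (hux : ∀ t, (u t).re = x)
    (ha : Summable fun m => ‖a m‖ / ((m : ℝ) + 1) ^ x) :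
    Continuous fun t => ∑' m, a m / ((m : ℂ) + 1) ^ u t := by
  refine continuous_tsum (fun m => ?_) ha fun m t => ?_
  · refine continuous_const.div ?_ fun t => natCast_add_one_cpow_ne_zero m _
    exact hu.const_cpow (.inl (Nat.cast_add_one_ne_zero m))
  · rw [norm_div, norm_natCast_add_one_cpow, hux]

theorem norm_tsum_div_cpow_le {x : ℝ} {u : ℂ} (hux : u.re = x)
    (ha : Summable fun m => ‖a m‖ / ((m : ℝ) + 1) ^ x) :
    ‖∑' m, a m / ((m : ℂ) + 1) ^ u‖ ≤ ∑' m, ‖a m‖ / ((m : ℝ) + 1) ^ x :=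
  tsum_of_norm_bounded ha.hasSum fun m => by rw [norm_div, norm_natCast_add_one_cpow, hux]

variable {z : ℂ} {σ : ℝ}

theorem integrable_dirichletSeries_mul_zeta_mul_Gamma (hσ : 1 < σ) (hσz : σ < z.re)
    (ha : Summable fun m => ‖a m‖ / ((m : ℝ) + 1) ^ (z.re - σ)) :
    Integrable fun t : ℝ => (∑' m, a m / ((m : ℂ) + 1) ^ (z - (σ + t * I))) *
      riemannZeta (σ + t * I) *
      (Complex.Gamma (σ + t * I) * Complex.Gamma (z - (σ + t * I)) / Complex.Gamma z) := by
  have hζ (t : ℝ) : riemannZeta (σ + t * I) = ∑' n : ℕ, 1 / ((n : ℂ) + 1) ^ (σ + t * I : ℂ) :=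
    zeta_eq_tsum_one_div_nat_add_one_cpow (by simpa)
  have h1 := summable_one_div_natCast_add_one_rpow hσ
  simp_rw [hζ]
  refine (integrable_Gamma_mul_Gamma (zero_lt_one.trans hσ) hσz).bdd_mul
    (c := (∑' m, ‖a m‖ / ((m : ℝ) + 1) ^ (z.re - σ)) * ∑' n : ℕ, ‖(1 : ℂ)‖ / ((n : ℝ) + 1) ^ σ) ?_ ?_
  · exact ((continuous_tsum_div_cpow (by fun_prop) (by simp) ha).mul
      (continuous_tsum_div_cpow (by fun_prop) (by simp) h1)).aestronglyMeasurable
  · refine .of_forall fun t => ?_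
    rw [norm_mul]
    exact mul_le_mul (norm_tsum_div_cpow_le (by simp) ha) (norm_tsum_div_cpow_le (by simp) h1)
      (norm_nonneg _) (tsum_nonneg fun _ => by positivity)

/-- The Mellin–Barnes representation of the shifted double series attached to a Dirichlet series. -/
theorem hasSum_div_add_cpow (hσ : 1 < σ) (hσz : σ < z.re)
    (ha : Summable fun m => ‖a m‖ / ((m : ℝ) + 1) ^ (z.re - σ)) :
    HasSum (fun p : ℕ × ℕ => a p.1 / ((p.1 : ℂ) + 1 + ((p.2 : ℂ) + 1)) ^ z)
      ((1 / (2 * (π : ℂ))) * ∫ t : ℝ, (∑' m, a m / ((m : ℂ) + 1) ^ (z - (σ + t * I))) *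
        riemannZeta (σ + t * I) *
        (Complex.Gamma (σ + t * I) * Complex.Gamma (z - (σ + t * I)) / Complex.Gamma z)) := by
  set G : ℝ → ℂ := fun t =>
    Complex.Gamma (σ + t * I) * Complex.Gamma (z - (σ + t * I)) / Complex.Gamma z
  have hG : Integrable G := integrable_Gamma_mul_Gamma (zero_lt_one.trans hσ) hσz
  set F : ℕ × ℕ → ℝ → ℂ := fun p t =>
    a p.1 / ((p.1 : ℂ) + 1) ^ (z - (σ + t * I)) * (1 / ((p.2 : ℂ) + 1) ^ (σ + t * I : ℂ)) * G t
  have h1 := summable_one_div_natCast_add_one_rpow hσ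
  have hn1 (m : ℕ) (t : ℝ) : ‖a m / ((m : ℂ) + 1) ^ (z - (σ + t * I))‖ =
      ‖a m‖ / ((m : ℝ) + 1) ^ (z.re - σ) := by
    rw [norm_div, norm_natCast_add_one_cpow]; simp
  have hn2 (n : ℕ) (t : ℝ) : ‖1 / ((n : ℂ) + 1) ^ (σ + t * I : ℂ)‖ =
      ‖(1 : ℂ)‖ / ((n : ℝ) + 1) ^ σ := by
    rw [norm_div, norm_natCast_add_one_cpow]; simp
  have hint (p : ℕ × ℕ) : Integrable (F p) := by
    refine hG.bdd_mul (c := ‖a p.1‖ / ((p.1 : ℝ) + 1) ^ (z.re - σ) *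
      (‖(1 : ℂ)‖ / ((p.2 : ℝ) + 1) ^ σ)) ?_ (.of_forall fun t => by rw [norm_mul, hn1, hn2])
    refine Continuous.aestronglyMeasurable (.mul ?_ ?_) <;>
    exact continuous_const.div (Continuous.const_cpow (by fun_prop)
      (.inl (Nat.cast_add_one_ne_zero _))) fun t => natCast_add_one_cpow_ne_zero _ _
  have hsum : Summable fun p => ∫ t, ‖F p t‖ := by
    have := (ha.mul_of_nonneg h1 (fun _ => by positivity) (fun _ => by positivity)).mul_right
      (∫ t, ‖G t‖)
    refine this.congr fun p => ?_
    rw [← integral_const_mul]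
    exact integral_congr_ae (.of_forall fun t => by simp only [F, norm_mul, hn1, hn2])
  have key := (hasSum_integral_of_summable_integral_norm hint hsum).mul_left (1 / (2 * (π : ℂ)))
  convert! key using 1
  · funext p
    have hb := mellinBarnes_add_cpow_neg (zero_lt_one.trans hσ) hσz (a := (p.1 : ℝ) + 1)
      (b := (p.2 : ℝ) + 1) (by positivity) (by positivity)
    have hF (t : ℝ) : F p t = a p.1 * ((((p.1 : ℝ) + 1 : ℝ) : ℂ) ^ (-(z - (σ + t * I))) *
        (((p.2 : ℝ) + 1 : ℝ) : ℂ) ^ (-(σ + t * I)) * G t) := by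
      simp only [F, cpow_neg]
      push_cast
      ring
    simp_rw [hF]
    rw [integral_const_mul, mul_left_comm, ← hb, cpow_neg]
    push_cast
    rw [div_eq_mul_inv]
  · congr 2
    funext t
    have hζ : riemannZeta (σ + t * I) = ∑' n : ℕ, 1 / ((n : ℂ) + 1) ^ (σ + t * I : ℂ) :=
      zeta_eq_tsum_one_div_nat_add_one_cpow (by simpa)
    rw [hζ, tsum_mul_tsum_of_summable_norm (by simpa only [hn1] using ha)
      (by simpa only [hn2] using h1), ← tsum_mul_right]

/-- The Dirichlet series of the partial sums of `a`, shifted by `1`, through a Mellin–Barnes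
integral of the Dirichlet series of `a`. -/
theorem tsum_one_add_sum_div_cpow (hσ : 1 < σ) (hσz : σ < z.re)
    (ha : Summable fun m => ‖a m‖ / ((m : ℝ) + 1) ^ (z.re - σ)) :
    ∑' n : ℕ, (1 + ∑ m ∈ Finset.range (n + 1), a m) / ((n : ℂ) + 1) ^ z =
      riemannZeta z + ∑' m, a m / ((m : ℂ) + 1) ^ z +
      (1 / (2 * (π : ℂ))) * ∫ t : ℝ, (∑' m, a m / ((m : ℂ) + 1) ^ (z - (σ + t * I))) *
        riemannZeta (σ + t * I) *
        (Complex.Gamma (σ + t * I) * Complex.Gamma (z - (σ + t * I)) / Complex.Gamma z) := by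
  have hz : 1 < z.re := hσ.trans hσz
  have hsum := hasSum_div_add_cpow hσ hσz ha
  rw [← hsum.tsum_eq]
  have hanti := hsum.summable.hasSum_sum_antidiagonal
  have h3 : HasSum (fun n : ℕ => (∑ m ∈ Finset.range n, a m) / ((n : ℂ) + 1) ^ z)
      (∑' p : ℕ × ℕ, a p.1 / ((p.1 : ℂ) + 1 + ((p.2 : ℂ) + 1)) ^ z) := by
    refine (hasSum_nat_add_iff' 1).1 ?_
    simp only [Finset.range_one, Finset.sum_singleton, Finset.range_zero, Finset.sum_empty,
      zero_div, sub_zero]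
    refine hanti.congr_fun ?_
    intro n
    rw [Finset.Nat.sum_antidiagonal_eq_sum_range_succ_mk, Finset.sum_div]
    refine Finset.sum_congr rfl fun m hm => ?_
    have : m ≤ n := by simpa [Nat.lt_succ_iff] using hm
    congr 2
    push_cast [Nat.cast_sub this]
    ring
  have h1 : HasSum (fun n : ℕ => 1 / ((n : ℂ) + 1) ^ z) (riemannZeta z) := by
    rw [zeta_eq_tsum_one_div_nat_add_one_cpow hz]
    refine (Summable.of_norm ?_).hasSum
    simpa only [norm_div, norm_natCast_add_one_cpow] using summable_one_div_natCast_add_one_rpow hz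
  have h2 : HasSum (fun n : ℕ => a n / ((n : ℂ) + 1) ^ z) (∑' m, a m / ((m : ℂ) + 1) ^ z) := by
    refine (Summable.of_norm_bounded ha fun n => ?_).hasSum
    rw [norm_div, norm_natCast_add_one_cpow]
    gcongr
    · linarith [(Nat.cast_nonneg n : (0 : ℝ) ≤ n)]
    · linarith
  refine (((h1.add h2).add h3).congr_fun ?_).tsum_eq
  intro n
  rw [Finset.sum_range_succ]
  ring

end DirichletSeries

section LatticePoints

theorem Sk_eq_ncard (k n : ℕ) : Sk k n = {v : Fin k → ℤ | ∑ i, v i ^ 2 ≤ (n : ℤ)}.ncard := by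
  rw [Sk, ← Nat.card_coe_set_eq]
  refine Nat.card_congr (Equiv.subtypeEquivRight fun v => ?_)
  simp only [Set.mem_ofPred_eq]
  exact_mod_cast Iff.rfl

theorem setOf_sum_sq_le_subset (k n : ℕ) : {v : Fin k → ℤ | ∑ i, v i ^ 2 ≤ (n : ℤ)} ⊆
    Fintype.piFinset fun _ : Fin k => Finset.Icc (-(n.sqrt : ℤ)) n.sqrt := by
  intro v (hv : ∑ i, v i ^ 2 ≤ (n : ℤ))
  simp only [Finset.mem_coe, Fintype.mem_piFinset, Finset.mem_Icc]
  intro i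
  have h1 : v i ^ 2 ≤ n :=
    (Finset.single_le_sum (f := fun i => v i ^ 2) (fun _ _ => sq_nonneg _)
      (Finset.mem_univ i)).trans hv
  have h2 : (v i).natAbs ≤ n.sqrt := Nat.le_sqrt'.2 (by zify; simpa using h1)
  omega

theorem Sk_le (k n : ℕ) : Sk k n ≤ (2 * n.sqrt + 1) ^ k := by
  rw [Sk_eq_ncard]
  refine (Set.ncard_le_ncard (setOf_sum_sq_le_subset k n) (Finset.finite_toSet _)).trans_eq ?_
  rw [Set.ncard_coe_finset, Fintype.card_piFinset]
  simp only [Int.card_Icc, Finset.prod_const, Finset.card_univ, Fintype.card_fin]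
  congr 1
  omega

theorem Sk_sq_le (k : ℕ) {n : ℕ} (hn : 1 ≤ n) : Sk k n ^ 2 ≤ 9 ^ k * n ^ k := by
  have h1 : 1 ≤ n.sqrt := Nat.le_sqrt'.2 (by simpa)
  have h2 : n.sqrt ^ 2 ≤ n := Nat.sqrt_le' n
  calc Sk k n ^ 2 ≤ ((2 * n.sqrt + 1) ^ k) ^ 2 := by gcongr; exact Sk_le k n
    _ = ((2 * n.sqrt + 1) ^ 2) ^ k := pow_right_comm _ _ _
    _ ≤ (9 * n) ^ k := by gcongr; nlinarith
    _ = _ := mul_pow _ _ _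

theorem Sk_zero (k : ℕ) : Sk k (0 : ℕ) = 1 := by
  rw [Sk_eq_ncard, Set.ncard_eq_one]
  refine ⟨0, Set.eq_singleton_iff_unique_mem.2 ⟨by simp, fun v hv => ?_⟩⟩
  have := setOf_sum_sq_le_subset k 0 hv
  simp only [Finset.mem_coe, Fintype.mem_piFinset, Finset.mem_Icc] at this
  funext i
  have := this i
  simp at this
  simp; omega

theorem Sk_succ (k n : ℕ) : Sk k (n + 1 : ℕ) = Sk k n + rk k (n + 1) := by
  have hr : rk k (n + 1) = {v : Fin k → ℤ | ∑ i, v i ^ 2 = ((n + 1 : ℕ) : ℤ)}.ncard := by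
    rw [rk, ← Nat.card_coe_set_eq]; rfl
  have hfin (n : ℕ) : {v : Fin k → ℤ | ∑ i, v i ^ 2 ≤ (n : ℤ)}.Finite :=
    (Finset.finite_toSet _).subset (setOf_sum_sq_le_subset k n)
  rw [hr, Sk_eq_ncard, Sk_eq_ncard, ← Set.ncard_union_eq
    (t := {v : Fin k → ℤ | ∑ i, v i ^ 2 = ((n + 1 : ℕ) : ℤ)}) ?_ (hfin n)
    ((hfin (n + 1)).subset fun v hv => le_of_eq hv)]
  · congr 1
    ext v
    simp only [Set.mem_union, Set.mem_ofPred_eq]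
    omega
  · rw [Set.disjoint_left]
    intro v (hv : ∑ i, v i ^ 2 ≤ (n : ℤ)) (hv' : ∑ i, v i ^ 2 = ((n + 1 : ℕ) : ℤ))
    omega

theorem sum_rk_range (k n : ℕ) : ∑ m ∈ Finset.range (n + 1), rk k m = Sk k n := by
  induction n with
  | zero =>
    rw [Sk_zero, zero_add, Finset.sum_range_one, ← Sk_zero k, Sk, rk]
    refine Nat.card_congr (Equiv.subtypeEquivRight fun v => ?_)
    have : 0 ≤ ∑ i, v i ^ 2 := Finset.sum_nonneg fun _ _ => sq_nonneg _
    have h : (∑ i, (v i : ℝ) ^ 2 ≤ ((0 : ℕ) : ℝ)) ↔ ∑ i, v i ^ 2 ≤ 0 := by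
      exact_mod_cast Iff.rfl
    rw [h]
    push_cast
    exact ⟨fun h => h.le, fun h => le_antisymm h this⟩
  | succ n ih => rw [Finset.sum_range_succ, ih, Sk_succ]

/-- The number of pairs of lattice points in `ℤ^k` whose larger squared norm is `m + 1`. -/
noncomputable def maxNormPairs (k m : ℕ) : ℕ := rk k (m + 1) ^ 2 + 2 * (rk k (m + 1) * Sk k m)

theorem one_add_sum_maxNormPairs (k n : ℕ) :
    1 + ∑ m ∈ Finset.range n, maxNormPairs k m = Sk k n ^ 2 := by
  induction n with
  | zero => rw [Sk_zero]; simp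
  | succ n ih => rw [Finset.sum_range_succ, ← add_assoc, ih, Sk_succ, maxNormPairs]; ring

theorem summable_maxNormPairs (k : ℕ) {x : ℝ} (hx : k < x) :
    Summable fun m => (maxNormPairs k m : ℝ) / ((m : ℝ) + 1) ^ x := by
  have h : LSeriesSummable (fun n => (maxNormPairs k (n - 1) : ℂ)) (x : ℂ) := by
    refine LSeriesSummable_of_sum_norm_bigO (r := k) ?_ (Nat.cast_nonneg k) (by simpa)
    refine .of_bound (9 ^ k) (Filter.eventually_atTop.2 ⟨1, fun n hn => ?_⟩)
    have e : ∑ j ∈ Finset.Icc 1 n, ‖(maxNormPairs k (j - 1) : ℂ)‖ =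
        ((∑ m ∈ Finset.range n, maxNormPairs k m : ℕ) : ℝ) := by
      rw [Finset.range_eq_Ico, Finset.sum_Ico_eq_sum_range, ← Finset.Ico_add_one_right_eq_Icc,
        Finset.sum_Ico_eq_sum_range]
      push_cast
      refine Finset.sum_congr (by simp) fun i _ => ?_
      rw [Complex.norm_natCast]
      simp
    rw [e, Real.norm_natCast, Real.rpow_natCast, norm_pow, Real.norm_natCast]
    have h1 := one_add_sum_maxNormPairs k n
    have h2 := Sk_sq_le k hn
    exact_mod_cast (by omega : ∑ m ∈ Finset.range n, maxNormPairs k m ≤ 9 ^ k * n ^ k)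
  refine ((summable_nat_add_iff 1).2 h.norm).congr fun m => ?_
  rw [LSeries.norm_term_eq]
  simp

theorem summable_norm_maxNormPairs (k : ℕ) {x : ℝ} (hx : k < x) :
    Summable fun m => ‖(maxNormPairs k m : ℂ)‖ / ((m : ℝ) + 1) ^ x := by
  simpa only [Complex.norm_natCast] using summable_maxNormPairs k hx

theorem summable_rk_mul_Sk (k : ℕ) {x : ℝ} (hx : k < x) :
    Summable fun m => (rk k (m + 1) * Sk k m : ℝ) / ((m : ℝ) + 1) ^ x := by
  refine (summable_maxNormPairs k hx).of_nonneg_of_le (fun m => by positivity) fun m => ?_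
  gcongr
  have : rk k (m + 1) * Sk k m ≤ maxNormPairs k m := by rw [maxNormPairs]; nlinarith
  exact_mod_cast this

theorem sum_antidiagonal_rk_mul_rk (k n : ℕ) :
    ∑ p ∈ Finset.HasAntidiagonal.antidiagonal n, rk k (p.2 + (p.1 + 1)) * rk k p.2 =
      rk k (n + 1) * Sk k n := by
  rw [← sum_rk_range, Finset.mul_sum, ← Finset.Nat.sum_antidiagonal_swap,
    Finset.Nat.sum_antidiagonal_eq_sum_range_succ_mk]
  refine Finset.sum_congr rfl fun m hm => ?_
  have : m + (n - m + 1) = n + 1 := by have := Finset.mem_range.1 hm; omega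
  simp only [Prod.fst_swap, Prod.snd_swap, this]

theorem summable_norm_Zk {k : ℕ} {s w : ℂ} (hs : 1 + (k : ℝ) / 2 < s.re) (hw : 0 ≤ w.re) :
    Summable fun p : ℕ × ℕ => ‖(rk k (p.2 + (p.1 + 1)) : ℂ) * (rk k p.2 : ℂ) /
      (((p.2 : ℂ) + ((p.1 : ℂ) + 1)) ^ (s + (k : ℂ) / 2 - 1) * ((p.1 : ℂ) + 1) ^ w)‖ := by
  set x : ℝ := (s + (k : ℂ) / 2 - 1).re with hxdef
  have hx : k < x := by
    have : x = s.re + k / 2 - 1 := by simp [hxdef]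
    linarith
  have key : Summable fun p : ℕ × ℕ =>
      (rk k (p.2 + (p.1 + 1)) * rk k p.2 : ℝ) / (((p.1 + p.2 : ℕ) : ℝ) + 1) ^ x := by
    refine summable_of_summable_sum_antidiagonal (fun p => by positivity)
      ((summable_rk_mul_Sk k hx).congr fun n => ?_)
    have h := congrArg (fun j : ℕ => (j : ℝ) / ((n : ℝ) + 1) ^ x) (sum_antidiagonal_rk_mul_rk k n)
    simp only [Nat.cast_mul, Nat.cast_sum, Finset.sum_div] at h
    rw [← h]
    refine Finset.sum_congr rfl fun p hp => ?_
    rw [Finset.HasAntidiagonal.mem_antidiagonal.1 hp]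
  refine key.of_nonneg_of_le (fun p => norm_nonneg _) fun p => ?_
  have e : (p.2 : ℂ) + ((p.1 : ℂ) + 1) = ((p.1 + p.2 : ℕ) : ℂ) + 1 := by push_cast; ring
  rw [e, norm_div, norm_mul, norm_mul, Complex.norm_natCast, Complex.norm_natCast,
    norm_natCast_add_one_cpow,
    norm_natCast_add_one_cpow]
  gcongr
  refine le_mul_of_one_le_right (by positivity) (Real.one_le_rpow ?_ hw)
  linarith [(Nat.cast_nonneg p.1 : (0 : ℝ) ≤ p.1)]

theorem Wk_eq_tsum {k : ℕ} {s : ℂ} (hs : 0 < s.re) :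
    Wk k s = ∑' m, (maxNormPairs k m : ℂ) / ((m : ℂ) + 1) ^ (s + k) := by
  have hx : (k : ℝ) < (s + k).re := by simpa
  have hZ : Zk k (s + k / 2 + 1) 0 =
      ∑' m : ℕ, (rk k (m + 1) * Sk k m : ℂ) / ((m : ℂ) + 1) ^ (s + k) := by
    have h := (summable_norm_Zk (k := k) (s := s + k / 2 + 1) (w := 0)
      (by simp; linarith) (by simp)).of_norm.hasSum_sum_antidiagonal
    rw [Zk, ← h.tsum_eq]
    refine tsum_congr fun n => ?_
    have h := congrArg (fun j : ℕ => (j : ℂ) / ((n : ℂ) + 1) ^ (s + k))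
      (sum_antidiagonal_rk_mul_rk k n)
    simp only [Nat.cast_mul, Nat.cast_sum, Finset.sum_div] at h
    rw [← h]
    refine Finset.sum_congr rfl fun p hp => ?_
    rw [← Finset.HasAntidiagonal.mem_antidiagonal.1 hp, cpow_zero, mul_one]
    push_cast
    congr 2 <;> ring
  have hsum2 : Summable fun m : ℕ => (rk k (m + 1) * Sk k m : ℂ) / ((m : ℂ) + 1) ^ (s + k) := by
    refine Summable.of_norm ((summable_rk_mul_Sk k hx).congr fun m => ?_)
    rw [norm_div, norm_mul, Complex.norm_natCast, Complex.norm_natCast, norm_natCast_add_one_cpow]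
  have hsum1 : Summable fun m : ℕ => (rk k (m + 1) : ℂ) ^ 2 / ((m : ℂ) + 1) ^ (s + k) := by
    refine Summable.of_norm_bounded (summable_maxNormPairs k hx) fun m => ?_
    rw [norm_div, norm_pow, Complex.norm_natCast, norm_natCast_add_one_cpow]
    gcongr
    exact_mod_cast (Nat.le_add_right _ _ : rk k (m + 1) ^ 2 ≤ maxNormPairs k m)
  rw [Wk, hZ, ← tsum_mul_left, ← hsum1.tsum_add (hsum2.mul_left 2)]
  refine tsum_congr fun m => ?_
  rw [maxNormPairs]
  push_cast
  ring

end LatticePoints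

/-- (a) absolute convergence of `Z_k(s,w)`; (b) decomposition of
`D(s, S_k × S_k)` in terms of `W_k`. -/
theorem DSkSk_decomposition (k : ℕ) (hk : 3 ≤ k) :
    (∀ s w : ℂ, 1 + (k : ℝ) / 2 < s.re → 0 ≤ w.re →
      Summable (fun p : ℕ × ℕ =>
        ‖(rk k (p.2 + (p.1 + 1)) : ℂ) * (rk k p.2 : ℂ) /
          (((p.2 : ℂ) + ((p.1 : ℂ) + 1)) ^ (s + (k : ℂ) / 2 - 1) * ((p.1 : ℂ) + 1) ^ w)‖)) ∧
    (∀ s : ℂ, 2 < s.re → ∀ σ : ℝ, 1 < σ → σ < s.re - 1 →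
      Integrable (fun t : ℝ =>
        Wk k (s - (σ : ℂ) - t * Complex.I) * riemannZeta ((σ : ℂ) + t * Complex.I)
          * Complex.Gamma ((σ : ℂ) + t * Complex.I)
          * Complex.Gamma (s + (k : ℂ) - (σ : ℂ) - t * Complex.I)
          / Complex.Gamma (s + (k : ℂ))) ∧
      (∑' n : ℕ, ((Sk k ((n : ℝ) + 1) : ℂ)) ^ 2 / ((n : ℂ) + 1) ^ (s + (k : ℂ)))
        = riemannZeta (s + (k : ℂ)) + Wk k s
          + (1 / (2 * (Real.pi : ℂ))) * ∫ t : ℝ,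
              Wk k (s - (σ : ℂ) - t * Complex.I) * riemannZeta ((σ : ℂ) + t * Complex.I)
                * Complex.Gamma ((σ : ℂ) + t * Complex.I)
                * Complex.Gamma (s + (k : ℂ) - (σ : ℂ) - t * Complex.I)
                / Complex.Gamma (s + (k : ℂ))) := by
  refine ⟨fun s w hs hw => summable_norm_Zk hs hw, fun s hs σ hσ hσs => ?_⟩
  have hσz : σ < (s + k).re := by
    simp only [add_re, natCast_re]
    linarith [(Nat.cast_nonneg k : (0 : ℝ) ≤ k)]
  have ha := summable_norm_maxNormPairs k (x := (s + k).re - σ) (by simp; linarith)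
  have hint (t : ℝ) : Wk k (s - (σ : ℂ) - t * I) * riemannZeta (σ + t * I)
      * Complex.Gamma (σ + t * I) * Complex.Gamma (s + k - σ - t * I) / Complex.Gamma (s + k) =
      (∑' m, (maxNormPairs k m : ℂ) / ((m : ℂ) + 1) ^ (s + k - (σ + t * I))) *
        riemannZeta (σ + t * I) * (Complex.Gamma (σ + t * I) *
          Complex.Gamma (s + k - (σ + t * I)) / Complex.Gamma (s + k)) := by
    have e1 : s - σ - t * I + k = s + k - (σ + t * I) := by ring
    rw [Wk_eq_tsum (by simp; linarith), e1, sub_sub (s + (k : ℂ))]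
    ring
  simp_rw [hint]
  refine ⟨integrable_dirichletSeries_mul_zeta_mul_Gamma hσ hσz ha, ?_⟩
  rw [Wk_eq_tsum (by linarith), ← tsum_one_add_sum_div_cpow hσ hσz ha]
  refine tsum_congr fun n => ?_
  have h := one_add_sum_maxNormPairs k (n + 1)
  rw [← Nat.cast_add_one, ← Nat.cast_pow, ← h]
  push_cast
  rfl
end

section
/- Let k ≥ 5 be an integer. There exists a function G : ℂ → ℂ which is holomorphic on the open half-plane {s ∈ ℂ : Re s > 0} such that for all s with Re s > 3, the series ∑_{m≥1} P_k(m)²/m^{s+k−2} converges absolutely and ∑_{m≥1} P_k(m)²/m^{s+k−2} = G(s) + C_k/(s−1). In other words, the Dirichlet series D(s, P_k × P_k) continues to a function on {Re s > 0} that is holomorphic apart from a simple pole at s = 1 with residue C_k. -/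
open scoped Real

namespace LatticeDiscrepancy

/-- The squared Euclidean length of an integer vector, as a natural number. -/
def nsq {k : ℕ} (v : Fin k → ℤ) : ℕ := ∑ i, (v i).natAbs ^ 2

/-- The series `∑ q ^ (n ^ 2)` over the integers. -/
noncomputable def th (q : ℂ) : ℂ := ∑' n : ℤ, q ^ (n.natAbs ^ 2)

lemma Sk_eq (k m : ℕ) : Sk k (m : ℝ) = Nat.card {v : Fin k → ℤ // nsq v ≤ m} := by
  unfold Sk nsq
  congr! 4 with v
  rw [← Nat.cast_le (α := ℝ)]
  push_cast
  simp [Nat.cast_natAbs]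

lemma summable_pow_natAbs_sq {q : ℂ} (hq : ‖q‖ < 1) :
    Summable (fun n : ℤ => ‖q ^ (n.natAbs ^ 2)‖) := by
  have h : Summable (fun n : ℕ => ‖q‖ ^ (n ^ 2)) :=
    Summable.of_nonneg_of_le (fun n => by positivity)
      (fun n => pow_le_pow_of_le_one (norm_nonneg q) hq.le (Nat.le_self_pow two_ne_zero n))
      (summable_geometric_of_lt_one (norm_nonneg q) hq)
  refine Summable.of_nat_of_neg ?_ ?_ <;> simpa using h

lemma hasSum_mul_of_summable_norm {α β : Type*} {f : α → ℂ} {g : β → ℂ} {a b : ℂ}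
    (hf : Summable fun x => ‖f x‖) (hg : Summable fun x => ‖g x‖) (ha : HasSum f a)
    (hb : HasSum g b) : HasSum (fun p : α × β => f p.1 * g p.2) (a * b) :=
  ha.mul hb (summable_mul_of_summable_norm hf hg)

lemma summable_hasSum_th_pow {q : ℂ} (hq : ‖q‖ < 1) (k : ℕ) :
    Summable (fun v : Fin k → ℤ => ‖q ^ nsq v‖) ∧
      HasSum (fun v : Fin k → ℤ => q ^ nsq v) (th q ^ k) := by
  induction k with
  | zero =>
    refine ⟨(hasSum_fintype _).summable, ?_⟩
    simp [nsq]
  | succ k ih =>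
    have h1 := summable_pow_natAbs_sq hq
    have e : ∀ p : ℤ × (Fin k → ℤ), q ^ nsq (Fin.consEquiv (fun _ => ℤ) p) =
        q ^ (p.1.natAbs ^ 2) * q ^ nsq p.2 := by
      intro p
      simp [nsq, Fin.sum_univ_succ, Fin.consEquiv, pow_add]
    constructor
    · rw [← (Fin.consEquiv (fun _ : Fin (k + 1) => ℤ)).summable_iff]
      refine (h1.mul_norm ih.1).congr fun p => ?_
      simp only [Function.comp, e]
    · rw [← (Fin.consEquiv (fun _ : Fin (k + 1) => ℤ)).hasSum_iff, pow_succ']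
      have h2 : HasSum (fun n : ℤ => q ^ (n.natAbs ^ 2)) (th q) := h1.of_norm.hasSum
      have h3 := hasSum_mul_of_summable_norm h1 ih.1 h2 ih.2
      simpa only [Function.comp_def, e] using h3

/-- Counting the sublevel sets of `f` and summing against a geometric weight. -/
lemma hasSum_card_mul_pow {α : Type*} (f : α → ℕ) {r : ℝ} (hr0 : 0 < r) (hr : r < 1)
    (hs : Summable fun a => r ^ f a) :
    HasSum (fun m : ℕ => (Nat.card {a // f a ≤ m} : ℝ) * r ^ m) ((∑' a, r ^ f a) / (1 - r)) := by
  have hg := hasSum_geometric_of_lt_one hr0.le hr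
  have h1 : HasSum (fun p : α × ℕ => r ^ f p.1 * r ^ p.2) ((∑' a, r ^ f a) * (1 - r)⁻¹) :=
    hs.hasSum.mul hg (hs.mul_of_nonneg hg.summable (fun a => by positivity) fun n => by positivity)
  rw [← div_eq_mul_inv, ← (Equiv.sigmaFiberEquiv fun p : α × ℕ => f p.1 + p.2).hasSum_iff] at h1
  have h2 := h1.sigma (fun m => (h1.summable.sigma_factor m).hasSum)
  refine h2.congr_fun fun m => ?_
  have : ∀ p : {p : α × ℕ // f p.1 + p.2 = m}, r ^ f p.1.1 * r ^ p.1.2 = r ^ m := by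
    rintro ⟨p, hp⟩
    rw [← pow_add, hp]
  simp only [Function.comp, Equiv.sigmaFiberEquiv, Equiv.coe_fn_mk, this, tsum_const,
    nsmul_eq_mul]
  congr 2
  refine Nat.card_congr ⟨fun a => ⟨(a.1, m - f a.1), by have := a.2; simp; omega⟩,
    fun p => ⟨p.1.1, by have := p.2; omega⟩, fun a => rfl, ?_⟩
  rintro ⟨⟨a, n⟩, hp⟩
  simp only [Subtype.mk.injEq, Prod.mk.injEq, true_and]
  simp only at hp
  omega

lemma Sk_mul_pow_hasSum (k : ℕ) {r : ℝ} (hr0 : 0 < r) (hr : r < 1) :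
    HasSum (fun m : ℕ => (Sk k m : ℝ) * r ^ m) ((∑' v : Fin k → ℤ, r ^ nsq v) / (1 - r)) := by
  have h := (summable_hasSum_th_pow (q := r)
    (by rw [Complex.norm_real, Real.norm_of_nonneg hr0.le]; exact hr) k).1
  simp only [norm_pow, Complex.norm_real, Real.norm_of_nonneg hr0.le] at h
  simpa only [Sk_eq] using hasSum_card_mul_pow nsq hr0 hr h

lemma Sk_sq_mul_pow_hasSum (k : ℕ) {r : ℝ} (hr0 : 0 < r) (hr : r < 1)
    (hs : Summable fun p : (Fin k → ℤ) × (Fin k → ℤ) => r ^ max (nsq p.1) (nsq p.2)) :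
    HasSum (fun m : ℕ => (Sk k m : ℝ) ^ 2 * r ^ m)
      ((∑' p : (Fin k → ℤ) × (Fin k → ℤ), r ^ max (nsq p.1) (nsq p.2)) / (1 - r)) := by
  refine (hasSum_card_mul_pow (fun p : (Fin k → ℤ) × (Fin k → ℤ) => max (nsq p.1) (nsq p.2))
    hr0 hr hs).congr_fun fun m => ?_
  rw [Sk_eq, sq, ← Nat.cast_mul, ← Nat.card_prod]
  congr 2
  refine Nat.card_congr ⟨fun p => ⟨(p.1.1, p.2.1), max_le p.1.2 p.2.2⟩,
    fun p => (⟨p.1.1, (le_max_left _ _).trans p.2⟩, ⟨p.1.2, (le_max_right _ _).trans p.2⟩),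
    fun _ => rfl, fun _ => rfl⟩

lemma Sk_le_nat (k m : ℕ) : Sk k m ≤ (2 * Nat.sqrt m + 1) ^ k := by
  rw [Sk_eq]
  let s : Finset (Fin k → ℤ) :=
    Fintype.piFinset fun _ => Finset.Icc (-(Nat.sqrt m : ℤ)) (Nat.sqrt m)
  have hs : s.card = (2 * Nat.sqrt m + 1) ^ k := by
    simp only [s, Fintype.card_piFinset, Int.card_Icc, Finset.prod_const, Finset.card_univ,
      Fintype.card_fin]
    congr 1
    omega
  rw [← hs, ← Nat.card_eq_finsetCard]
  refine Nat.card_le_card_of_injective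
    (fun v : {v : Fin k → ℤ // nsq v ≤ m} => (⟨v.1, ?_⟩ : s)) ?_
  · rw [Fintype.mem_piFinset]
    intro i
    have h1 : (v.1 i).natAbs ^ 2 ≤ m :=
      (Finset.single_le_sum (f := fun i => (v.1 i).natAbs ^ 2) (fun _ _ => Nat.zero_le _)
        (Finset.mem_univ i)).trans v.2
    have h2 := Nat.le_sqrt'.2 h1
    rw [Finset.mem_Icc]
    omega
  · intro a b h
    simpa [Subtype.ext_iff] using h

lemma Sk_le (k m : ℕ) : (Sk k m : ℝ) ≤ 3 ^ k * ((m : ℝ) + 1) ^ ((k : ℝ) / 2) := by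
  calc (Sk k m : ℝ) ≤ ((2 * Nat.sqrt m + 1) ^ k : ℕ) := by exact_mod_cast Sk_le_nat k m
    _ ≤ (3 * √((m : ℝ) + 1)) ^ k := by
      push_cast
      gcongr
      have h1 : ((Nat.sqrt m : ℕ) : ℝ) ≤ √((m : ℝ) + 1) :=
        (Real.nat_sqrt_le_real_sqrt).trans (Real.sqrt_le_sqrt (by linarith))
      have h2 : 1 ≤ √((m : ℝ) + 1) := Real.one_le_sqrt.2 (by linarith [m.cast_nonneg (α := ℝ)])
      linarith
    _ = _ := by
      rw [mul_pow, Real.sqrt_eq_rpow, ← Real.rpow_mul_natCast (by positivity)]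
      congr 2
      ring

end LatticeDiscrepancy

namespace LatticeDiscrepancy
open MeasureTheory Set
open scoped FourierTransform

lemma integral_cexp_mul_exp_neg_abs {a : ℝ} (ha : 0 < a) (β : ℝ) :
    Integrable (fun t : ℝ => Complex.exp ((β * t : ℝ) * Complex.I) * (Real.exp (-a * |t|) : ℂ)) ∧
      ∫ t : ℝ, Complex.exp ((β * t : ℝ) * Complex.I) * (Real.exp (-a * |t|) : ℂ) =
        2 * a / (a ^ 2 + β ^ 2) := by
  have e1 : EqOn (fun t : ℝ => Complex.exp ((β * t : ℝ) * Complex.I) * (Real.exp (-a * |t|) : ℂ))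
      (fun t : ℝ => Complex.exp ((a + β * Complex.I) * t)) (Iic 0) := by
    intro t ht
    simp only [mem_Iic] at ht
    simp only [abs_of_nonpos ht, Complex.ofReal_exp, ← Complex.exp_add]
    congr 1
    push_cast
    ring
  have e2 : EqOn (fun t : ℝ => Complex.exp ((β * t : ℝ) * Complex.I) * (Real.exp (-a * |t|) : ℂ))
      (fun t : ℝ => Complex.exp ((-a + β * Complex.I) * t)) (Ioi 0) := by
    intro t ht
    simp only [mem_Ioi] at ht
    simp only [abs_of_pos ht, Complex.ofReal_exp, ← Complex.exp_add]
    congr 1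
    push_cast
    ring
  have r1 : 0 < ((a : ℂ) + β * Complex.I).re := by simpa using ha
  have r2 : (-(a : ℂ) + β * Complex.I).re < 0 := by simpa using ha
  have i1 := (integrableOn_exp_mul_complex_Iic r1 0).congr_fun e1.symm measurableSet_Iic
  have i2 := (integrableOn_exp_mul_complex_Ioi r2 0).congr_fun e2.symm measurableSet_Ioi
  constructor
  · rw [← integrableOn_univ, ← Iic_union_Ioi (a := (0 : ℝ))]
    exact i1.union i2
  · rw [← intervalIntegral.integral_Iic_add_Ioi i1 i2, setIntegral_congr_fun measurableSet_Iic e1,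
      setIntegral_congr_fun measurableSet_Ioi e2, integral_exp_mul_complex_Iic r1,
      integral_exp_mul_complex_Ioi r2]
    have n1 : (a : ℂ) + β * Complex.I ≠ 0 := fun h => by simp [h] at r1
    have n2 : -(a : ℂ) + β * Complex.I ≠ 0 := fun h => by simp [h] at r2
    have n3 : (a : ℂ) ^ 2 + β ^ 2 = -((a + β * Complex.I) * (-a + β * Complex.I)) := by
      ring_nf
      rw [Complex.I_sq]
      ring
    rw [n3]
    simp only [Complex.ofReal_zero, mul_zero, Complex.exp_zero]
    field_simp
    ring

lemma integrable_inv_sq_add_sq {y : ℝ} (hy : 0 < y) :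
    Integrable (fun x : ℝ => (x ^ 2 + y ^ 2)⁻¹) := by
  have h := (integrable_inv_one_add_sq.comp_div hy.ne').const_mul (y ^ 2)⁻¹
  refine h.congr (Filter.Eventually.of_forall fun x => ?_)
  simp only
  rw [← mul_inv]
  congr 1
  field_simp
  ring

lemma integral_inv_sq_add_sq {y : ℝ} (hy : 0 < y) :
    ∫ x : ℝ, (x ^ 2 + y ^ 2)⁻¹ = π / y := by
  have h : ∀ x : ℝ, (x ^ 2 + y ^ 2)⁻¹ = (y ^ 2)⁻¹ * (1 + (x / y) ^ 2)⁻¹ := by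
    intro x
    rw [← mul_inv]
    congr 1
    field_simp
    ring
  simp_rw [h]
  rw [integral_const_mul, Measure.integral_comp_div (fun x : ℝ => (1 + x ^ 2)⁻¹) y,
    integral_univ_inv_one_add_sq, abs_of_pos hy, smul_eq_mul]
  field_simp

/-- The Fourier transform of the Cauchy kernel. -/
lemma integral_cexp_div_sq_add_sq {y : ℝ} (hy : 0 < y) (ξ : ℝ) :
    ∫ x : ℝ, Complex.exp ((2 * π * (x * ξ) : ℝ) * Complex.I) * (((x ^ 2 + y ^ 2)⁻¹ : ℝ) : ℂ) =
      ((π / y * Real.exp (-(2 * π * y) * |ξ|) : ℝ) : ℂ) := by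
  have ha : 0 < 2 * π * y := by positivity
  set f : ℝ → ℂ := fun t => (Real.exp (-(2 * π * y) * |t|) : ℂ) with hf
  have hfi : Integrable f := by
    simpa [hf] using (integral_cexp_mul_exp_neg_abs ha 0).1
  have hF : 𝓕 f = fun x : ℝ => ((y / π : ℝ) : ℂ) * (((x ^ 2 + y ^ 2)⁻¹ : ℝ) : ℂ) := by
    ext x
    rw [Real.fourier_eq']
    have h1 := (integral_cexp_mul_exp_neg_abs ha (-2 * π * x)).2
    have h2 : ∀ v : ℝ, Complex.exp (((-2 * π * inner ℝ v x : ℝ) : ℂ) * Complex.I) • f v =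
        Complex.exp ((-2 * π * x * v : ℝ) * Complex.I) * (Real.exp (-(2 * π * y) * |v|) : ℂ) := by
      intro v
      simp only [hf, smul_eq_mul]
      congr 4
      simp
      ring
    simp_rw [h2]
    rw [h1]
    have h4 : 2 * ((2 * π * y : ℝ) : ℂ) / (((2 * π * y : ℝ) : ℂ) ^ 2 + ((-2 * π * x : ℝ) : ℂ) ^ 2) =
        ((2 * (2 * π * y) / ((2 * π * y) ^ 2 + (-2 * π * x) ^ 2) : ℝ) : ℂ) := by
      push_cast
      ring
    rw [h4, ← Complex.ofReal_mul]
    congr 1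
    have hp := Real.pi_pos.ne'
    have : x ^ 2 + y ^ 2 ≠ 0 := by positivity
    field_simp
    ring
  have hFi : Integrable (𝓕 f) := by
    rw [hF]
    exact (integrable_inv_sq_add_sq hy).ofReal.const_mul _
  have hc : Continuous f := by fun_prop
  have h := congrFun (hc.fourierInv_fourier_eq hfi hFi) ξ
  rw [Real.fourierInv_eq', hF] at h
  have h3 : ∀ v : ℝ, Complex.exp (((2 * π * inner ℝ v ξ : ℝ) : ℂ) * Complex.I) •
      (((y / π : ℝ) : ℂ) * (((v ^ 2 + y ^ 2)⁻¹ : ℝ) : ℂ)) = ((y / π : ℝ) : ℂ) *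
      (Complex.exp ((2 * π * (v * ξ) : ℝ) * Complex.I) * (((v ^ 2 + y ^ 2)⁻¹ : ℝ) : ℂ)) := by
    intro v
    have : inner ℝ v ξ = v * ξ := by simp [mul_comm]
    rw [this, smul_eq_mul]
    ring
  simp_rw [h3] at h
  rw [integral_const_mul] at h
  have hy' : ((y / π : ℝ) : ℂ) ≠ 0 := by
    exact_mod_cast (div_pos hy Real.pi_pos).ne'
  apply mul_left_cancel₀ hy'
  rw [h, hf, ← Complex.ofReal_mul]
  have hp := Real.pi_pos.ne'
  field_simp

/-- Parseval's identity against the Cauchy kernel for a power series on a horizontal line. -/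
lemma integral_normSq_tsum_div {α : Type*} [Countable α] (f : α → ℕ) {y : ℝ} (hy : 0 < y)
    (hs : Summable fun a => Real.exp (-π * y) ^ f a) :
    (Summable fun p : α × α => Real.exp (-2 * π * y) ^ max (f p.1) (f p.2)) ∧
    ∫ x : ℝ, ‖∑' a, Complex.exp (π * Complex.I * (x + y * Complex.I)) ^ f a‖ ^ 2 *
        (x ^ 2 + y ^ 2)⁻¹ =
      π / y * ∑' p : α × α, Real.exp (-2 * π * y) ^ max (f p.1) (f p.2) := by
  set ρ := Real.exp (-π * y) with hρ
  have hρ0 : 0 < ρ := Real.exp_pos _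
  have hρ1 : ρ ≤ 1 := Real.exp_le_one_iff.2 (by nlinarith [mul_pos Real.pi_pos hy])
  have hρ2 : Real.exp (-2 * π * y) = ρ ^ 2 := by
    rw [hρ, ← Real.exp_nat_mul]; congr 1; push_cast; ring
  have hss : Summable fun p : α × α => ρ ^ f p.1 * ρ ^ f p.2 :=
    hs.mul_of_nonneg hs (fun _ => by positivity) (fun _ => by positivity)
  constructor
  · rw [hρ2]
    refine hss.of_nonneg_of_le (fun _ => by positivity) fun p => ?_
    rw [← pow_mul, ← pow_add]
    exact pow_le_pow_of_le_one hρ0.le hρ1 (by omega)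
  set F : α × α → ℝ → ℂ := fun p x =>
    ((ρ ^ f p.1 * ρ ^ f p.2 : ℝ) : ℂ) *
      (Complex.exp ((2 * π * (x * (((f p.1 : ℝ) - f p.2) / 2)) : ℝ) * Complex.I) *
        (((x ^ 2 + y ^ 2)⁻¹ : ℝ) : ℂ)) with hF
  have hFn : ∀ p x, ‖F p x‖ = ρ ^ f p.1 * ρ ^ f p.2 * (x ^ 2 + y ^ 2)⁻¹ := by
    intro p x
    rw [hF]
    simp only [norm_mul, Complex.norm_exp_ofReal_mul_I, one_mul, Complex.norm_real]
    rw [Real.norm_of_nonneg (by positivity), Real.norm_of_nonneg (by positivity),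
      Real.norm_of_nonneg (by positivity)]
  have hFi : ∀ p, Integrable (F p) := by
    intro p
    refine Integrable.mono' ((integrable_inv_sq_add_sq hy).const_mul (ρ ^ f p.1 * ρ ^ f p.2)) ?_
      (Filter.Eventually.of_forall fun x => (hFn p x).le)
    have : Measurable (F p) := by rw [hF]; fun_prop
    exact this.aestronglyMeasurable
  have key := hasSum_integral_of_summable_integral_norm hFi (by
    simp_rw [hFn, integral_const_mul]
    exact hss.mul_right _)
  have hI : ∀ p, ∫ x, F p x = ((π / y * Real.exp (-2 * π * y) ^ max (f p.1) (f p.2) : ℝ) : ℂ) := by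
    intro p
    rw [hF]
    simp only
    rw [integral_const_mul, integral_cexp_div_sq_add_sq hy, ← Complex.ofReal_mul]
    congr 1
    rw [mul_left_comm, hρ, ← Real.exp_nat_mul, ← Real.exp_nat_mul, ← Real.exp_nat_mul,
      ← Real.exp_add, ← Real.exp_add]
    congr 2
    rw [abs_div, abs_two]
    rcases le_total (f p.1) (f p.2) with h | h
    · rw [max_eq_right h, abs_of_nonpos (by simpa using h)]
      ring
    · rw [max_eq_left h, abs_of_nonneg (by simpa using h)]
      ring
  simp_rw [hI] at key
  have hT : ∀ x : ℝ, ∑' p, F p x =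
      ((‖∑' a, Complex.exp (π * Complex.I * (x + y * Complex.I)) ^ f a‖ ^ 2 *
        (x ^ 2 + y ^ 2)⁻¹ : ℝ) : ℂ) := by
    intro x
    set q := Complex.exp (π * Complex.I * (x + y * Complex.I)) with hq
    have hqn : ‖q‖ = ρ := by
      rw [hq, Complex.norm_exp, hρ]
      simp
    have hqs : Summable fun a => ‖q ^ f a‖ := by simpa [norm_pow, hqn] using hs
    have hqs' : Summable fun a => ‖(starRingEnd ℂ) (q ^ f a)‖ := by simpa using hqs
    have h1 := hasSum_mul_of_summable_norm hqs hqs' hqs.of_norm.hasSum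
      ((Complex.hasSum_conj').2 hqs.of_norm.hasSum)
    rw [Complex.mul_conj, Complex.normSq_eq_norm_sq] at h1
    have h2 := h1.mul_right (((x ^ 2 + y ^ 2)⁻¹ : ℝ) : ℂ)
    rw [Complex.ofReal_mul, ← h2.tsum_eq]
    congr 1
    ext p
    rw [hF]
    simp only
    rw [← mul_assoc]
    congr 1
    rw [hq, map_pow, ← Complex.exp_conj, ← Complex.exp_nat_mul, ← Complex.exp_nat_mul,
      ← Complex.exp_add, hρ, ← Real.exp_nat_mul, ← Real.exp_nat_mul, ← Real.exp_add,
      Complex.ofReal_exp, ← Complex.exp_add]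
    congr 1
    simp only [map_mul, map_add, Complex.conj_I, Complex.conj_ofReal]
    push_cast
    ring_nf
    simp only [Complex.I_sq]
    ring
  simp_rw [hT] at key
  rw [integral_complex_ofReal] at key
  have k2 := Complex.hasSum_ofReal.1 key
  rw [← k2.tsum_eq, tsum_mul_left]

end LatticeDiscrepancy

namespace LatticeDiscrepancy

/-- A function on the upper half-plane invariant under the modular group and bounded by `C / y` on
the fundamental domain is bounded by a multiple of `min 1 (1 / y)` everywhere. -/
lemma le_of_modular_invariant (W : ℂ → ℝ) (hT : ∀ τ : ℂ, 0 < τ.im → W (1 + τ) = W τ)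
    (hS : ∀ τ : ℂ, 0 < τ.im → W ((-τ)⁻¹) = W τ) {C : ℝ} (hC0 : 0 ≤ C)
    (hC : ∀ τ : ℂ, 0 < τ.im → |τ.re| ≤ 1 / 2 → 3 / 4 ≤ τ.im ^ 2 → W τ ≤ C / τ.im)
    {τ : ℂ} (hτ : 0 < τ.im) : W τ ≤ 2 * C / τ.im ∧ W τ ≤ 2 * C := by
  have hZ : ∀ (n : ℤ) (τ : ℂ), 0 < τ.im → W (n + τ) = W τ := by
    intro n
    induction n using Int.induction_on with
    | zero => intro τ _; simp
    | succ i ih =>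
      intro τ hτ
      have := hT (i + τ) (by simpa using hτ)
      rw [← ih τ hτ]
      push_cast at this ⊢
      rw [← this]; congr 1; ring
    | pred i ih =>
      intro τ hτ
      have := hT (((-i - 1 : ℤ) : ℂ) + τ) (by simpa using hτ)
      rw [← ih τ hτ, ← this]
      congr 1; push_cast; ring
  have hinv : ∀ γ : Matrix.SpecialLinearGroup (Fin 2) ℤ, ∀ z : UpperHalfPlane,
      W ((γ • z : UpperHalfPlane) : ℂ) = W z := by
    intro γ
    have hγ : γ ∈ Subgroup.closure {ModularGroup.S, ModularGroup.T} := by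
      have := SpecialLinearGroup.SL2Z_generators
      simp [this]
    induction hγ using Subgroup.closure_induction with
    | mem x hx =>
      intro z
      rcases hx with rfl | hx
      · rw [UpperHalfPlane.modular_S_smul]; exact hS z z.im_pos
      · rw [Set.mem_singleton_iff] at hx
        subst hx
        rw [UpperHalfPlane.modular_T_smul]
        simpa using hT z z.im_pos
    | one => intro z; simp
    | mul x y _ _ hx hy => intro z; rw [mul_smul, hx, hy]
    | inv x _ hx => intro z; rw [← hx, smul_inv_smul]
  have hbd : W τ ≤ 2 * C := by
    obtain ⟨γ, hγ⟩ := ModularGroup.exists_smul_mem_fd ⟨τ, hτ⟩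
    have := hinv γ ⟨τ, hτ⟩
    rw [← this]
    obtain ⟨h1, h2⟩ := hγ
    set z := γ • (⟨τ, hτ⟩ : UpperHalfPlane)
    have hre : |(z : ℂ).re| ≤ 1 / 2 := h2
    have him : 0 < (z : ℂ).im := z.im_pos
    have h3 : 3 / 4 ≤ (z : ℂ).im ^ 2 := by
      rw [Complex.normSq_apply] at h1
      have := abs_le.mp hre
      nlinarith
    refine (hC z him hre h3).trans ?_
    rw [div_le_iff₀ him]
    nlinarith [show 1 / 2 ≤ (z : ℂ).im by nlinarith]
  refine ⟨?_, hbd⟩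
  rcases le_total 1 τ.im with h | h
  · rw [← hZ (-round τ.re) τ hτ]
    have := hC (((-round τ.re : ℤ) : ℂ) + τ) (by simpa using hτ)
      (by simpa [abs_sub_comm, neg_add_eq_sub] using abs_sub_round τ.re) (by simp; nlinarith)
    refine this.trans ?_
    simp only [Complex.add_im, Complex.intCast_im, zero_add]
    gcongr; linarith
  · refine hbd.trans ?_
    rw [le_div_iff₀ hτ]
    nlinarith

/-- The invariant form of the power `|θ| ^ (2 * k)`. -/
noncomputable def thetaNorm (k : ℕ) (τ : ℂ) : ℝ := (√τ.im * ‖jacobiTheta τ‖ ^ 2) ^ k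

/-- Eisenstein-type sum over the pairs `(c, d)` satisfying `P`. -/
noncomputable def eisSum (k : ℕ) (P : ℤ × ℤ → Prop) [DecidablePred P] (τ : ℂ) : ℝ :=
  ∑' p : ℤ × ℤ, if P p then (√τ.im / ‖(p.1 : ℂ) * τ + p.2‖) ^ k else 0

lemma thetaNorm_two_add (k : ℕ) (τ : ℂ) : thetaNorm k (2 + τ) = thetaNorm k τ := by
  simp [thetaNorm, jacobiTheta_two_add]

lemma im_neg_inv (τ : ℂ) : ((-τ)⁻¹).im = τ.im / ‖τ‖ ^ 2 := by
  rw [Complex.inv_im, Complex.normSq_neg, Complex.normSq_eq_norm_sq]; simp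

lemma im_neg_inv_pos {τ : ℂ} (hτ : 0 < τ.im) : 0 < ((-τ)⁻¹).im := by
  rw [im_neg_inv]
  have : τ ≠ 0 := fun h => by simp [h] at hτ
  positivity

lemma thetaNorm_neg_inv (k : ℕ) {τ : ℂ} (hτ : 0 < τ.im) :
    thetaNorm k ((-τ)⁻¹) = thetaNorm k τ := by
  have h0 : τ ≠ 0 := fun h => by simp [h] at hτ
  have := jacobiTheta_S_smul ⟨τ, hτ⟩
  rw [UpperHalfPlane.modular_S_smul] at this
  simp only at this
  unfold thetaNorm
  rw [this, im_neg_inv, norm_mul, Real.sqrt_div' _ (by positivity), Real.sqrt_sq (by positivity)]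
  have h2 : ‖(-Complex.I * τ) ^ (1 / 2 : ℂ)‖ ^ 2 = ‖τ‖ := by
    rw [← norm_pow, ← Complex.cpow_nat_mul]
    simp
  rw [mul_pow _ _ 2, h2]
  congr 1
  have : ‖τ‖ ≠ 0 := by simpa using h0
  field_simp

lemma eisSum_one_add (k : ℕ) (P Q : ℤ × ℤ → Prop) [DecidablePred P] [DecidablePred Q]
    (h : ∀ c d, Q (c, c + d) ↔ P (c, d)) (τ : ℂ) : eisSum k P (1 + τ) = eisSum k Q τ := by
  let e : ℤ × ℤ ≃ ℤ × ℤ :=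
    { toFun := fun p => (p.1, p.1 + p.2)
      invFun := fun p => (p.1, p.2 - p.1)
      left_inv := fun p => by simp
      right_inv := fun p => by simp }
  unfold eisSum
  rw [← e.tsum_eq (fun p : ℤ × ℤ => if Q p then (√τ.im / ‖(p.1 : ℂ) * τ + p.2‖) ^ k else 0)]
  refine tsum_congr fun p => ?_
  simp only [e, Equiv.coe_fn_mk, h, Prod.mk.eta]
  congr 4
  · simp
  · push_cast; ring_nf

lemma eisSum_neg_inv (k : ℕ) (P Q : ℤ × ℤ → Prop) [DecidablePred P] [DecidablePred Q]
    (h : ∀ c d, Q (d, -c) ↔ P (c, d)) {τ : ℂ} (hτ : 0 < τ.im) :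
    eisSum k P ((-τ)⁻¹) = eisSum k Q τ := by
  have h0 : τ ≠ 0 := fun h => by simp [h] at hτ
  let e : ℤ × ℤ ≃ ℤ × ℤ :=
    { toFun := fun p => (p.2, -p.1)
      invFun := fun p => (-p.2, p.1)
      left_inv := fun p => by simp
      right_inv := fun p => by simp }
  unfold eisSum
  rw [← e.tsum_eq (fun p : ℤ × ℤ => if Q p then (√τ.im / ‖(p.1 : ℂ) * τ + p.2‖) ^ k else 0)]
  refine tsum_congr fun p => ?_
  simp only [e, Equiv.coe_fn_mk, h, Prod.mk.eta]
  congr 2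
  rw [im_neg_inv, Real.sqrt_div' _ (by positivity), Real.sqrt_sq (by positivity)]
  have : (p.2 : ℂ) * τ + ((-p.1 : ℤ) : ℂ) = ((p.1 : ℂ) * (-τ)⁻¹ + p.2) * τ := by
    push_cast; field_simp; ring
  rw [this, norm_mul]
  have : ‖τ‖ ≠ 0 := by simpa using h0
  rw [div_div, mul_comm]

/-- The defect between the theta power and the Eisenstein series, made invariant by summing over
the three cosets of the theta group. -/
noncomputable def thetaDefect (k : ℕ) (L : ℝ) (τ : ℂ) : ℝ :=
  |L * thetaNorm k τ - eisSum k (fun p => Odd (p.1 + p.2)) τ| +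
    |L * thetaNorm k (1 + τ) - eisSum k (fun p => Odd p.2) τ| +
    |L * thetaNorm k (1 + (-τ)⁻¹) - eisSum k (fun p => Odd p.1) τ|

lemma thetaDefect_one_add (k : ℕ) (L : ℝ) {τ : ℂ} (hτ : 0 < τ.im) :
    thetaDefect k L (1 + τ) = thetaDefect k L τ := by
  have h0 : τ ≠ 0 := fun h => by simp [h] at hτ
  have h1 : 1 + τ ≠ 0 := fun h => by
    have := congrArg Complex.im h
    simp at this; linarith
  unfold thetaDefect
  rw [eisSum_one_add k (fun p => Odd (p.1 + p.2)) (fun p => Odd p.2) (by simp),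
    eisSum_one_add k (fun p => Odd p.2) (fun p => Odd (p.1 + p.2)) (by intro c d; grind),
    eisSum_one_add k (fun p => Odd p.1) (fun p => Odd p.1) (by simp),
    show 1 + (1 + τ) = 2 + τ by ring, thetaNorm_two_add]
  have e : thetaNorm k (1 + (-(1 + τ))⁻¹) = thetaNorm k (1 + (-τ)⁻¹) := by
    have hp : 0 < (-1 + (-τ)⁻¹).im := by simpa using im_neg_inv_pos hτ
    rw [show (1 : ℂ) + (-(1 + τ))⁻¹ = (-(-1 + (-τ)⁻¹))⁻¹ by
      rw [show -(-1 + (-τ)⁻¹) = (1 + τ) / τ by field_simp; ring]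
      rw [inv_div, eq_div_iff h1, inv_neg, add_mul, neg_mul, inv_mul_cancel₀ h1]; ring,
      thetaNorm_neg_inv k hp, ← thetaNorm_two_add]
    congr 1; ring
  rw [e]; ring

lemma thetaDefect_neg_inv (k : ℕ) (L : ℝ) {τ : ℂ} (hτ : 0 < τ.im) :
    thetaDefect k L ((-τ)⁻¹) = thetaDefect k L τ := by
  have h0 : τ ≠ 0 := fun h => by simp [h] at hτ
  unfold thetaDefect
  rw [eisSum_neg_inv k (fun p => Odd (p.1 + p.2)) (fun p => Odd (p.1 + p.2))
      (by intro c d; grind) hτ,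
    eisSum_neg_inv k (fun p => Odd p.2) (fun p => Odd p.1) (by simp) hτ,
    eisSum_neg_inv k (fun p => Odd p.1) (fun p => Odd p.2) (by simp) hτ,
    thetaNorm_neg_inv k hτ, show (-(-τ)⁻¹)⁻¹ = τ by simp]
  ring

end LatticeDiscrepancy

namespace LatticeDiscrepancy

lemma sqrt_pow_mul_exp_neg_le (k : ℕ) :
    ∃ C : ℝ, 0 ≤ C ∧ ∀ y : ℝ, 0 < y → √y ^ k * Real.exp (-y) ≤ C / y := by
  refine ⟨(k + 1).factorial * Real.exp 1, by positivity, fun y hy => ?_⟩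
  rw [le_div_iff₀ hy, Real.exp_neg]
  have h1 : √y ≤ 1 + y := by
    rw [Real.sqrt_le_left (by positivity)]; nlinarith
  have h2 := Real.pow_div_factorial_le_exp (x := 1 + y) (by positivity) (k + 1)
  rw [div_le_iff₀ (by positivity), Real.exp_add] at h2
  have h3 : √y ^ k * y ≤ (1 + y) ^ (k + 1) := by
    rw [pow_succ]; gcongr; linarith
  have := Real.exp_pos y
  calc √y ^ k * (Real.exp y)⁻¹ * y = (√y ^ k * y) * (Real.exp y)⁻¹ := by ring
    _ ≤ (Real.exp 1 * Real.exp y * (k + 1).factorial) * (Real.exp y)⁻¹ := by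
        exact mul_le_mul_of_nonneg_right (h3.trans h2) (by positivity)
    _ = _ := by field_simp

lemma thetaNorm_sub_le (k : ℕ) : ∃ C : ℝ, 0 ≤ C ∧ ∀ τ : ℂ, 0 < τ.im → 3 / 4 ≤ τ.im ^ 2 →
    |thetaNorm k τ - √τ.im ^ k| ≤ C / τ.im := by
  obtain ⟨C, hC0, hC⟩ := sqrt_pow_mul_exp_neg_le k
  refine ⟨4 * (2 * k * 5 ^ (2 * k - 1)) * C, by positivity, fun τ hτ h => ?_⟩
  have hy : 1 / 2 ≤ τ.im := by nlinarith
  have e1 : Real.exp (-π * τ.im) ≤ Real.exp (-τ.im) :=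
    Real.exp_le_exp.mpr (by nlinarith [Real.pi_gt_three])
  have e2 : Real.exp (-π * τ.im) ≤ 1 / 2 := by
    have : Real.exp (-π * τ.im) ≤ Real.exp (-1) :=
      Real.exp_le_exp.mpr (by nlinarith [Real.pi_gt_three])
    have := Real.exp_neg_one_lt_d9
    linarith
  have h1 : ‖jacobiTheta τ - 1‖ ≤ 4 * Real.exp (-π * τ.im) := by
    refine (norm_jacobiTheta_sub_one_le hτ).trans ?_
    gcongr
    rw [div_le_iff₀ (by linarith)]; linarith
  have h2 : |‖jacobiTheta τ‖ - 1| ≤ 4 * Real.exp (-π * τ.im) := by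
    have := abs_norm_sub_norm_le (jacobiTheta τ) 1
    rw [norm_one] at this
    exact this.trans h1
  have h3 : ‖jacobiTheta τ‖ ≤ 5 := by
    have := (abs_le.mp h2).2; linarith
  have h4 : |‖jacobiTheta τ‖ ^ (2 * k) - 1 ^ (2 * k)| ≤
      4 * Real.exp (-τ.im) * (2 * k * 5 ^ (2 * k - 1)) := by
    refine (abs_pow_sub_pow_le _ _ _).trans ?_
    have : |‖jacobiTheta τ‖| ⊔ |(1:ℝ)| ≤ 5 := by
      rw [abs_norm, abs_one]; exact max_le h3 (by norm_num)
    rw [mul_assoc]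
    push_cast
    gcongr
    linarith
  have : thetaNorm k τ - √τ.im ^ k = √τ.im ^ k * (‖jacobiTheta τ‖ ^ (2 * k) - 1 ^ (2 * k)) := by
    unfold thetaNorm; rw [mul_pow, ← pow_mul]; ring
  rw [this, abs_mul, abs_of_nonneg (by positivity)]
  calc _ ≤ √τ.im ^ k * (4 * Real.exp (-τ.im) * (2 * k * 5 ^ (2 * k - 1))) := by gcongr
    _ = 4 * (2 * k * 5 ^ (2 * k - 1)) * (√τ.im ^ k * Real.exp (-τ.im)) := by ring
    _ ≤ 4 * (2 * k * 5 ^ (2 * k - 1)) * (C / τ.im) := by gcongr; exact hC _ hτ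
    _ = _ := by ring

lemma jacobiTheta_one_add (τ : ℂ) : jacobiTheta (1 + τ) = jacobiTheta₂ (1 / 2) τ := by
  unfold jacobiTheta jacobiTheta₂
  refine tsum_congr fun n => ?_
  unfold jacobiTheta₂_term
  obtain ⟨j, hj⟩ := Int.even_mul_succ_self n
  have hj' : (n : ℂ) * (n + 1) = j + j := by exact_mod_cast congrArg (Int.cast (R := ℂ)) hj
  rw [Complex.exp_eq_exp_iff_exists_int]
  refine ⟨j - n, ?_⟩
  push_cast
  linear_combination (π * Complex.I) * hj'

lemma norm_jacobiTheta₂_half_le {τ : ℂ} (hτ : 1 / 2 ≤ τ.im) :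
    ‖jacobiTheta₂ (τ / 2) τ‖ ≤
      ∑' n : ℤ, ‖jacobiTheta₂_term n (Complex.I / 4) (Complex.I / 2)‖ := by
  have hs := ((summable_jacobiTheta₂_term_iff (Complex.I / 4) (Complex.I / 2)).mpr (by simp)).norm
  refine tsum_of_norm_bounded hs.hasSum fun n => ?_
  rw [norm_jacobiTheta₂_term, norm_jacobiTheta₂_term, Real.exp_le_exp]
  have h1 : (0 : ℝ) ≤ n ^ 2 + n := by
    have : 0 ≤ n ^ 2 + n := by nlinarith [sq_nonneg (2 * n + 1), sq_nonneg n]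
    exact_mod_cast this
  have e1 : (τ / 2).im = τ.im / 2 := by simp
  have e2 : (Complex.I / 4).im = 1 / 4 := by simp
  have e3 : (Complex.I / 2).im = 1 / 2 := by simp
  rw [e1, e2, e3]
  have : 0 ≤ π * ((n : ℝ) ^ 2 + n) * (τ.im - 1 / 2) :=
    mul_nonneg (by positivity) (by linarith)
  linarith

lemma thetaNorm_one_add_neg_inv (k : ℕ) {τ : ℂ} (hτ : 0 < τ.im) :
    thetaNorm k (1 + (-τ)⁻¹) =
      (√τ.im * Real.exp (-(π / 2) * τ.im) * ‖jacobiTheta₂ (τ / 2) τ‖ ^ 2) ^ k := by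
  have h0 : τ ≠ 0 := fun h => by simp [h] at hτ
  have hn : 0 < ‖τ‖ := norm_pos_iff.mpr h0
  have h := congrArg (‖·‖ ^ 2) (jacobiTheta₂_functional_equation (τ / 2) τ)
  have a1 : ‖(-Complex.I * τ) ^ (1 / 2 : ℂ)‖ ^ 2 = ‖τ‖ := by
    rw [← norm_pow, ← Complex.cpow_nat_mul]; simp
  have a2 : ‖Complex.exp (-π * Complex.I * (τ / 2) ^ 2 / τ)‖ ^ 2 = Real.exp (π / 2 * τ.im) := by
    rw [Complex.norm_exp, ← Real.exp_nat_mul]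
    congr 1
    rw [show -π * Complex.I * (τ / 2) ^ 2 / τ = ((-π / 4 : ℝ) : ℂ) * (Complex.I * τ) by
      push_cast; field_simp; ring, Complex.re_ofReal_mul]
    simp; ring
  have a3 : τ / 2 / τ = 1 / 2 := by field_simp
  have a4 : -1 / τ = (-τ)⁻¹ := by field_simp
  beta_reduce at h
  rw [norm_mul, norm_mul, norm_div, mul_pow, mul_pow, div_pow, a1, a2, a3, a4,
    ← jacobiTheta_one_add, norm_one, one_pow] at h
  unfold thetaNorm
  rw [h]
  congr 1
  rw [Complex.add_im, im_neg_inv, Complex.one_im, zero_add, Real.sqrt_div' _ (by positivity),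
    Real.sqrt_sq (by positivity), neg_mul, Real.exp_neg]
  field_simp

lemma thetaNorm_one_add_neg_inv_le (k : ℕ) (hk : 1 ≤ k) :
    ∃ C : ℝ, 0 ≤ C ∧ ∀ τ : ℂ, 0 < τ.im → 3 / 4 ≤ τ.im ^ 2 →
    |thetaNorm k (1 + (-τ)⁻¹)| ≤ C / τ.im := by
  obtain ⟨C, hC0, hC⟩ := sqrt_pow_mul_exp_neg_le k
  set M := ∑' n : ℤ, ‖jacobiTheta₂_term n (Complex.I / 4) (Complex.I / 2)‖
  have hM : 0 ≤ M := tsum_nonneg fun _ => norm_nonneg _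
  refine ⟨C * (M ^ 2) ^ k, by positivity, fun τ hτ h => ?_⟩
  have hy : 1 / 2 ≤ τ.im := by nlinarith
  rw [thetaNorm_one_add_neg_inv k hτ, abs_of_nonneg (by positivity), mul_pow, mul_pow]
  have e1 : Real.exp (-(π / 2) * τ.im) ^ k ≤ Real.exp (-τ.im) := by
    rw [← Real.exp_nat_mul, Real.exp_le_exp]
    have : (1 : ℝ) ≤ k := by exact_mod_cast hk
    have := mul_le_mul this (show 1 ≤ π / 2 by linarith [Real.pi_gt_three]) (by norm_num)
      (by positivity)
    nlinarith
  calc _ ≤ √τ.im ^ k * Real.exp (-τ.im) * (M ^ 2) ^ k := by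
        gcongr; exact norm_jacobiTheta₂_half_le hy
    _ ≤ C / τ.im * (M ^ 2) ^ k := by gcongr; exact hC _ hτ
    _ = _ := by ring


/-- A summable weight on the integers. -/
noncomputable def intWeight (n : ℤ) : ℝ := (√(max 1 |(n : ℝ)|) ^ 3)⁻¹

lemma intWeight_pos (n : ℤ) : 0 < intWeight n := by unfold intWeight; positivity

lemma summable_intWeight : Summable intWeight := by
  refine (Real.summable_abs_int_rpow (b := 3 / 2) (by norm_num)).congr_cofinite ?_
  have : {0}ᶜ ∈ Filter.cofinite (α := ℤ) := (Set.finite_singleton (0 : ℤ)).compl_mem_cofinite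
  filter_upwards [this] with n hn
  have h1 : 1 ≤ |(n : ℝ)| := by exact_mod_cast Int.one_le_abs hn
  unfold intWeight
  rw [max_eq_right h1, Real.sqrt_eq_rpow, ← Real.rpow_natCast, ← Real.rpow_mul (abs_nonneg _),
    Real.rpow_neg (abs_nonneg _)]
  norm_num

lemma eisTerm_le {k : ℕ} (hk : 5 ≤ k) {τ : ℂ} (hτ : 0 < τ.im) (hre : |τ.re| ≤ 1 / 2)
    (him : 3 / 4 ≤ τ.im ^ 2) {c d : ℤ} (hc : c ≠ 0) :
    (√τ.im / ‖(c : ℂ) * τ + d‖) ^ k ≤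
      4 ^ (k - 5) * 32 * (intWeight c * intWeight d) / τ.im := by
  set y := τ.im
  set N := ‖(c : ℂ) * τ + d‖
  have hy : 1 / 2 ≤ y := by nlinarith
  have hN2 : N ^ 2 = (c * τ.re + d) ^ 2 + (c * y) ^ 2 := by
    rw [← Complex.normSq_eq_norm_sq, Complex.normSq_apply]
    simp [y]; ring
  have hc1 : 1 ≤ |(c : ℝ)| := by exact_mod_cast Int.one_le_abs hc
  have hc2 : 1 ≤ (c : ℝ) ^ 2 := by rw [← sq_abs]; nlinarith
  have hx2 : τ.re ^ 2 ≤ 1 / 4 := by rw [← sq_abs]; nlinarith [abs_nonneg τ.re]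
  have hlow : (c ^ 2 * y ^ 2 + d ^ 2) / 2 ≤ N ^ 2 := by
    rw [hN2]; nlinarith [sq_nonneg ((d : ℝ) + 2 * c * τ.re)]
  have hN0 : 0 ≤ N := norm_nonneg _
  have hN1 : |(c : ℝ)| * y / 2 ≤ N := by
    apply abs_le_of_sq_le_sq' _ hN0 |>.2
    rw [div_pow, mul_pow, sq_abs]; nlinarith [sq_nonneg (d : ℝ), mul_nonneg (sq_nonneg (c : ℝ)) (sq_nonneg y)]
  set m := max 1 |(d : ℝ)|
  have hm : 1 ≤ m := le_max_left _ _
  have hN3 : m / 2 ≤ N := by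
    rw [div_le_iff₀ (by norm_num)]
    refine max_le ?_ ?_
    · nlinarith
    · apply abs_le_of_sq_le_sq' _ (by positivity) |>.2
      rw [sq_abs]; nlinarith [sq_nonneg (d : ℝ), mul_nonneg (sq_nonneg (c : ℝ)) (sq_nonneg y)]
  have hNpos : 0 < N := by linarith
  have hsy : 1 / 2 ≤ √y := by
    apply Real.le_sqrt_of_sq_le; linarith
  have hsy2 : √y ^ 2 = y := Real.sq_sqrt hτ.le
  have hq : √y / N ≤ 4 := by
    rw [div_le_iff₀ hNpos]
    nlinarith
  have hq0 : 0 ≤ √y / N := by positivity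
  have h5 : (√y / N) ^ 5 ≤ 32 * (intWeight c * intWeight d) / y := by
    have hc3 : intWeight c = (√|(c : ℝ)| ^ 3)⁻¹ := by unfold intWeight; rw [max_eq_right hc1]
    rw [hc3, intWeight]
    change _ ≤ 32 * (_ * (√m ^ 3)⁻¹) / y
    have s2 : √(2 : ℝ) ^ 2 = 2 := Real.sq_sqrt (by norm_num)
    have sN : √N ^ 2 = N := Real.sq_sqrt hN0
    have sc : 1 ≤ √|(c : ℝ)| := by rwa [Real.one_le_sqrt]
    have t1 : √|(c : ℝ)| * √y / √2 ≤ √N := by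
      rw [← Real.sqrt_mul (abs_nonneg _), ← Real.sqrt_div (by positivity)]
      exact Real.sqrt_le_sqrt hN1
    have t2 : √m / √2 ≤ √N := by
      rw [← Real.sqrt_div (by positivity)]
      exact Real.sqrt_le_sqrt hN3
    have hm0 : 0 < √m := by positivity
    have key : (√|(c : ℝ)| * √y / √2) ^ 7 * (√m / √2) ^ 3 ≤ N ^ 5 := by
      calc _ ≤ √N ^ 7 * √N ^ 3 := by gcongr
        _ = (√N ^ 2) ^ 5 := by ring
        _ = _ := by rw [sN]
    have key2 : (√|(c : ℝ)| ^ 3 * √y ^ 7) * √m ^ 3 / 32 ≤ N ^ 5 := by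
      refine le_trans ?_ key
      have : (√|(c : ℝ)| * √y / √2) ^ 7 * (√m / √2) ^ 3 =
          (√|(c : ℝ)| ^ 7 * √y ^ 7) * √m ^ 3 / (√2 ^ 2) ^ 5 := by
        field_simp
      rw [this, s2]
      have : √|(c : ℝ)| ^ 3 ≤ √|(c : ℝ)| ^ 7 := pow_le_pow_right₀ sc (by norm_num)
      norm_num
      gcongr
    rw [div_pow, div_le_iff₀ (by positivity)]
    have : √y ^ 5 = 32 * ((√|(c : ℝ)| ^ 3)⁻¹ * (√m ^ 3)⁻¹) / √y ^ 2 *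
        ((√|(c : ℝ)| ^ 3 * √y ^ 7) * √m ^ 3 / 32) := by
      field_simp
    rw [this, hsy2]
    gcongr
  calc (√y / N) ^ k = (√y / N) ^ (k - 5) * (√y / N) ^ 5 := by
        rw [← pow_add]; congr 1; omega
    _ ≤ 4 ^ (k - 5) * (32 * (intWeight c * intWeight d) / y) := by gcongr
    _ = _ := by ring

lemma eisSum_sub_le {k : ℕ} (hk : 5 ≤ k) : ∃ C : ℝ, 0 ≤ C ∧
    ∀ (P : ℤ × ℤ → Prop) [DecidablePred P] (τ : ℂ), 0 < τ.im → |τ.re| ≤ 1 / 2 →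
      3 / 4 ≤ τ.im ^ 2 →
      |eisSum k P τ - √τ.im ^ k * ∑' d : ℤ, (if P (0, d) then (|(d : ℝ)| ^ k)⁻¹ else 0)| ≤
        C / τ.im := by
  have hB : Summable fun p : ℤ × ℤ => intWeight p.1 * intWeight p.2 :=
    summable_intWeight.mul_of_nonneg summable_intWeight (fun n => (intWeight_pos n).le)
      (fun n => (intWeight_pos n).le)
  have hB0 : 0 ≤ ∑' p : ℤ × ℤ, intWeight p.1 * intWeight p.2 :=
    tsum_nonneg fun p => mul_nonneg (intWeight_pos _).le (intWeight_pos _).le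
  refine ⟨4 ^ (k - 5) * 32 * ∑' p : ℤ × ℤ, intWeight p.1 * intWeight p.2, by positivity,
    fun P _ τ hτ hre him => ?_⟩
  set f : ℤ × ℤ → ℝ := fun p => if P p then (√τ.im / ‖(p.1 : ℂ) * τ + p.2‖) ^ k else 0 with hf
  set f0 : ℤ × ℤ → ℝ := fun p => if p.1 = 0 then f p else 0 with hf0
  have hle : ∀ p, ‖f p - f0 p‖ ≤ 4 ^ (k - 5) * 32 / τ.im * (intWeight p.1 * intWeight p.2) := by
    intro p
    have hpos : 0 ≤ 4 ^ (k - 5) * 32 / τ.im * (intWeight p.1 * intWeight p.2) :=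
      mul_nonneg (by positivity) (mul_nonneg (intWeight_pos _).le (intWeight_pos _).le)
    simp only [hf0]
    split_ifs with h
    · simpa using hpos
    · simp only [hf, sub_zero]
      split_ifs
      · rw [Real.norm_of_nonneg (by positivity)]
        refine (eisTerm_le hk hτ hre him h).trans (le_of_eq (by ring))
      · simpa using hpos
  have hsum : HasSum (fun p : ℤ × ℤ =>
      4 ^ (k - 5) * 32 / τ.im * (intWeight p.1 * intWeight p.2)) _ := (hB.mul_left _).hasSum
  have hs1 : Summable fun p => f p - f0 p := .of_norm_bounded hsum.summable hle
  have h1 := tsum_of_norm_bounded hsum hle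
  have hinj : Function.Injective fun d : ℤ => ((0 : ℤ), d) := fun a b h => by simpa using h
  have hsupp : ∀ p ∉ Set.range fun d : ℤ => ((0 : ℤ), d), f0 p = 0 := by
    rintro ⟨c, d⟩ hp
    have : c ≠ 0 := fun h => hp ⟨d, by simp [h]⟩
    simp [hf0, this]
  have hcomp : f0 ∘ (fun d : ℤ => ((0 : ℤ), d)) =
      fun d => √τ.im ^ k * (if P (0, d) then (|(d : ℝ)| ^ k)⁻¹ else 0) := by
    funext d
    simp only [Function.comp, hf0, hf, if_true]
    split_ifs
    · rw [div_pow]; simp [div_eq_mul_inv]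
    · simp
  have hsd : Summable fun d : ℤ => (if P (0, d) then (|(d : ℝ)| ^ k)⁻¹ else 0) := by
    have hk1 : (1 : ℝ) < k := by exact_mod_cast (by omega : 1 < k)
    refine .of_norm_bounded (Real.summable_abs_int_rpow hk1) fun d => ?_
    have : |(d : ℝ)| ^ (-(k : ℝ)) = (|(d : ℝ)| ^ k)⁻¹ := by
      rw [Real.rpow_neg (abs_nonneg _), Real.rpow_natCast]
    rw [this]
    split_ifs
    · rw [Real.norm_of_nonneg (by positivity)]
    · simp
  have hs0 : HasSum f0 (√τ.im ^ k * ∑' d : ℤ, (if P (0, d) then (|(d : ℝ)| ^ k)⁻¹ else 0)) := by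
    rw [← hinj.hasSum_iff hsupp, hcomp]
    exact hsd.hasSum.mul_left _
  have : eisSum k P τ - √τ.im ^ k * ∑' d : ℤ, (if P (0, d) then (|(d : ℝ)| ^ k)⁻¹ else 0) =
      ∑' p, (f p - f0 p) := by
    have h2 := (hs1.hasSum.add hs0).tsum_eq
    simp only [sub_add_cancel] at h2
    unfold eisSum
    rw [← hf, h2]; ring
  rw [this, ← Real.norm_eq_abs]
  refine h1.trans (le_of_eq ?_)
  rw [tsum_mul_left]; ring

/-- The sum of `|d|^{-k}` over the odd integers. -/
noncomputable def oddSum (k : ℕ) : ℝ := ∑' d : ℤ, if Odd d then (|(d : ℝ)| ^ k)⁻¹ else 0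

lemma oddSum_nonneg (k : ℕ) : 0 ≤ oddSum k :=
  tsum_nonneg fun d => by split_ifs <;> positivity

lemma thetaDefect_le {k : ℕ} (hk : 5 ≤ k) : ∃ C : ℝ, 0 ≤ C ∧
    ∀ τ : ℂ, 0 < τ.im → thetaDefect k (oddSum k) τ ≤ C / τ.im ∧
      thetaDefect k (oddSum k) τ ≤ C := by
  obtain ⟨C1, h10, h1⟩ := eisSum_sub_le hk
  obtain ⟨C2, h20, h2⟩ := thetaNorm_sub_le k
  obtain ⟨C3, h30, h3⟩ := thetaNorm_one_add_neg_inv_le k (by omega)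
  have hL := oddSum_nonneg k
  set L := oddSum k
  refine ⟨2 * (2 * (L * C2 + C1) + (L * C3 + C1)), by positivity, fun τ hτ => ?_⟩
  refine le_of_modular_invariant _ (fun τ hτ => thetaDefect_one_add k L hτ)
    (fun τ hτ => thetaDefect_neg_inv k L hτ) (by positivity) ?_ hτ
  intro τ hτ hre him
  have a1 := h1 (fun p => Odd (p.1 + p.2)) τ hτ hre him
  have a2 := h1 (fun p => Odd p.2) τ hτ hre him
  have a3 := h1 (fun p => Odd p.1) τ hτ hre him
  have b1 := h2 τ hτ him
  have b2 := h2 (1 + τ) (by simpa using hτ) (by simpa using him)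
  have b3 := h3 τ hτ him
  simp only [zero_add] at a1
  change |_ - _ * L| ≤ _ at a1
  change |_ - _ * L| ≤ _ at a2
  simp only [Int.not_odd_zero, if_false, tsum_zero, mul_zero, sub_zero] at a3
  rw [Complex.add_im, Complex.one_im, zero_add] at b2
  have key : ∀ a e s : ℝ, |a - s| ≤ C2 / τ.im → |e - s * L| ≤ C1 / τ.im →
      |L * a - e| ≤ (L * C2 + C1) / τ.im := by
    intro a e s ha he
    calc |L * a - e| = |L * (a - s) - (e - s * L)| := by congr 1; ring
      _ ≤ |L * (a - s)| + |e - s * L| := abs_sub _ _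
      _ ≤ L * (C2 / τ.im) + C1 / τ.im := by
          rw [abs_mul, abs_of_nonneg hL]; gcongr
      _ = _ := by ring
  have k3 : |L * thetaNorm k (1 + (-τ)⁻¹) - eisSum k (fun p => Odd p.1) τ| ≤
      (L * C3 + C1) / τ.im := by
    refine (abs_sub _ _).trans ?_
    rw [abs_mul, abs_of_nonneg hL]
    calc _ ≤ L * (C3 / τ.im) + C1 / τ.im := by gcongr
      _ = _ := by ring
  have := key _ _ _ b1 a1
  have := key _ _ _ b2 a2
  unfold thetaDefect
  calc _ ≤ (L * C2 + C1) / τ.im + (L * C2 + C1) / τ.im + (L * C3 + C1) / τ.im := by gcongr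
    _ = _ := by ring

/-- Comparison of the theta power with the Eisenstein series near the real line. -/
lemma thetaNorm_sub_eisSum_le {k : ℕ} (hk : 5 ≤ k) : ∃ C : ℝ, 0 ≤ C ∧
    ∀ τ : ℂ, 0 < τ.im →
      |oddSum k * thetaNorm k τ - eisSum k (fun p => Odd (p.1 + p.2)) τ| ≤
        C * min 1 (‖τ‖ ^ 2 / τ.im) := by
  obtain ⟨C, hC0, hC⟩ := thetaDefect_le hk
  refine ⟨C, hC0, fun τ hτ => ?_⟩
  have h1 : |oddSum k * thetaNorm k τ - eisSum k (fun p => Odd (p.1 + p.2)) τ| ≤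
      thetaDefect k (oddSum k) τ := by
    unfold thetaDefect
    rw [add_assoc]
    exact le_add_of_nonneg_right (by positivity)
  have h2 := (hC τ hτ).2
  have h3 := (hC _ (im_neg_inv_pos hτ)).1
  rw [thetaDefect_neg_inv k _ hτ, im_neg_inv, div_div_eq_mul_div, mul_div_assoc] at h3
  rw [mul_min_of_nonneg _ _ hC0, mul_one]
  exact h1.trans (le_min h2 h3)

end LatticeDiscrepancy

namespace LatticeDiscrepancy
open MeasureTheory

/-- The integral of `(1 + x²)^{-j/2}`. -/
noncomputable def besselInt (j : ℕ) : ℝ := ∫ x : ℝ, (√(x ^ 2 + 1 ^ 2) ^ j)⁻¹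

lemma integrable_inv_sqrt_pow {y : ℝ} (hy : 0 < y) {j : ℕ} (hj : 2 ≤ j) :
    Integrable fun x : ℝ => (√(x ^ 2 + y ^ 2) ^ j)⁻¹ := by
  refine ((integrable_inv_sq_add_sq hy).const_mul (y ^ (j - 2))⁻¹).mono' ?_ ?_
  · refine Continuous.aestronglyMeasurable (Continuous.inv₀ (by fun_prop) fun x => ?_)
    positivity
  · filter_upwards with x
    rw [Real.norm_of_nonneg (by positivity), ← mul_inv]
    apply inv_anti₀ (by positivity)
    calc y ^ (j - 2) * (x ^ 2 + y ^ 2) ≤ √(x ^ 2 + y ^ 2) ^ (j - 2) * √(x ^ 2 + y ^ 2) ^ 2 := by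
          rw [Real.sq_sqrt (by positivity)]
          gcongr
          apply Real.le_sqrt_of_sq_le; nlinarith [sq_nonneg x]
      _ = _ := by rw [← pow_add]; congr 1; omega

lemma integral_inv_sqrt_pow {y : ℝ} (hy : 0 < y) (j : ℕ) :
    ∫ x : ℝ, (√(x ^ 2 + y ^ 2) ^ j)⁻¹ = besselInt j * (y * (y ^ j)⁻¹) := by
  have h := Measure.integral_comp_mul_left (fun x : ℝ => (√(x ^ 2 + y ^ 2) ^ j)⁻¹) y
  have e : ∀ x : ℝ, (√((y * x) ^ 2 + y ^ 2) ^ j)⁻¹ = (y ^ j)⁻¹ * (√(x ^ 2 + 1 ^ 2) ^ j)⁻¹ := by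
    intro x
    rw [show (y * x) ^ 2 + y ^ 2 = y ^ 2 * (x ^ 2 + 1 ^ 2) by ring,
      Real.sqrt_mul (by positivity), Real.sqrt_sq hy.le, mul_pow, mul_inv]
  simp only [e] at h
  rw [integral_const_mul, abs_of_pos (by positivity), smul_eq_mul] at h
  unfold besselInt
  have : y ≠ 0 := hy.ne'
  have h' := congrArg (y * ·) h
  beta_reduce at h'
  rw [← mul_assoc y y⁻¹, mul_inv_cancel₀ this, one_mul] at h'
  rw [← h']; ring

lemma shifted_kernel_sub_le {y : ℝ} (hy : 0 < y) {k : ℕ} (hk : 3 ≤ k) {h : ℝ} (hh : h ≠ 0)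
    (x : ℝ) :
    |(√(x ^ 2 + y ^ 2) ^ k)⁻¹ * ((x - h) ^ 2 + y ^ 2)⁻¹ - (√(x ^ 2 + y ^ 2) ^ k)⁻¹ * (h ^ 2)⁻¹| ≤
      (|h| ^ 3)⁻¹ * (14 * (√(x ^ 2 + y ^ 2) ^ (k - 1))⁻¹ +
        10 * (y ^ (k - 3))⁻¹ * ((x - h) ^ 2 + y ^ 2)⁻¹) := by
  have ha2 : √(x ^ 2 + y ^ 2) ^ 2 = x ^ 2 + y ^ 2 := Real.sq_sqrt (by positivity)
  have hb2 : √((x - h) ^ 2 + y ^ 2) ^ 2 = (x - h) ^ 2 + y ^ 2 := Real.sq_sqrt (by positivity)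
  have ha : 0 < √(x ^ 2 + y ^ 2) := by positivity
  have hb : 0 < √((x - h) ^ 2 + y ^ 2) := by positivity
  have hya : y ≤ √(x ^ 2 + y ^ 2) := Real.le_sqrt_of_sq_le (by nlinarith)
  have hxa : |x| ≤ √(x ^ 2 + y ^ 2) := Real.le_sqrt_of_sq_le (by rw [sq_abs]; nlinarith)
  have hxb : |x - h| ≤ √((x - h) ^ 2 + y ^ 2) :=
    Real.le_sqrt_of_sq_le (by rw [sq_abs]; nlinarith)
  rw [← hb2]
  set a := √(x ^ 2 + y ^ 2)
  set b := √((x - h) ^ 2 + y ^ 2)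
  have hp : 0 < |h| := abs_pos.mpr hh
  have hhsq : |h| ^ 2 = h ^ 2 := sq_abs h
  have h1 : |h| ≤ a + b := by
    calc |h| = |x - (x - h)| := by congr 1; ring
      _ ≤ |x| + |x - h| := abs_sub _ _
      _ ≤ _ := by gcongr
  have h2 : a ≤ |h| + b := by
    apply abs_le_of_sq_le_sq' _ (by positivity) |>.2
    have : h * (x - h) ≤ |h| * b := by
      calc _ ≤ |h * (x - h)| := le_abs_self _
        _ ≤ _ := by rw [abs_mul]; gcongr
    nlinarith
  have hdiff : |h ^ 2 - b ^ 2| ≤ 2 * |h| * a + a ^ 2 := by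
    have : h ^ 2 - b ^ 2 = 2 * (h * x) - a ^ 2 := by rw [ha2, hb2]; ring
    rw [this]
    refine (abs_sub _ _).trans ?_
    rw [abs_mul, abs_mul, abs_two, abs_of_nonneg (sq_nonneg a), mul_assoc]
    gcongr
  have hsplit : (a ^ k)⁻¹ * (b ^ 2)⁻¹ - (a ^ k)⁻¹ * (h ^ 2)⁻¹ =
      (h ^ 2 - b ^ 2) * ((a ^ k)⁻¹ * (b ^ 2)⁻¹ * (h ^ 2)⁻¹) := by
    field_simp
  rw [hsplit, abs_mul, abs_of_nonneg (a := (a ^ k)⁻¹ * (b ^ 2)⁻¹ * (h ^ 2)⁻¹) (by positivity)]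
  have hkk : a ^ k = a ^ (k - 1) * a := by rw [← pow_succ]; congr 1; omega
  have hk3 : a ^ k = a ^ (k - 3) * a ^ 3 := by rw [← pow_add]; congr 1; omega
  rcases le_or_gt (|h| / 2) b with hc | hc
  · have key : |h ^ 2 - b ^ 2| * |h| ≤ 14 * a * b ^ 2 := by
      calc _ ≤ (2 * |h| * a + a ^ 2) * |h| := by gcongr
        _ = a * (2 * (|h| * |h|) + a * |h|) := by ring
        _ ≤ a * (2 * (2 * b * (2 * b)) + (2 * b + b) * (2 * b)) := by
          gcongr <;> linarith
        _ = _ := by ring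
    have : |h ^ 2 - b ^ 2| * ((a ^ k)⁻¹ * (b ^ 2)⁻¹ * (h ^ 2)⁻¹) ≤
        (|h| ^ 3)⁻¹ * (14 * (a ^ (k - 1))⁻¹) := by
      calc _ = (|h ^ 2 - b ^ 2| * |h|) * ((a ^ k)⁻¹ * (b ^ 2)⁻¹ * (|h| ^ 3)⁻¹) := by
            rw [← hhsq]; field_simp
        _ ≤ (14 * a * b ^ 2) * ((a ^ k)⁻¹ * (b ^ 2)⁻¹ * (|h| ^ 3)⁻¹) := by gcongr
        _ = _ := by rw [hkk]; field_simp
    refine this.trans ?_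
    gcongr
    exact le_add_of_nonneg_right (by positivity)
  · have key : |h ^ 2 - b ^ 2| * |h| ≤ 10 * a ^ 3 := by
      have h3 : |h| ≤ 2 * a := by linarith
      calc _ ≤ (2 * |h| * a + a ^ 2) * |h| := by gcongr
        _ ≤ (2 * (2 * a) * a + a ^ 2) * (2 * a) := by gcongr
        _ = _ := by ring
    have : |h ^ 2 - b ^ 2| * ((a ^ k)⁻¹ * (b ^ 2)⁻¹ * (h ^ 2)⁻¹) ≤
        (|h| ^ 3)⁻¹ * (10 * (y ^ (k - 3))⁻¹ * (b ^ 2)⁻¹) := by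
      calc _ = (|h ^ 2 - b ^ 2| * |h|) * ((a ^ k)⁻¹ * (b ^ 2)⁻¹ * (|h| ^ 3)⁻¹) := by
            rw [← hhsq]; field_simp
        _ ≤ (10 * a ^ 3) * ((a ^ k)⁻¹ * (b ^ 2)⁻¹ * (|h| ^ 3)⁻¹) := by gcongr
        _ = (|h| ^ 3)⁻¹ * (10 * (a ^ (k - 3))⁻¹ * (b ^ 2)⁻¹) := by rw [hk3]; field_simp
        _ ≤ _ := by gcongr
    refine this.trans ?_
    gcongr
    exact le_add_of_nonneg_left (by positivity)

lemma integrable_kernel {y : ℝ} (hy : 0 < y) (k : ℕ) (h : ℝ) :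
    Integrable fun x : ℝ => (√((x + h) ^ 2 + y ^ 2) ^ k)⁻¹ * (x ^ 2 + y ^ 2)⁻¹ := by
  refine ((integrable_inv_sq_add_sq hy).const_mul (y ^ k)⁻¹).mono' ?_ ?_
  · refine Continuous.aestronglyMeasurable (Continuous.mul (Continuous.inv₀ (by fun_prop)
      fun x => ?_) (Continuous.inv₀ (by fun_prop) fun x => ?_)) <;> positivity
  · filter_upwards with x
    rw [Real.norm_of_nonneg (by positivity)]
    gcongr
    apply Real.le_sqrt_of_sq_le; nlinarith [sq_nonneg (x + h)]

lemma integral_kernel_sub_le {y : ℝ} (hy : 0 < y) {k : ℕ} (hk : 3 ≤ k) {h : ℝ} (hh : h ≠ 0) :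
    |(∫ x : ℝ, (√((x + h) ^ 2 + y ^ 2) ^ k)⁻¹ * (x ^ 2 + y ^ 2)⁻¹) -
      (h ^ 2)⁻¹ * (besselInt k * (y * (y ^ k)⁻¹))| ≤
      (|h| ^ 3)⁻¹ * ((14 * besselInt (k - 1) + 10 * π) * (y * (y ^ (k - 1))⁻¹)) := by
  have hshift : (∫ x : ℝ, (√((x + h) ^ 2 + y ^ 2) ^ k)⁻¹ * (x ^ 2 + y ^ 2)⁻¹) =
      ∫ x : ℝ, (√(x ^ 2 + y ^ 2) ^ k)⁻¹ * ((x - h) ^ 2 + y ^ 2)⁻¹ := by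
    rw [← integral_add_right_eq_self
      (fun x : ℝ => (√(x ^ 2 + y ^ 2) ^ k)⁻¹ * ((x - h) ^ 2 + y ^ 2)⁻¹) h]
    simp
  have hinteg : Integrable fun x : ℝ => (√(x ^ 2 + y ^ 2) ^ k)⁻¹ * ((x - h) ^ 2 + y ^ 2)⁻¹ := by
    have := (integrable_kernel hy k h).comp_sub_right h
    simpa using this
  have hb : Integrable fun x : ℝ => ((x - h) ^ 2 + y ^ 2)⁻¹ :=
    (integrable_inv_sq_add_sq hy).comp_sub_right h
  have hbI : ∫ x : ℝ, ((x - h) ^ 2 + y ^ 2)⁻¹ = π / y := by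
    rw [integral_sub_right_eq_self (fun x : ℝ => (x ^ 2 + y ^ 2)⁻¹) h, integral_inv_sq_add_sq hy]
  have hk2 := integrable_inv_sqrt_pow hy (j := k) (by omega)
  have hk1 := integrable_inv_sqrt_pow hy (j := k - 1) (by omega)
  have hm : (h ^ 2)⁻¹ * (besselInt k * (y * (y ^ k)⁻¹)) =
      ∫ x : ℝ, (√(x ^ 2 + y ^ 2) ^ k)⁻¹ * (h ^ 2)⁻¹ := by
    rw [integral_mul_const, integral_inv_sqrt_pow hy]; ring
  rw [hshift, hm, ← integral_sub hinteg (hk2.mul_const _), ← Real.norm_eq_abs]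
  refine (norm_integral_le_of_norm_le (((hk1.const_mul 14).add
    (hb.const_mul (10 * (y ^ (k - 3))⁻¹))).const_mul (|h| ^ 3)⁻¹)
    (Filter.Eventually.of_forall fun x => shifted_kernel_sub_le hy hk hh x)).trans (le_of_eq ?_)
  simp only [Pi.add_apply]
  rw [integral_const_mul, integral_add (hk1.const_mul 14) (hb.const_mul _), integral_const_mul,
    integral_const_mul, hbI, integral_inv_sqrt_pow hy]
  have : y ^ (k - 1) = y ^ (k - 3) * y ^ 2 := by rw [← pow_add]; congr 1; omega
  rw [this]
  field_simp

end LatticeDiscrepancy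

namespace LatticeDiscrepancy
open MeasureTheory

lemma norm_int_mul_add (x y : ℝ) (c d : ℤ) (hc : c ≠ 0) :
    ‖(c : ℂ) * (x + y * Complex.I) + d‖ = |(c : ℝ)| * √((x + d / c) ^ 2 + y ^ 2) := by
  have hc' : (c : ℝ) ≠ 0 := by exact_mod_cast hc
  have : (c : ℂ) * (x + y * Complex.I) + d =
      (c : ℂ) * (((x + d / c : ℝ) : ℂ) + y * Complex.I) := by
    have : (c : ℂ) ≠ 0 := by exact_mod_cast hc
    push_cast; field_simp; ring
  rw [this, norm_mul, Complex.norm_add_mul_I, Complex.norm_intCast]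

/-- The main term of the integral of an Eisenstein term. -/
noncomputable def eisMain (k : ℕ) (y : ℝ) (p : ℤ × ℤ) : ℝ :=
  if Odd (p.1 + p.2) then
    (if p.1 = 0 then (|(p.2 : ℝ)| ^ k)⁻¹ * (π / y) else 0) +
    (if p.2 = 0 then (|(p.1 : ℝ)| ^ k)⁻¹ * (besselInt (k + 2) * (y * (y ^ (k + 2))⁻¹)) else 0) +
    (|(p.1 : ℝ)| ^ (k - 2))⁻¹ * (|(p.2 : ℝ)| ^ 2)⁻¹ * (besselInt k * (y * (y ^ k)⁻¹))
  else 0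

lemma eisTerm_integral {y : ℝ} (hy : 0 < y) {k : ℕ} (hk : 5 ≤ k) (p : ℤ × ℤ) :
    (Integrable fun x : ℝ => (if Odd (p.1 + p.2) then
      (‖(p.1 : ℂ) * (x + y * Complex.I) + p.2‖ ^ k)⁻¹ else 0) * (x ^ 2 + y ^ 2)⁻¹) ∧
    |(∫ x : ℝ, (if Odd (p.1 + p.2) then
      (‖(p.1 : ℂ) * (x + y * Complex.I) + p.2‖ ^ k)⁻¹ else 0) * (x ^ 2 + y ^ 2)⁻¹) -
        eisMain k y p| ≤ (|(p.1 : ℝ)| ^ (k - 3))⁻¹ * (|(p.2 : ℝ)| ^ 3)⁻¹ *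
          ((14 * besselInt (k - 1) + 10 * π) * (y * (y ^ (k - 1))⁻¹)) := by
  obtain ⟨c, d⟩ := p
  simp only
  have hB : 0 ≤ besselInt (k - 1) := integral_nonneg fun x => by positivity
  by_cases hodd : Odd (c + d)
  swap
  · simp only [hodd, if_false, zero_mul, integral_zero, eisMain, sub_self, abs_zero]
    exact ⟨integrable_zero _ _ _, by positivity⟩
  simp only [hodd, if_true, eisMain]
  by_cases hc : c = 0
  · subst hc
    have hd : d ≠ 0 := by rintro rfl; simp at hodd
    have e : ∀ x : ℝ, (‖((0 : ℤ) : ℂ) * (x + y * Complex.I) + d‖ ^ k)⁻¹ * (x ^ 2 + y ^ 2)⁻¹ =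
        (|(d : ℝ)| ^ k)⁻¹ * (x ^ 2 + y ^ 2)⁻¹ := by intro x; simp
    simp only [e]
    refine ⟨(integrable_inv_sq_add_sq hy).const_mul _, ?_⟩
    rw [integral_const_mul, integral_inv_sq_add_sq hy]
    have h2 : k - 2 ≠ 0 := by omega
    simp [hd, h2]
    positivity
  have hcpos : 0 < |(c : ℝ)| := by positivity
  have e : ∀ x : ℝ, (‖(c : ℂ) * (x + y * Complex.I) + d‖ ^ k)⁻¹ * (x ^ 2 + y ^ 2)⁻¹ =
      (|(c : ℝ)| ^ k)⁻¹ * ((√((x + d / c) ^ 2 + y ^ 2) ^ k)⁻¹ * (x ^ 2 + y ^ 2)⁻¹) := by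
    intro x; rw [norm_int_mul_add x y c d hc, mul_pow, mul_inv, mul_assoc]
  simp only [e]
  refine ⟨(integrable_kernel hy k _).const_mul _, ?_⟩
  rw [integral_const_mul]
  by_cases hd : d = 0
  · subst hd
    have e2 : ∀ x : ℝ, (√((x + ((0 : ℤ) : ℝ) / c) ^ 2 + y ^ 2) ^ k)⁻¹ * (x ^ 2 + y ^ 2)⁻¹ =
        (√(x ^ 2 + y ^ 2) ^ (k + 2))⁻¹ := by
      intro x
      rw [pow_add, Real.sq_sqrt (by positivity)]; simp [mul_comm]
    simp only [e2]
    rw [integral_inv_sqrt_pow hy]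
    simp [hc]
  · have hh : (d : ℝ) / c ≠ 0 := by
      have : (c : ℝ) ≠ 0 := by exact_mod_cast hc
      have : (d : ℝ) ≠ 0 := by exact_mod_cast hd
      positivity
    have hdpos : 0 < |(d : ℝ)| := by positivity
    have := mul_le_mul_of_nonneg_left (integral_kernel_sub_le hy (k := k) (by omega) hh)
      (show 0 ≤ (|(c : ℝ)| ^ k)⁻¹ by positivity)
    rw [← abs_of_nonneg (show 0 ≤ (|(c : ℝ)| ^ k)⁻¹ by positivity), ← abs_mul,
      abs_of_nonneg (show 0 ≤ (|(c : ℝ)| ^ k)⁻¹ by positivity)] at this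
    simp only [hc, hd, if_false, zero_add]
    refine le_trans (le_of_eq ?_) (this.trans (le_of_eq ?_))
    · have e1 : |(c : ℝ)| ^ k = |(c : ℝ)| ^ (k - 2) * |(c : ℝ)| ^ 2 := by
        rw [← pow_add]; congr 1; omega
      have e2 : (|(c : ℝ)| ^ (k - 2))⁻¹ * (|(d : ℝ)| ^ 2)⁻¹ =
          (|(c : ℝ)| ^ k)⁻¹ * (((d : ℝ) / c) ^ 2)⁻¹ := by
        rw [← sq_abs ((d : ℝ) / c), abs_div, e1]; field_simp
      rw [mul_sub, e2, mul_assoc]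
    · rw [← mul_assoc, abs_div]
      congr 1
      have : |(c : ℝ)| ^ k = |(c : ℝ)| ^ (k - 3) * |(c : ℝ)| ^ 3 := by
        rw [← pow_add]; congr 1; omega
      rw [this]; field_simp

lemma summable_inv_abs_pow {j : ℕ} (hj : 2 ≤ j) : Summable fun n : ℤ => (|(n : ℝ)| ^ j)⁻¹ := by
  refine (Real.summable_abs_int_rpow (b := j) (by exact_mod_cast hj)).congr fun d => ?_
  rw [Real.rpow_neg (abs_nonneg _), Real.rpow_natCast]

lemma summable_inv_abs_pow_mul {i j : ℕ} (hi : 2 ≤ i) (hj : 2 ≤ j) :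
    Summable fun p : ℤ × ℤ => (|(p.1 : ℝ)| ^ i)⁻¹ * (|(p.2 : ℝ)| ^ j)⁻¹ :=
  (summable_inv_abs_pow hi).mul_of_nonneg (summable_inv_abs_pow hj) (fun _ => by positivity)
    (fun _ => by positivity)

/-- The mixed double sum appearing in the second-order term. -/
noncomputable def mixedSum (k : ℕ) : ℝ := ∑' p : ℤ × ℤ,
  if Odd (p.1 + p.2) then (|(p.1 : ℝ)| ^ (k - 2))⁻¹ * (|(p.2 : ℝ)| ^ 2)⁻¹ else 0

lemma hasSum_mixedSum {k : ℕ} (hk : 5 ≤ k) : HasSum (fun p : ℤ × ℤ =>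
    if Odd (p.1 + p.2) then (|(p.1 : ℝ)| ^ (k - 2))⁻¹ * (|(p.2 : ℝ)| ^ 2)⁻¹ else 0)
    (mixedSum k) := by
  refine Summable.hasSum (.of_norm_bounded (summable_inv_abs_pow_mul (i := k - 2) (j := 2)
    (by omega) le_rfl) fun p => ?_)
  split_ifs
  · rw [Real.norm_of_nonneg (by positivity)]
  · simp; positivity

lemma hasSum_oddSum {k : ℕ} (hk : 2 ≤ k) : HasSum (fun d : ℤ =>
    if Odd d then (|(d : ℝ)| ^ k)⁻¹ else 0) (oddSum k) := by
  refine Summable.hasSum (.of_norm_bounded (summable_inv_abs_pow hk) fun p => ?_)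
  split_ifs
  · rw [Real.norm_of_nonneg (by positivity)]
  · simp

lemma hasSum_eisMain {k : ℕ} (hk : 5 ≤ k) (y : ℝ) : HasSum (eisMain k y)
    (oddSum k * (π / y) + oddSum k * (besselInt (k + 2) * (y * (y ^ (k + 2))⁻¹)) +
      mixedSum k * (besselInt k * (y * (y ^ k)⁻¹))) := by
  have hinj1 : Function.Injective fun d : ℤ => ((0 : ℤ), d) := fun a b h => by simpa using h
  have hinj2 : Function.Injective fun d : ℤ => (d, (0 : ℤ)) := fun a b h => by simpa using h
  have h1 : HasSum (fun p : ℤ × ℤ => if Odd (p.1 + p.2) then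
      (if p.1 = 0 then (|(p.2 : ℝ)| ^ k)⁻¹ * (π / y) else 0) else 0) (oddSum k * (π / y)) := by
    rw [← hinj1.hasSum_iff]
    · refine ((hasSum_oddSum (k := k) (by omega)).mul_right (π / y)).congr_fun fun d => ?_
      simp [ite_mul]
    · rintro ⟨c, d⟩ hp
      have : c ≠ 0 := fun h => hp ⟨d, by simp [h]⟩
      simp [this]
  have h2 : ∀ z : ℝ, HasSum (fun p : ℤ × ℤ => if Odd (p.1 + p.2) then
      (if p.2 = 0 then (|(p.1 : ℝ)| ^ k)⁻¹ * z else 0) else 0) (oddSum k * z) := by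
    intro z
    rw [← hinj2.hasSum_iff]
    · refine ((hasSum_oddSum (k := k) (by omega)).mul_right z).congr_fun fun d => ?_
      simp [ite_mul]
    · rintro ⟨c, d⟩ hp
      have : d ≠ 0 := fun h => hp ⟨c, by simp [h]⟩
      simp [this]
  convert (h1.add (h2 (besselInt (k + 2) * (y * (y ^ (k + 2))⁻¹)))).add
    ((hasSum_mixedSum hk).mul_right (besselInt k * (y * (y ^ k)⁻¹))) using 2 with p
  unfold eisMain
  split_ifs <;> simp

lemma eisSum_integral {k : ℕ} (hk : 5 ≤ k) : ∃ C : ℝ, 0 ≤ C ∧ ∀ y : ℝ, 0 < y →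
    (Integrable fun x : ℝ => eisSum k (fun p => Odd (p.1 + p.2)) (x + y * Complex.I) *
      (x ^ 2 + y ^ 2)⁻¹) ∧
    |(√y ^ k)⁻¹ * (∫ x : ℝ, eisSum k (fun p => Odd (p.1 + p.2)) (x + y * Complex.I) *
      (x ^ 2 + y ^ 2)⁻¹) - (oddSum k * (π / y) +
        oddSum k * (besselInt (k + 2) * (y * (y ^ (k + 2))⁻¹)) +
        mixedSum k * (besselInt k * (y * (y ^ k)⁻¹)))| ≤ C * (y * (y ^ (k - 1))⁻¹) := by
  have hB : 0 ≤ besselInt (k - 1) := integral_nonneg fun x => by positivity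
  have hs := summable_inv_abs_pow_mul (i := k - 3) (j := 3) (by omega) (by omega)
  have hs0 : 0 ≤ ∑' p : ℤ × ℤ, (|(p.1 : ℝ)| ^ (k - 3))⁻¹ * (|(p.2 : ℝ)| ^ 3)⁻¹ :=
    tsum_nonneg fun _ => by positivity
  refine ⟨(∑' p : ℤ × ℤ, (|(p.1 : ℝ)| ^ (k - 3))⁻¹ * (|(p.2 : ℝ)| ^ 3)⁻¹) *
    (14 * besselInt (k - 1) + 10 * π), by positivity, fun y hy => ?_⟩
  set f : ℤ × ℤ → ℝ → ℝ := fun p x => (if Odd (p.1 + p.2) then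
      (‖(p.1 : ℂ) * (x + y * Complex.I) + p.2‖ ^ k)⁻¹ else 0) * (x ^ 2 + y ^ 2)⁻¹ with hf
  have hfi : ∀ p, Integrable (f p) := fun p => (eisTerm_integral hy hk p).1
  have hfb := fun p => (eisTerm_integral hy hk p).2
  have hf0 : ∀ p x, 0 ≤ f p x := by
    intro p x; simp only [hf]; split_ifs <;> positivity
  have hsb := hs.hasSum.mul_right ((14 * besselInt (k - 1) + 10 * π) * (y * (y ^ (k - 1))⁻¹))
  have hm := hasSum_eisMain hk y
  have hsum1 : Summable fun p => (∫ x, f p x) - eisMain k y p :=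
    .of_norm_bounded hsb.summable hfb
  have hsum : Summable fun p => ∫ x, f p x := by
    simpa using hsum1.add hm.summable
  have hnorm : ∀ p, ∫ x, ‖f p x‖ = ∫ x, f p x := fun p =>
    integral_congr_ae (Filter.Eventually.of_forall fun x => Real.norm_of_nonneg (hf0 p x))
  have hI := hasSum_integral_of_summable_integral_norm hfi (by simpa only [hnorm] using hsum)
  have heis : ∀ x : ℝ, (√y ^ k)⁻¹ * (eisSum k (fun p => Odd (p.1 + p.2)) (x + y * Complex.I) *
      (x ^ 2 + y ^ 2)⁻¹) = ∑' p, f p x := by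
    intro x
    rw [hf]; simp only
    rw [tsum_mul_right, ← mul_assoc]
    congr 1
    unfold eisSum
    rw [← tsum_mul_left]
    refine tsum_congr fun p => ?_
    have : √y ^ k ≠ 0 := by positivity
    simp only [Complex.add_im, Complex.ofReal_im, Complex.mul_I_im, Complex.ofReal_re, zero_add]
    split_ifs
    · rw [div_pow]; field_simp
    · simp
  have hinteg : Integrable fun x : ℝ => eisSum k (fun p => Odd (p.1 + p.2)) (x + y * Complex.I) *
      (x ^ 2 + y ^ 2)⁻¹ := by
    by_contra hcon
    have hne : ¬ Integrable fun x : ℝ => (√y ^ k)⁻¹ *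
        (eisSum k (fun p => Odd (p.1 + p.2)) (x + y * Complex.I) * (x ^ 2 + y ^ 2)⁻¹) := by
      have : (√y ^ k)⁻¹ ≠ 0 := by positivity
      rwa [integrable_const_mul_iff (IsUnit.mk0 _ this)]
    have hz := integral_undef hne
    simp only [heis] at hz
    have h1 := hI.tsum_eq
    rw [hz] at h1
    have h2 := hsum.le_tsum (0, 1) fun p _ => integral_nonneg (hf0 p)
    rw [h1] at h2
    have h3 : ∫ x, f (0, 1) x = π / y := by
      rw [← integral_inv_sq_add_sq hy]
      simp [hf]
    have : 0 < π / y := by positivity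
    linarith
  refine ⟨hinteg, ?_⟩
  rw [← integral_const_mul]
  simp only [heis]
  rw [← hI.tsum_eq, ← hm.tsum_eq, ← hsum.tsum_sub hm.summable, ← Real.norm_eq_abs]
  refine (tsum_of_norm_bounded hsb hfb).trans (le_of_eq ?_)
  ring

end LatticeDiscrepancy

namespace LatticeDiscrepancy
open MeasureTheory

lemma jacobiTheta_eq_th (τ : ℂ) : jacobiTheta τ = th (Complex.exp (π * Complex.I * τ)) := by
  unfold jacobiTheta th
  refine tsum_congr fun n => ?_
  rw [← Complex.exp_nat_mul]
  congr 1
  have : ((n.natAbs ^ 2 : ℕ) : ℂ) = (n : ℂ) ^ 2 := by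
    have : ((n.natAbs ^ 2 : ℕ) : ℤ) = n ^ 2 := by simp
    rw [← Int.cast_natCast, this]; simp
  rw [this]; ring

lemma exp_neg_pi_mul_lt_one {y : ℝ} (hy : 0 < y) : Real.exp (-π * y) < 1 :=
  (Real.exp_lt_one_iff).2 (by nlinarith [Real.pi_pos])

lemma summable_exp_pow_nsq {y : ℝ} (hy : 0 < y) (k : ℕ) :
    Summable fun v : Fin k → ℤ => Real.exp (-π * y) ^ nsq v := by
  have h : ‖(Real.exp (-π * y) : ℂ)‖ < 1 := by
    rw [Complex.norm_real, Real.norm_of_nonneg (Real.exp_pos _).le]; exact exp_neg_pi_mul_lt_one hy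
  refine (summable_hasSum_th_pow h k).1.congr fun v => ?_
  rw [norm_pow, Complex.norm_real, Real.norm_of_nonneg (Real.exp_pos _).le]

/-- The weighted mean square of `θ^k` along a horizontal line. -/
noncomputable def thetaInt (k : ℕ) (y : ℝ) : ℝ :=
  ∫ x : ℝ, ‖jacobiTheta (x + y * Complex.I)‖ ^ (2 * k) * (x ^ 2 + y ^ 2)⁻¹

lemma thetaInt_eq {y : ℝ} (hy : 0 < y) (k : ℕ) :
    (Summable fun p : (Fin k → ℤ) × (Fin k → ℤ) =>
      Real.exp (-2 * π * y) ^ max (nsq p.1) (nsq p.2)) ∧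
    thetaInt k y = π / y * ∑' p : (Fin k → ℤ) × (Fin k → ℤ),
      Real.exp (-2 * π * y) ^ max (nsq p.1) (nsq p.2) := by
  obtain ⟨h1, h2⟩ := integral_normSq_tsum_div (fun v : Fin k → ℤ => nsq v) hy
    (summable_exp_pow_nsq hy k)
  refine ⟨h1, ?_⟩
  rw [← h2]
  unfold thetaInt
  congr 1 with x
  have hq : ‖Complex.exp (π * Complex.I * (x + y * Complex.I))‖ < 1 := by
    rw [Complex.norm_exp]
    refine lt_of_eq_of_lt ?_ (exp_neg_pi_mul_lt_one hy)
    congr 1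
    simp
  rw [(summable_hasSum_th_pow hq k).2.tsum_eq, jacobiTheta_eq_th, norm_pow, ← pow_mul, mul_comm 2]

lemma hasSum_Sk_sq {y : ℝ} (hy : 0 < y) (k : ℕ) :
    HasSum (fun m : ℕ => (Sk k m : ℝ) ^ 2 * Real.exp (-2 * π * y) ^ m)
      (y / π * thetaInt k y / (1 - Real.exp (-2 * π * y))) := by
  obtain ⟨h1, h2⟩ := thetaInt_eq hy k
  have := Sk_sq_mul_pow_hasSum k (Real.exp_pos _)
    ((Real.exp_lt_one_iff).2 (by nlinarith [Real.pi_pos])) h1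
  convert this using 2
  rw [h2]
  field_simp

lemma oddSum_pos {k : ℕ} (hk : 2 ≤ k) : 0 < oddSum k := by
  have := (hasSum_oddSum hk).summable.le_tsum 1 fun d _ => by split_ifs <;> positivity
  refine lt_of_lt_of_le ?_ this
  simp

lemma integrable_thetaNorm {k : ℕ} {y : ℝ} (hy : 0 < y) : Integrable fun x : ℝ =>
    ‖jacobiTheta (x + y * Complex.I)‖ ^ (2 * k) * (x ^ 2 + y ^ 2)⁻¹ := by
  by_contra hcon
  have h0 : thetaInt k y = 0 := integral_undef hcon
  obtain ⟨h1, h2⟩ := thetaInt_eq hy k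
  have h3 := h1.le_tsum (0, 0) fun p _ => by positivity
  have h4 : 0 < Real.exp (-2 * π * y) ^ max (nsq (0 : Fin k → ℤ)) (nsq (0 : Fin k → ℤ)) := by
    positivity
  have h5 : 0 < thetaInt k y := by
    rw [h2]; exact mul_pos (by positivity) (h4.trans_le h3)
  linarith

lemma integral_min_le {y : ℝ} (hy : 0 < y) (g : ℝ → ℝ) {C : ℝ} (hC : 0 ≤ C)
    (hg : ∀ x, |g x| ≤ C * min 1 ((x ^ 2 + y ^ 2) / y)) :
    |∫ x, g x * (x ^ 2 + y ^ 2)⁻¹| ≤ 2 * C * (π / √y) := by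
  rw [← integral_inv_sq_add_sq (Real.sqrt_pos.mpr hy), ← integral_const_mul, ← Real.norm_eq_abs]
  refine norm_integral_le_of_norm_le
    ((integrable_inv_sq_add_sq (Real.sqrt_pos.mpr hy)).const_mul _)
    (Filter.Eventually.of_forall fun x => ?_)
  rw [norm_mul, Real.norm_eq_abs, Real.norm_of_nonneg (by positivity), Real.sq_sqrt hy.le]
  have h1 : |g x| ≤ C := (hg x).trans (mul_le_of_le_one_right hC (min_le_left _ _))
  have h2 : |g x| ≤ C * ((x ^ 2 + y ^ 2) / y) :=
    (hg x).trans (mul_le_mul_of_nonneg_left (min_le_right _ _) hC)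
  have h3 : |g x| * y ≤ C * (x ^ 2 + y ^ 2) := by
    rw [← mul_div_assoc, le_div_iff₀ hy] at h2; exact h2
  rw [← div_eq_mul_inv, ← div_eq_mul_inv, div_le_div_iff₀ (by positivity) (by positivity)]
  nlinarith [mul_le_mul_of_nonneg_right h1 (sq_nonneg x), mul_nonneg hC (sq_nonneg x),
    mul_nonneg hC (sq_nonneg y)]

/-- Asymptotics of `thetaInt` at the origin. -/
lemma thetaInt_asymp {k : ℕ} (hk : 5 ≤ k) : ∃ C : ℝ, 0 ≤ C ∧ ∀ y : ℝ, 0 < y → y ≤ 1 →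
    |thetaInt k y - (π / y + besselInt (k + 2) * (y * (y ^ (k + 2))⁻¹) +
      mixedSum k / oddSum k * (besselInt k * (y * (y ^ k)⁻¹)))| ≤
        C * (y * (y ^ (k - 1))⁻¹) := by
  obtain ⟨C1, h10, h1⟩ := eisSum_integral hk
  obtain ⟨C2, h20, h2⟩ := thetaNorm_sub_eisSum_le hk
  have hL := oddSum_pos (k := k) (by omega)
  set L := oddSum k
  refine ⟨(C1 + 2 * C2 * π) / L, by positivity, fun y hy hy1 => ?_⟩
  obtain ⟨hi, hb⟩ := h1 y hy
  set E : ℝ → ℝ := fun x => eisSum k (fun p => Odd (p.1 + p.2)) (x + y * Complex.I)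
  set A : ℝ → ℝ := fun x => ‖jacobiTheta (x + y * Complex.I)‖ ^ (2 * k)
  have hA : Integrable fun x => A x * (x ^ 2 + y ^ 2)⁻¹ := integrable_thetaNorm hy
  have hsy : 0 < √y := Real.sqrt_pos.mpr hy
  have hthN : ∀ x : ℝ, thetaNorm k (x + y * Complex.I) = √y ^ k * A x := by
    intro x
    simp only [thetaNorm, A]
    rw [mul_pow, ← pow_mul]
    simp
  have hg : |∫ x, (L * (√y ^ k * A x) - E x) * (x ^ 2 + y ^ 2)⁻¹| ≤ 2 * C2 * (π / √y) := by
    refine integral_min_le hy _ h20 fun x => ?_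
    have := h2 (x + y * Complex.I) (by simpa using hy)
    rw [hthN] at this
    refine this.trans (le_of_eq ?_)
    rw [← Complex.normSq_eq_norm_sq, Complex.normSq_add_mul_I]
    simp
  have hsplit : ∫ x, (L * (√y ^ k * A x) - E x) * (x ^ 2 + y ^ 2)⁻¹ =
      L * √y ^ k * thetaInt k y - ∫ x, E x * (x ^ 2 + y ^ 2)⁻¹ := by
    unfold thetaInt
    rw [← integral_const_mul, ← integral_sub (hA.const_mul _) hi]
    congr 1 with x
    ring
  rw [hsplit] at hg
  have hg2 : |L * thetaInt k y - (√y ^ k)⁻¹ * ∫ x, E x * (x ^ 2 + y ^ 2)⁻¹| ≤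
      2 * C2 * π * (y * (y ^ (k - 1))⁻¹) := by
    have e : L * thetaInt k y - (√y ^ k)⁻¹ * ∫ x, E x * (x ^ 2 + y ^ 2)⁻¹ =
        (√y ^ k)⁻¹ * (L * √y ^ k * thetaInt k y - ∫ x, E x * (x ^ 2 + y ^ 2)⁻¹) := by
      field_simp
    rw [e, abs_mul, abs_of_nonneg (by positivity)]
    calc _ ≤ (√y ^ k)⁻¹ * (2 * C2 * (π / √y)) := by gcongr
      _ = 2 * C2 * π * (√y ^ (k + 1))⁻¹ := by rw [pow_succ]; field_simp
      _ ≤ 2 * C2 * π * (√y ^ (2 * (k - 2)))⁻¹ := by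
          gcongr 2 * C2 * π * ?_
          apply inv_anti₀ (by positivity)
          exact pow_le_pow_of_le_one hsy.le (Real.sqrt_le_one.mpr hy1) (by omega)
      _ = _ := by
          rw [pow_mul, Real.sq_sqrt hy.le]
          have : y ^ (k - 1) = y ^ (k - 2) * y := by rw [← pow_succ]; congr 1; omega
          rw [this]; field_simp
  rw [div_mul_eq_mul_div (C1 + 2 * C2 * π), le_div_iff₀ hL]
  nth_rewrite 2 [← abs_of_pos hL]
  rw [← abs_mul]
  set X := (√y ^ k)⁻¹ * ∫ x, E x * (x ^ 2 + y ^ 2)⁻¹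
  have := abs_add_le (L * thetaInt k y - X) (X - (L * (π / y) +
        L * (besselInt (k + 2) * (y * (y ^ (k + 2))⁻¹)) +
        mixedSum k * (besselInt k * (y * (y ^ k)⁻¹))))
  refine le_trans (le_of_eq ?_) (this.trans ((add_le_add hg2 hb).trans (le_of_eq (by ring))))
  congr 1
  field_simp
  ring

end LatticeDiscrepancy

namespace LatticeDiscrepancy

lemma div_one_sub_exp_neg_approx {t : ℝ} (ht : 0 < t) (ht1 : t ≤ 1) :
    |t / (1 - Real.exp (-t)) - (1 + t / 2 + t ^ 2 / 12)| ≤ t ^ 3 := by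
  have h := Real.exp_bound (x := -t) (by rw [abs_neg, abs_of_pos ht]; exact ht1) (n := 4)
    (by norm_num)
  rw [abs_neg, abs_of_pos ht] at h
  norm_num [Finset.sum_range_succ, Nat.factorial] at h
  obtain ⟨h1, h2⟩ := abs_le.mp h
  set u := 1 - Real.exp (-t) with hu
  have he : Real.exp (-t) = 1 - u := by rw [hu]; ring
  rw [he] at h1 h2
  have hlow : t / 2 ≤ u := by nlinarith [pow_pos ht 2, pow_pos ht 3, pow_pos ht 4]
  have hu0 : 0 < u := by linarith
  have e : t / u - (1 + t / 2 + t ^ 2 / 12) = (t - u * (1 + t / 2 + t ^ 2 / 12)) / u := by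
    field_simp
  rw [e, abs_div, abs_of_pos hu0, div_le_iff₀ hu0]
  have hρ : |u - (t - t ^ 2 / 2 + t ^ 3 / 6)| ≤ t ^ 4 * (5 / 96) := by
    rw [abs_le]; constructor <;> linarith
  have hP : |1 + t / 2 + t ^ 2 / 12| ≤ 2 := by
    rw [abs_of_pos (by positivity)]; nlinarith
  have e2 : t - u * (1 + t / 2 + t ^ 2 / 12) =
      -(t ^ 4 * (1 / 24 + t / 72)) - (u - (t - t ^ 2 / 2 + t ^ 3 / 6)) *
        (1 + t / 2 + t ^ 2 / 12) := by ring
  rw [e2]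
  calc _ ≤ t ^ 4 * (1 / 24 + t / 72) + t ^ 4 * (5 / 96) * 2 := by
        refine (abs_sub _ _).trans ?_
        rw [abs_neg, abs_of_pos (a := t ^ 4 * (1 / 24 + t / 72)) (by positivity), abs_mul]
        gcongr
    _ ≤ t ^ 4 * (1 / 2) := by
        rw [mul_assoc, ← mul_add]; gcongr; linarith
    _ = t ^ 3 * (t / 2) := by ring
    _ ≤ _ := by gcongr

lemma mul_approx {α β C p q t : ℝ} (hC : 0 ≤ C) (ht : 0 < t) (ht1 : t ≤ 1)
    (hp : |p - (1 + t / 2 + t ^ 2 / 12)| ≤ t ^ 3) (hq : |q - (α + β * t ^ 2)| ≤ C * t ^ 3) :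
    |q * p - (α + α / 2 * t + (α / 12 + β) * t ^ 2)| ≤
      ((|α| + |β| + C) + 2 * C + |β|) * t ^ 3 := by
  have ht2 : t ^ 2 ≤ 1 := pow_le_one₀ ht.le ht1
  have ht3 : t ^ 3 ≤ 1 := pow_le_one₀ ht.le ht1
  have hP : |1 + t / 2 + t ^ 2 / 12| ≤ 2 := by
    rw [abs_of_pos (by positivity)]; nlinarith
  have hQ : |q| ≤ |α| + |β| + C := by
    have h_b : |β * t ^ 2| ≤ |β| := by
      rw [abs_mul, abs_of_pos (a := t ^ 2) (by positivity)]
      exact mul_le_of_le_one_right (abs_nonneg _) ht2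
    calc |q| = |α + β * t ^ 2 + (q - (α + β * t ^ 2))| := by congr 1; ring
      _ ≤ |α| + |β * t ^ 2| + |q - (α + β * t ^ 2)| := abs_add_three _ _ _
      _ ≤ _ := add_le_add (add_le_add le_rfl h_b) (hq.trans (mul_le_of_le_one_right hC ht3))
  have e : q * p - (α + α / 2 * t + (α / 12 + β) * t ^ 2) =
      q * (p - (1 + t / 2 + t ^ 2 / 12)) + (q - (α + β * t ^ 2)) * (1 + t / 2 + t ^ 2 / 12) +
        β * (t ^ 3 * (1 / 2 + t / 12)) := by ring
  rw [e]
  refine (abs_add_three _ _ _).trans ?_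
  rw [abs_mul, abs_mul, abs_mul, abs_of_pos (a := t ^ 3 * (1 / 2 + t / 12)) (by positivity)]
  calc _ ≤ (|α| + |β| + C) * t ^ 3 + C * t ^ 3 * 2 + |β| * (t ^ 3 * 1) := by
        gcongr; linarith
    _ = _ := by ring

/-- Small-`t` expansion of the exponential sum with coefficients `S_k(m)^2`. -/
lemma Sk_sq_expansion {k : ℕ} (hk : 5 ≤ k) : ∃ C : ℝ, ∀ t : ℝ, 0 < t → t ≤ 1 →
    |t ^ ((k : ℝ) + 1) * (∑' m : ℕ, (Sk k ((m : ℝ) + 1) : ℝ) ^ 2 * Real.exp (-((m : ℝ) + 1) * t)) -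
      2 * (2 * π) ^ (k - 1) * (besselInt (k + 2) + besselInt (k + 2) / 2 * t +
        (besselInt (k + 2) / 12 + mixedSum k / oddSum k * besselInt k / (4 * π ^ 2)) * t ^ 2)| ≤
      C * t ^ 3 := by
  obtain ⟨C, hC0, hC⟩ := thetaInt_asymp hk
  set α := besselInt (k + 2)
  set β := mixedSum k / oddSum k * besselInt k
  set Cq := C + π
  refine ⟨2 * (2 * π) ^ (k - 1) * ((|α| + |β / (4 * π ^ 2)| + Cq) + 2 * Cq +
    |β / (4 * π ^ 2)|) + (Sk k 0 : ℝ) ^ 2, fun t ht ht1 => ?_⟩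
  set y := t / (2 * π) with hyt
  have hy : 0 < y := by positivity
  have hpi := Real.pi_gt_three
  have hyle : y ≤ t := by rw [hyt]; apply div_le_self ht.le; linarith
  have hy1 : y ≤ 1 := hyle.trans ht1
  have ht' : t = 2 * π * y := by rw [hyt]; field_simp
  have hq : |thetaInt k y * y ^ (k + 1) - (α + β / (4 * π ^ 2) * t ^ 2)| ≤ Cq * t ^ 3 := by
    have h := mul_le_mul_of_nonneg_right (hC y hy hy1) (show 0 ≤ y ^ (k + 1) by positivity)
    nth_rewrite 1 [← abs_of_pos (show 0 < y ^ (k + 1) by positivity)] at h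
    rw [← abs_mul] at h
    have e1 : y * (y ^ (k + 2))⁻¹ * y ^ (k + 1) = 1 := by field_simp; ring
    have e2 : y * (y ^ k)⁻¹ * y ^ (k + 1) = y ^ 2 := by field_simp; ring
    have e3 : y * (y ^ (k - 1))⁻¹ * y ^ (k + 1) = y ^ 3 := by
      have : y ^ (k + 1) = y ^ (k - 1) * y ^ 2 := by rw [← pow_add]; congr 1; omega
      rw [this]; field_simp
    have e4 : π / y * y ^ (k + 1) = π * y ^ k := by field_simp; ring
    have e5 : (thetaInt k y - (π / y + besselInt (k + 2) * (y * (y ^ (k + 2))⁻¹) +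
        mixedSum k / oddSum k * (besselInt k * (y * (y ^ k)⁻¹)))) * y ^ (k + 1) =
        thetaInt k y * y ^ (k + 1) - (α + β * y ^ 2) - π * y ^ k := by
      rw [← e4, ← e2]
      linear_combination (-α) * e1
    rw [e5, mul_assoc C, e3] at h
    have e6 : β / (4 * π ^ 2) * t ^ 2 = β * y ^ 2 := by rw [ht']; field_simp; ring
    rw [e6]
    have hk3 : π * y ^ k ≤ π * y ^ 3 := by
      gcongr π * ?_
      exact pow_le_pow_of_le_one hy.le hy1 (by omega)
    have h0 : 0 ≤ π * y ^ k := by positivity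
    calc _ = |(thetaInt k y * y ^ (k + 1) - (α + β * y ^ 2) - π * y ^ k) + π * y ^ k| := by
          congr 1; ring
      _ ≤ C * y ^ 3 + π * y ^ 3 := by
          refine (abs_add_le _ _).trans (add_le_add h ?_)
          rwa [abs_of_nonneg h0]
      _ = Cq * y ^ 3 := by ring
      _ ≤ _ := by gcongr
  have hprod := mul_approx (by positivity) ht ht1 (div_one_sub_exp_neg_approx ht ht1) hq
  have hS := hasSum_Sk_sq hy k
  have hexp : Real.exp (-2 * π * y) = Real.exp (-t) := by congr 1; rw [ht']; ring
  rw [hexp, ← hasSum_nat_add_iff' 1] at hS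
  have hterm : ∀ m : ℕ, (Sk k ((m : ℝ) + 1) : ℝ) ^ 2 * Real.exp (-((m : ℝ) + 1) * t) =
      (Sk k ((m + 1 : ℕ) : ℝ) : ℝ) ^ 2 * Real.exp (-t) ^ (m + 1) := by
    intro m
    rw [← Real.exp_nat_mul]; push_cast; congr 2; ring
  simp only [hterm]
  rw [hS.tsum_eq]
  simp only [Finset.range_one, Finset.sum_singleton, Nat.cast_zero, pow_zero, mul_one]
  have hu : 0 < 1 - Real.exp (-t) := by
    have : Real.exp (-t) < 1 := Real.exp_lt_one_iff.2 (by linarith)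
    linarith
  rw [show (k : ℝ) + 1 = ((k + 1 : ℕ) : ℝ) by push_cast; rfl, Real.rpow_natCast]
  have hmain : t ^ (k + 1) * (y / π * thetaInt k y / (1 - Real.exp (-t)) - (Sk k 0 : ℝ) ^ 2) =
      2 * (2 * π) ^ (k - 1) * (thetaInt k y * y ^ (k + 1) * (t / (1 - Real.exp (-t)))) -
        t ^ (k + 1) * (Sk k 0 : ℝ) ^ 2 := by
    have e1 : t ^ (k + 1) = (2 * π) ^ (k - 1) * (2 * π) ^ 2 * y ^ (k + 1) := by
      rw [ht', mul_pow, ← pow_add]; congr 2; omega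
    have e2 : t ^ (k + 1) * (y / π * thetaInt k y / (1 - Real.exp (-t))) =
      2 * (2 * π) ^ (k - 1) * (thetaInt k y * y ^ (k + 1) * (t / (1 - Real.exp (-t)))) := by
      rw [e1]
      generalize 1 - Real.exp (-t) = u at *
      rw [ht']; field_simp
    rw [mul_sub, e2]
  rw [hmain]
  set c := 2 * (2 * π) ^ (k - 1)
  have hc : 0 ≤ c := by positivity
  have ht4 : t ^ (k + 1) ≤ t ^ 3 := pow_le_pow_of_le_one ht.le ht1 (by omega)
  have h6 := mul_le_mul_of_nonneg_left hprod hc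
  nth_rewrite 1 [← abs_of_nonneg hc] at h6
  rw [← abs_mul] at h6
  calc _ = |c * (thetaInt k y * y ^ (k + 1) * (t / (1 - Real.exp (-t))) -
        (α + α / 2 * t + (α / 12 + β / (4 * π ^ 2)) * t ^ 2)) -
          t ^ (k + 1) * (Sk k 0 : ℝ) ^ 2| := by
        congr 1; ring
    _ ≤ _ := abs_sub _ _
    _ ≤ c * (((|α| + |β / (4 * π ^ 2)| + Cq) + 2 * Cq + |β / (4 * π ^ 2)|) * t ^ 3) +
        t ^ 3 * (Sk k 0 : ℝ) ^ 2 := by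
        gcongr
        rw [abs_of_nonneg (by positivity)]; gcongr
    _ = _ := by ring

end LatticeDiscrepancy

namespace LatticeDiscrepancy

lemma sqrt_mul_norm_jacobiTheta {s : ℝ} (hs : 0 < s) :
    √s * ‖jacobiTheta (s * Complex.I)‖ = ‖jacobiTheta ((s⁻¹ : ℝ) * Complex.I)‖ := by
  have h := thetaNorm_neg_inv 1 (τ := s * Complex.I) (by simpa using hs)
  have e : (-(s * Complex.I))⁻¹ = ((s⁻¹ : ℝ) : ℂ) * Complex.I := by
    have : (s : ℂ) ≠ 0 := by exact_mod_cast hs.ne'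
    push_cast
    rw [inv_eq_iff_eq_inv, mul_inv, inv_inv, Complex.inv_I]; ring
  unfold thetaNorm at h
  rw [e] at h
  have i1 : ((s : ℂ) * Complex.I).im = s := by simp
  have i2 : (((s⁻¹ : ℝ) : ℂ) * Complex.I).im = s⁻¹ := by simp
  rw [i1, i2, pow_one, pow_one, Real.sqrt_inv] at h
  have hs' : 0 < √s := Real.sqrt_pos.2 hs
  refine (pow_left_inj₀ (by positivity) (by positivity) two_ne_zero).1 ?_
  generalize jacobiTheta ((s⁻¹ : ℝ) * Complex.I) = b at h ⊢
  generalize jacobiTheta (s * Complex.I) = a at h ⊢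
  field_simp at h
  rw [mul_pow, h]

lemma theta_pow_approx (k : ℕ) : ∃ C : ℝ, 0 ≤ C ∧ ∀ t : ℝ, 0 < t → t ≤ 1 →
    |√(t / π) ^ k * ‖jacobiTheta ((t / π : ℝ) * Complex.I)‖ ^ k - 1| ≤ C * t ^ 3 := by
  refine ⟨4 * k * 5 ^ (k - 1) * 6, by positivity, fun t ht ht1 => ?_⟩
  have hpi := Real.pi_gt_three
  rw [← mul_pow, sqrt_mul_norm_jacobiTheta (by positivity)]
  set v := (t / π)⁻¹ with hv
  have hv3 : 3 ≤ v := by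
    rw [hv, inv_div, le_div_iff₀ ht]; nlinarith
  have him : ((v : ℂ) * Complex.I).im = v := by simp
  have h := norm_jacobiTheta_sub_one_le (τ := (v : ℂ) * Complex.I) (by rw [him]; linarith)
  rw [him] at h
  have hx : t⁻¹ ≤ π * v := by
    rw [hv, inv_div, ← mul_div_assoc, inv_eq_one_div]
    gcongr; nlinarith
  have ht1' : 1 ≤ t⁻¹ := (one_le_inv₀ ht).2 ht1
  have hE : Real.exp (-π * v) ≤ 6 * t ^ 3 := by
    have h3 := Real.pow_div_factorial_le_exp (x := π * v) (by positivity) 3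
    have : (t⁻¹) ^ 3 / 6 ≤ Real.exp (π * v) := by
      refine le_trans ?_ h3
      rw [show ((Nat.factorial 3 : ℕ) : ℝ) = 6 by norm_num [Nat.factorial]]
      gcongr
    rw [neg_mul, Real.exp_neg]
    refine (inv_anti₀ (by positivity) this).trans_eq ?_
    field_simp
  have hE2 : Real.exp (-π * v) ≤ 1 / 2 := by
    have := Real.add_one_le_exp (π * v)
    rw [neg_mul, Real.exp_neg, inv_eq_one_div]
    gcongr; nlinarith
  have hd : ‖jacobiTheta (v * Complex.I) - 1‖ ≤ 4 * Real.exp (-π * v) := by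
    refine h.trans ?_
    gcongr
    rw [div_le_iff₀] <;> linarith
  have hd2 : |‖jacobiTheta (v * Complex.I)‖ - 1| ≤ 4 * Real.exp (-π * v) := by
    have := abs_norm_sub_norm_le (jacobiTheta (v * Complex.I)) 1
    rw [norm_one] at this
    exact this.trans hd
  have hm : max |‖jacobiTheta (v * Complex.I)‖| |(1 : ℝ)| ≤ 5 := by
    rw [abs_norm, abs_one]
    have := (abs_le.1 hd2).2
    exact max_le (by linarith) (by norm_num)
  have hp := abs_pow_sub_pow_le ‖jacobiTheta (v * Complex.I)‖ 1 k
  rw [one_pow] at hp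
  calc _ ≤ _ := hp
    _ ≤ (4 * (6 * t ^ 3)) * k * 5 ^ (k - 1) := by
      gcongr
      exact hd2.trans (by gcongr)
    _ = _ := by ring

lemma tsum_exp_pow_nsq {t : ℝ} (ht : 0 < t) (k : ℕ) :
    ∑' v : Fin k → ℤ, Real.exp (-t) ^ nsq v = ‖jacobiTheta ((t / π : ℝ) * Complex.I)‖ ^ k := by
  have h : ‖(Real.exp (-t) : ℂ)‖ < 1 := by
    rw [Complex.norm_real, Real.norm_of_nonneg (Real.exp_pos _).le]
    exact Real.exp_lt_one_iff.2 (by linarith)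
  have h2 := (summable_hasSum_th_pow h k).2.tsum_eq
  have e : jacobiTheta ((t / π : ℝ) * Complex.I) = th (Real.exp (-t) : ℂ) := by
    rw [jacobiTheta_eq_th]
    congr 1
    push_cast
    congr 1
    have : (π : ℂ) ≠ 0 := by exact_mod_cast Real.pi_ne_zero
    field_simp
    rw [Complex.I_sq]; ring
  rw [e, ← norm_pow, ← h2]
  simp only [← Complex.ofReal_pow]
  rw [← Complex.ofReal_tsum, Complex.norm_real, Real.norm_of_nonneg]
  exact tsum_nonneg fun v => by positivity

/-- Small-`t` expansion of the exponential sum with coefficients `S_k(m)`. -/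
lemma Sk_expansion {k : ℕ} (hk : 5 ≤ k) : ∃ C : ℝ, ∀ t : ℝ, 0 < t → t ≤ 1 →
    |t ^ ((k : ℝ) / 2 + 1) * (∑' m : ℕ, (Sk k ((m : ℝ) + 1) : ℝ) * Real.exp (-((m : ℝ) + 1) * t)) -
      π ^ ((k : ℝ) / 2) * (1 + 1 / 2 * t + 1 / 12 * t ^ 2)| ≤ C * t ^ 3 := by
  obtain ⟨C, hC0, hC⟩ := theta_pow_approx k
  refine ⟨π ^ ((k : ℝ) / 2) * ((|1| + |0| + C) + 2 * C + |0|) + (Sk k 0 : ℝ), fun t ht ht1 => ?_⟩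
  have hprod := mul_approx (α := 1) (β := 0) hC0 ht ht1 (div_one_sub_exp_neg_approx ht ht1)
    (by rw [zero_mul, add_zero]; exact hC t ht ht1)
  have hr1 : Real.exp (-t) < 1 := Real.exp_lt_one_iff.2 (by linarith)
  have hS := Sk_mul_pow_hasSum k (Real.exp_pos (-t)) hr1
  rw [← hasSum_nat_add_iff' 1, tsum_exp_pow_nsq ht] at hS
  have hterm : ∀ m : ℕ, (Sk k ((m : ℝ) + 1) : ℝ) * Real.exp (-((m : ℝ) + 1) * t) =
      (Sk k ((m + 1 : ℕ) : ℝ) : ℝ) * Real.exp (-t) ^ (m + 1) := by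
    intro m
    rw [← Real.exp_nat_mul]; push_cast; congr 2; ring
  simp only [hterm]
  rw [hS.tsum_eq]
  simp only [Finset.range_one, Finset.sum_singleton, Nat.cast_zero, pow_zero, mul_one]
  have hpow : ∀ x : ℝ, 0 < x → √x ^ k = x ^ ((k : ℝ) / 2) := fun x hx => by
    rw [Real.sqrt_eq_rpow, ← Real.rpow_natCast, ← Real.rpow_mul hx.le]; congr 1; ring
  set J := ‖jacobiTheta ((t / π : ℝ) * Complex.I)‖ ^ k
  set u := 1 - Real.exp (-t)
  have hu : 0 < u := by simp only [u]; linarith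
  rw [hpow _ (by positivity), Real.div_rpow ht.le Real.pi_pos.le] at hprod
  have hc : 0 < π ^ ((k : ℝ) / 2) := by positivity
  have hmain : t ^ ((k : ℝ) / 2 + 1) * (J / u - (Sk k 0 : ℝ)) =
      π ^ ((k : ℝ) / 2) * (t ^ ((k : ℝ) / 2) / π ^ ((k : ℝ) / 2) * J * (t / u)) -
        t ^ ((k : ℝ) / 2 + 1) * (Sk k 0 : ℝ) := by
    rw [Real.rpow_add_one ht.ne']
    field_simp
  rw [hmain]
  set c := π ^ ((k : ℝ) / 2)
  have ht4 : t ^ ((k : ℝ) / 2 + 1) ≤ t ^ 3 := by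
    rw [← Real.rpow_natCast t 3]
    apply Real.rpow_le_rpow_of_exponent_ge ht ht1
    have : (5 : ℝ) ≤ k := by exact_mod_cast hk
    push_cast; linarith
  have h6 := mul_le_mul_of_nonneg_left hprod hc.le
  nth_rewrite 1 [← abs_of_nonneg hc.le] at h6
  rw [← abs_mul] at h6
  calc _ = |c * (t ^ ((k : ℝ) / 2) / c * J * (t / u) -
        (1 + 1 / 2 * t + (1 / 12 + 0) * t ^ 2)) - t ^ ((k : ℝ) / 2 + 1) * (Sk k 0 : ℝ)| := by
        congr 1; ring
    _ ≤ _ := abs_sub _ _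
    _ ≤ c * (((|1| + |0| + C) + 2 * C + |0|) * t ^ 3) + t ^ 3 * (Sk k 0 : ℝ) := by
        refine add_le_add h6 ?_
        rw [abs_of_nonneg (by positivity)]; gcongr
    _ = _ := by ring

end LatticeDiscrepancy

namespace LatticeDiscrepancy
open MeasureTheory Set Filter Topology Asymptotics

lemma summable_div_rpow {a : ℕ → ℝ} (ha : ∀ m, 0 ≤ a m) {p C σ : ℝ}
    (hbound : ∀ m, a m ≤ C * ((m : ℝ) + 1) ^ p) (hσ : p + 1 < σ) :
    Summable fun m : ℕ => a m / ((m : ℝ) + 1) ^ σ := by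
  have h : Summable fun m : ℕ => C * ((m + 1 : ℕ) : ℝ) ^ (p - σ) :=
    ((summable_nat_add_iff 1).2 (Real.summable_nat_rpow.2 (by linarith))).mul_left C
  refine h.of_nonneg_of_le (fun m => div_nonneg (ha m) (by positivity)) fun m => ?_
  rw [div_le_iff₀ (by positivity)]
  push_cast
  rw [mul_assoc, ← Real.rpow_add (by positivity), sub_add_cancel]
  exact hbound m

lemma summable_mul_exp {a : ℕ → ℝ} (ha : ∀ m, 0 ≤ a m) {p C : ℝ}
    (hbound : ∀ m, a m ≤ C * ((m : ℝ) + 1) ^ p) {t : ℝ} (ht : 0 < t) :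
    Summable fun m : ℕ => a m * Real.exp (-((m : ℝ) + 1) * t) := by
  have h := ((summable_nat_add_iff 1).2
    (Real.summable_pow_mul_exp_neg_nat_mul ⌈p⌉₊ ht)).mul_left C
  have hC : 0 ≤ C := by simpa using (ha 0).trans (hbound 0)
  refine h.of_nonneg_of_le (fun m => mul_nonneg (ha m) (Real.exp_pos _).le) fun m => ?_
  rw [← mul_assoc]
  push_cast
  have e : -((m : ℝ) + 1) * t = -t * (m + 1) := by ring
  rw [e]
  gcongr
  refine (hbound m).trans ?_
  gcongr
  rw [← Real.rpow_natCast]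
  exact Real.rpow_le_rpow_of_exponent_le (by linarith [m.cast_nonneg (α := ℝ)]) (Nat.le_ceil p)

lemma expSum_antitoneOn {a : ℕ → ℝ} (ha : ∀ m, 0 ≤ a m)
    (hs : ∀ t : ℝ, 0 < t → Summable fun m : ℕ => a m * Real.exp (-((m : ℝ) + 1) * t)) :
    AntitoneOn (fun t : ℝ => ∑' m : ℕ, a m * Real.exp (-((m : ℝ) + 1) * t)) (Ioi 0) := by
  intro x hx y hy hxy
  refine (hs y hy).tsum_le_tsum (fun m => ?_) (hs x hx)
  gcongr ?_ * ?_
  · exact ha m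
  · apply Real.exp_le_exp.2
    nlinarith [m.cast_nonneg (α := ℝ)]

lemma expSum_le {a : ℕ → ℝ} (ha : ∀ m, 0 ≤ a m)
    (hs : ∀ t : ℝ, 0 < t → Summable fun m : ℕ => a m * Real.exp (-((m : ℝ) + 1) * t))
    {t : ℝ} (ht : 1 ≤ t) :
    ∑' m : ℕ, a m * Real.exp (-((m : ℝ) + 1) * t) ≤
      (∑' m : ℕ, a m * Real.exp (-((m : ℝ) + 1) * 1)) * Real.exp 1 * Real.exp (-1 * t) := by
  rw [mul_assoc, ← Real.exp_add, ← tsum_mul_right]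
  refine (hs t (by linarith)).tsum_le_tsum (fun m => ?_) ((hs 1 one_pos).mul_right _)
  rw [mul_assoc, ← Real.exp_add]
  gcongr ?_ * ?_
  · exact ha m
  · apply Real.exp_le_exp.2
    nlinarith [m.cast_nonneg (α := ℝ)]

lemma differentiable_dslope_inv_Gamma (c : ℂ) :
    Differentiable ℂ (dslope (fun w => (Complex.Gamma w)⁻¹) c) := by
  have := (Complex.differentiableOn_dslope (f := fun w => (Complex.Gamma w)⁻¹)
    (s := univ) (c := c) univ_mem).2 Complex.differentiable_one_div_Gamma.differentiableOn
  exact differentiableOn_univ.1 this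

lemma inv_Gamma_mul_div {e : ℝ} {w : ℂ} (A : ℝ) (hw : w ≠ e) :
    (Complex.Gamma w)⁻¹ * (A * (1 / (w + (-e : ℝ)))) =
      A * dslope (fun w => (Complex.Gamma w)⁻¹) (e : ℂ) w +
        ((A / Real.Gamma e : ℝ) : ℂ) / (w - e) := by
  rw [dslope_of_ne _ hw, slope_def_field, Complex.Gamma_ofReal]
  have : w - e ≠ 0 := sub_ne_zero.2 hw
  push_cast
  rw [← sub_eq_add_neg]
  field_simp
  ring

/-- The polar part `A t^{-e} + B t^{1-e} + D t^{2-e}`, cut off to `(0, 1]`. -/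
noncomputable def polarPart (e A B D : ℝ) (t : ℝ) : ℂ :=
  (A : ℂ) • indicator (Ioc 0 1) (fun t : ℝ => (t : ℂ) ^ ((-e : ℝ) : ℂ)) t +
    (B : ℂ) • indicator (Ioc 0 1) (fun t : ℝ => (t : ℂ) ^ ((-(e - 1) : ℝ) : ℂ)) t +
    (D : ℂ) • indicator (Ioc 0 1) (fun t : ℝ => (t : ℂ) ^ ((-(e - 2) : ℝ) : ℂ)) t

lemma hasMellin_polarPart {e A B D : ℝ} {w : ℂ} (hw : e < w.re) :
    HasMellin (polarPart e A B D) w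
      (A * (1 / (w + (-e : ℝ))) + B * (1 / (w + (-(e - 1) : ℝ))) +
        D * (1 / (w + (-(e - 2) : ℝ)))) := by
  have h (x : ℝ) (hx : x ≤ e) (A : ℂ) := by
    have h0 := hasMellin_cpow_Ioc ((-x : ℝ) : ℂ) (s := w) (by rw [Complex.ofReal_re]; linarith)
    have h1 := hasMellin_const_smul h0.1 A
    rw [h0.2] at h1
    exact h1
  have h1 := h e le_rfl A
  have h2 := h (e - 1) (by linarith) B
  have h3 := h (e - 2) (by linarith) D
  have h4 := hasMellin_add h1.1 h2.1
  have h5 := hasMellin_add h4.1 h3.1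
  rw [h4.2, h1.2, h2.2, h3.2] at h5
  exact h5

lemma polarPart_of_mem {e A B D t : ℝ} (ht : 0 < t) (ht1 : t ≤ 1) :
    polarPart e A B D t = ((t ^ (-e) * (A + B * t + D * t ^ 2) : ℝ) : ℂ) := by
  have hm : t ∈ Ioc (0 : ℝ) 1 := ⟨ht, ht1⟩
  unfold polarPart
  rw [indicator_of_mem hm, indicator_of_mem hm, indicator_of_mem hm,
    ← Complex.ofReal_cpow ht.le, ← Complex.ofReal_cpow ht.le, ← Complex.ofReal_cpow ht.le]
  simp only [smul_eq_mul]
  norm_cast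
  rw [show -(e - 1) = -e + 1 by ring, show -(e - 2) = -e + (2 : ℕ) by push_cast; ring,
    Real.rpow_add_one ht.ne', Real.rpow_add_natCast ht.ne']
  ring

lemma polarPart_of_one_lt {e A B D t : ℝ} (ht1 : 1 < t) : polarPart e A B D t = 0 := by
  have hm : t ∉ Ioc (0 : ℝ) 1 := fun h => absurd h.2 (not_le.2 ht1)
  unfold polarPart
  rw [indicator_of_notMem hm, indicator_of_notMem hm, indicator_of_notMem hm]
  simp

lemma integrableOn_polarPart {e A B D : ℝ} {K : Set ℝ} (hK : IsCompact K) (hK0 : K ⊆ Ioi 0) :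
    IntegrableOn (polarPart e A B D) K := by
  have h (x : ℝ) (A : ℂ) : IntegrableOn
      (fun t => A • indicator (Ioc 0 1) (fun t : ℝ => (t : ℂ) ^ (x : ℂ)) t) K := by
    refine Integrable.smul A (IntegrableOn.indicator ?_ measurableSet_Ioc)
    refine ContinuousOn.integrableOn_compact hK fun t ht => ?_
    refine ContinuousAt.continuousWithinAt ?_
    exact Complex.continuousAt_ofReal_cpow_const t x (Or.inr (hK0 ht).ne')
  exact ((h _ _).add (h _ _)).add (h _ _)

/-- Meromorphic continuation of a Dirichlet series with nonnegative coefficients from the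
small-`t` expansion of the associated exponential sum. -/
lemma dirichlet_continuation {a : ℕ → ℝ} (ha : ∀ m, 0 ≤ a m) {p e A B D C₀ C : ℝ}
    (hbound : ∀ m, a m ≤ C₀ * ((m : ℝ) + 1) ^ p) (hp : 0 ≤ p) (hpe : e ≤ p + 1)
    (hexp : ∀ t : ℝ, 0 < t → t ≤ 1 →
      |t ^ e * (∑' m : ℕ, a m * Real.exp (-((m : ℝ) + 1) * t)) - (A + B * t + D * t ^ 2)| ≤
        C * t ^ 3) :
    ∃ H : ℂ → ℂ, DifferentiableOn ℂ H {w | e - 3 < w.re} ∧ ∀ w : ℂ, p + 1 < w.re →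
      ∑' m : ℕ, (a m : ℂ) / ((m : ℂ) + 1) ^ w = H w + ((A / Real.Gamma e : ℝ) : ℂ) / (w - e) +
        ((B / Real.Gamma (e - 1) : ℝ) : ℂ) / (w - (e - 1 : ℝ)) +
        ((D / Real.Gamma (e - 2) : ℝ) : ℂ) / (w - (e - 2 : ℝ)) := by
  have hs : ∀ t : ℝ, 0 < t → Summable fun m : ℕ => a m * Real.exp (-((m : ℝ) + 1) * t) :=
    fun t ht => summable_mul_exp ha hbound ht
  set F : ℝ → ℝ := fun t => ∑' m : ℕ, a m * Real.exp (-((m : ℝ) + 1) * t) with hF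
  have hF0 : ∀ t, 0 ≤ F t := fun t => tsum_nonneg fun m => mul_nonneg (ha m) (Real.exp_pos _).le
  set Φ : ℝ → ℂ := fun t => (F t : ℂ) - polarPart e A B D t with hΦ
  have hloc : LocallyIntegrableOn Φ (Ioi 0) := by
    rw [locallyIntegrableOn_iff isOpen_Ioi.isLocallyClosed]
    intro K hK0 hK
    have h1 : IntegrableOn F K :=
      ((expSum_antitoneOn ha hs).mono hK0).integrableOn_isCompact hK
    exact (Integrable.ofReal h1).sub (integrableOn_polarPart hK hK0)
  have htop : Φ =O[atTop] fun t => Real.exp (-1 * t) := by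
    refine IsBigO.of_bound (F 1 * Real.exp 1) ?_
    filter_upwards [eventually_gt_atTop 1] with t ht
    rw [hΦ]
    simp only
    rw [polarPart_of_one_lt ht, sub_zero, Complex.norm_real, Real.norm_of_nonneg (hF0 t),
      Real.norm_of_nonneg (Real.exp_pos _).le]
    exact expSum_le ha hs ht.le
  have hbot : Φ =O[𝓝[>] 0] fun t => t ^ (-(e - 3)) := by
    refine IsBigO.of_bound C ?_
    filter_upwards [Ioc_mem_nhdsGT one_pos] with t ht
    rw [hΦ]
    simp only
    have ht0 := ht.1
    rw [polarPart_of_mem ht.1 ht.2, ← Complex.ofReal_sub, Complex.norm_real,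
      Real.norm_eq_abs, Real.norm_of_nonneg (Real.rpow_pos_of_pos ht0 _).le]
    have e1 : F t - t ^ (-e) * (A + B * t + D * t ^ 2) =
        t ^ (-e) * (t ^ e * F t - (A + B * t + D * t ^ 2)) := by
      rw [mul_sub, ← mul_assoc, ← Real.rpow_add ht0, neg_add_cancel, Real.rpow_zero, one_mul]
    rw [e1, abs_mul, abs_of_pos (Real.rpow_pos_of_pos ht0 _),
      show -(e - 3) = -e + (3 : ℕ) by push_cast; ring,
      Real.rpow_add_natCast ht0.ne']
    calc _ ≤ t ^ (-e) * (C * t ^ 3) := by gcongr; exact hexp t ht.1 ht.2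
      _ = _ := by ring
  refine ⟨fun w => (Complex.Gamma w)⁻¹ * mellin Φ w +
    (A * dslope (fun w => (Complex.Gamma w)⁻¹) (e : ℂ) w +
      B * dslope (fun w => (Complex.Gamma w)⁻¹) ((e - 1 : ℝ) : ℂ) w +
      D * dslope (fun w => (Complex.Gamma w)⁻¹) ((e - 2 : ℝ) : ℂ) w), ?_, fun w hw => ?_⟩
  · refine DifferentiableOn.add (DifferentiableOn.mul
      Complex.differentiable_one_div_Gamma.differentiableOn fun w hw => ?_) ?_
    · exact (mellin_differentiableAt_of_isBigO_rpow_exp one_pos hloc htop hbot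
        hw).differentiableWithinAt
    · exact ((((differentiable_dslope_inv_Gamma _).const_mul _).add
        ((differentiable_dslope_inv_Gamma _).const_mul _)).add
        ((differentiable_dslope_inv_Gamma _).const_mul _)).differentiableOn
  · have hw0 : 0 < w.re := by linarith
    have hG : Complex.Gamma w ≠ 0 := Complex.Gamma_ne_zero_of_re_pos hw0
    have hpol := hasMellin_polarPart (e := e) (A := A) (B := B) (D := D) (w := w) (by linarith)
    have hconv : MellinConvergent Φ w :=
      mellinConvergent_of_isBigO_rpow_exp one_pos hloc htop hbot (by linarith)
    have hadd := (hasMellin_add hconv hpol.1).2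
    have hfun : (fun t => Φ t + polarPart e A B D t) = fun t => (F t : ℂ) := by
      ext t; simp [hΦ]
    rw [hfun, hpol.2] at hadd
    have hsum := hasSum_mellin (a := fun m => (a m : ℂ)) (p := fun m : ℕ => (m : ℝ) + 1)
      (F := fun t => (F t : ℂ)) (s := w) (fun m => Or.inr (by positivity)) hw0
      (fun t ht => by
        have := Complex.hasSum_ofReal.2 (hs t ht).hasSum
        simpa only [Complex.ofReal_mul] using this)
      (by
        refine (summable_div_rpow ha hbound hw).congr fun m => ?_
        rw [Complex.norm_real, Real.norm_of_nonneg (ha m)])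
    have hsum2 := hsum.mul_left (Complex.Gamma w)⁻¹
    have hterm : ∀ m : ℕ, (Complex.Gamma w)⁻¹ * (Complex.Gamma w * (a m : ℂ) /
        (((m : ℝ) + 1 : ℝ) : ℂ) ^ w) = (a m : ℂ) / ((m : ℂ) + 1) ^ w := fun m => by
      push_cast; rw [mul_div_assoc, inv_mul_cancel_left₀ hG]
    simp only [hterm] at hsum2
    have hne : ∀ x : ℝ, x ≤ e → w ≠ x := fun x hx h => by
      rw [h, Complex.ofReal_re] at hw; linarith
    rw [hsum2.tsum_eq, hadd]
    simp only [mul_add]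
    rw [inv_Gamma_mul_div A (hne e le_rfl), inv_Gamma_mul_div B (hne (e - 1) (by linarith)),
      inv_Gamma_mul_div D (hne (e - 2) (by linarith))]
    ring

end LatticeDiscrepancy

namespace LatticeDiscrepancy
open MeasureTheory Filter Topology

lemma hasDerivAt_mul_inv_sqrt_pow (j : ℕ) (x : ℝ) :
    HasDerivAt (fun x : ℝ => x * (√(x ^ 2 + 1 ^ 2) ^ j)⁻¹)
      (j * (√(x ^ 2 + 1 ^ 2) ^ (j + 2))⁻¹ - (j - 1) * (√(x ^ 2 + 1 ^ 2) ^ j)⁻¹) x := by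
  have h0 : 0 < x ^ 2 + 1 ^ 2 := by positivity
  have h1 : HasDerivAt (fun x : ℝ => √(x ^ 2 + 1 ^ 2)) (x / √(x ^ 2 + 1 ^ 2)) x := by
    have := ((hasDerivAt_pow 2 x).add_const ((1 : ℝ) ^ 2)).sqrt h0.ne'
    convert this using 1
    field_simp
    norm_num
    ring
  have hs : 0 < √(x ^ 2 + 1 ^ 2) := Real.sqrt_pos.2 h0
  have h2 := (hasDerivAt_id x).mul ((h1.pow j).inv (pow_pos hs j).ne')
  refine HasDerivAt.congr_deriv (f := fun x : ℝ => x * (√(x ^ 2 + 1 ^ 2) ^ j)⁻¹) h2 ?_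
  have hsq : √(x ^ 2 + 1 ^ 2) ^ 2 = x ^ 2 + 1 ^ 2 := Real.sq_sqrt h0.le
  simp only [id, Pi.inv_apply, Pi.pow_apply]
  set s := √(x ^ 2 + 1 ^ 2)
  have hx : x ^ 2 = s ^ 2 - 1 := by rw [hsq]; ring
  rcases j with _ | j
  · simp
  · field_simp
    simp only [Nat.add_sub_cancel]
    push_cast
    linear_combination (-((j : ℝ) + 1)) * s ^ (j * 2 + 3) * hx

lemma besselInt_two : besselInt 2 = π := by
  have h := integral_inv_sq_add_sq one_pos
  rw [div_one] at h
  rw [← h]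
  unfold besselInt
  congr 1 with x
  rw [Real.sq_sqrt (by positivity)]

lemma tendsto_inv_sqrt_atTop : Tendsto (fun x : ℝ => (√(x ^ 2 + 1 ^ 2))⁻¹) atTop (𝓝 0) := by
  refine squeeze_zero' (Eventually.of_forall fun x => by positivity) ?_ tendsto_inv_atTop_zero
  filter_upwards [eventually_gt_atTop 0] with x hx
  gcongr
  exact Real.le_sqrt_of_sq_le (by linarith)

lemma besselInt_three : besselInt 3 = 2 := by
  have h1 (x : ℝ) : HasDerivAt (fun x : ℝ => x * (√(x ^ 2 + 1 ^ 2) ^ 1)⁻¹)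
      (√(x ^ 2 + 1 ^ 2) ^ 3)⁻¹ x := by
    convert hasDerivAt_mul_inv_sqrt_pow 1 x using 1
    simp
  have htop : Tendsto (fun x : ℝ => x * (√(x ^ 2 + 1 ^ 2) ^ 1)⁻¹) atTop (𝓝 1) := by
    have h2 : Tendsto (fun x : ℝ => √(1 - (√(x ^ 2 + 1 ^ 2))⁻¹ ^ 2)) atTop (𝓝 1) := by
      have := ((tendsto_inv_sqrt_atTop.pow 2).const_sub 1).sqrt
      simpa using this
    refine h2.congr' ?_
    filter_upwards [eventually_gt_atTop 0] with x hx
    rw [pow_one, Real.sqrt_eq_iff_eq_sq (by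
      rw [sub_nonneg, inv_pow, Real.sq_sqrt (by positivity)]
      exact inv_le_one_of_one_le₀ (by nlinarith)) (by positivity)]
    rw [mul_pow, inv_pow, Real.sq_sqrt (by positivity)]
    field_simp
    ring
  have hbot : Tendsto (fun x : ℝ => x * (√(x ^ 2 + 1 ^ 2) ^ 1)⁻¹) atBot (𝓝 (-1)) := by
    have := (htop.comp tendsto_neg_atBot_atTop).neg
    refine this.congr fun x => ?_
    simp
  have := integral_of_hasDerivAt_of_tendsto h1 (integrable_inv_sqrt_pow one_pos (by norm_num))
    hbot htop
  unfold besselInt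
  rw [this]; norm_num

lemma besselInt_add_two {j : ℕ} (hj : 2 ≤ j) :
    (j : ℝ) * besselInt (j + 2) = (j - 1) * besselInt j := by
  have htop : Tendsto (fun x : ℝ => x * (√(x ^ 2 + 1 ^ 2) ^ j)⁻¹) atTop (𝓝 0) := by
    refine squeeze_zero' (g := fun x => (√(x ^ 2 + 1 ^ 2))⁻¹) ?_ ?_ tendsto_inv_sqrt_atTop
    · filter_upwards [eventually_gt_atTop 0] with x hx
      positivity
    · filter_upwards [eventually_gt_atTop 0] with x hx
      set s := √(x ^ 2 + 1 ^ 2)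
      have hx : x ≤ s := Real.le_sqrt_of_sq_le (by linarith)
      have h1 : 1 ≤ s := Real.le_sqrt_of_sq_le (by nlinarith)
      calc x * (s ^ j)⁻¹ ≤ s * (s ^ 2)⁻¹ := by gcongr
        _ = s⁻¹ := by field_simp
  have hbot : Tendsto (fun x : ℝ => x * (√(x ^ 2 + 1 ^ 2) ^ j)⁻¹) atBot (𝓝 0) := by
    have := (htop.comp tendsto_neg_atBot_atTop).neg
    rw [neg_zero] at this
    refine this.congr fun x => ?_
    simp
  have i1 := (integrable_inv_sqrt_pow one_pos (j := j + 2) (by omega)).const_mul (j : ℝ)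
  have i2 := (integrable_inv_sqrt_pow one_pos hj).const_mul ((j : ℝ) - 1)
  have := integral_of_hasDerivAt_of_tendsto (hasDerivAt_mul_inv_sqrt_pow j) (i1.sub i2) hbot htop
  rw [integral_sub i1 i2, integral_const_mul, integral_const_mul, sub_zero] at this
  unfold besselInt
  linarith

lemma besselInt_mul_Gamma_sq (j : ℕ) (hj : 2 ≤ j) :
    besselInt j * Real.Gamma ((j : ℝ) / 2) ^ 2 * 2 ^ j = 4 * π * Real.Gamma ((j : ℝ) - 1) := by
  induction j using Nat.strong_induction_on with
  | _ j ih =>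
    obtain rfl | rfl | h4 : j = 2 ∨ j = 3 ∨ 4 ≤ j := by omega
    · norm_num [besselInt_two]; ring
    · have h3 : Real.Gamma ((3 : ℕ) / 2 : ℝ) = √π / 2 := by
        rw [show ((3 : ℕ) / 2 : ℝ) = 1 / 2 + 1 by norm_num, Real.Gamma_add_one (by norm_num),
          Real.Gamma_one_half_eq]; ring
      rw [h3, besselInt_three, div_pow, Real.sq_sqrt Real.pi_pos.le]
      norm_num; ring
    · obtain ⟨i, rfl⟩ : ∃ i, j = i + 2 := ⟨j - 2, by omega⟩
      have hi := ih i (by omega) (by omega)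
      have hr := besselInt_add_two (j := i) (by omega)
      have hi0 : (2 : ℝ) ≤ i := by exact_mod_cast (by omega : 2 ≤ i)
      have g1 : Real.Gamma (((i + 2 : ℕ) : ℝ) / 2) = i / 2 * Real.Gamma ((i : ℝ) / 2) := by
        rw [← Real.Gamma_add_one (by linarith)]; congr 1; push_cast; ring
      have g2 : Real.Gamma (((i + 2 : ℕ) : ℝ) - 1) = i * ((i - 1) * Real.Gamma ((i : ℝ) - 1)) := by
        rw [← Real.Gamma_add_one (by linarith), sub_add_cancel, ← Real.Gamma_add_one (by linarith)]
        congr 1; push_cast; ring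
      rw [g1, g2, pow_add]
      linear_combination (i : ℝ) * Real.Gamma ((i : ℝ) / 2) ^ 2 * 2 ^ i * hr + i * (i - 1) * hi

lemma hasSum_rzeta {j : ℕ} (hj : 2 ≤ j) : HasSum (fun n : ℕ => ((n : ℝ) ^ j)⁻¹) (rzeta j) := by
  have hs : Summable (fun n : ℕ => ((n : ℝ) ^ j)⁻¹) := Real.summable_nat_pow_inv.2 (by omega)
  convert hs.hasSum
  unfold rzeta
  have := zeta_nat_eq_tsum_of_gt_one (k := j) (by omega)
  rw [Complex.ofReal_natCast, this]
  have e : ∀ n : ℕ, 1 / (n : ℂ) ^ j = (((n : ℝ) ^ j)⁻¹ : ℝ) := fun n => by push_cast; simp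
  rw [tsum_congr e, ← Complex.ofReal_tsum, Complex.ofReal_re]

lemma hasSum_inv_abs_pow {j : ℕ} (hj : 2 ≤ j) :
    HasSum (fun n : ℤ => (|(n : ℝ)| ^ j)⁻¹) (2 * rzeta j) := by
  have h := hasSum_rzeta hj
  have := HasSum.of_nat_of_neg (f := fun n : ℤ => (|(n : ℝ)| ^ j)⁻¹) (by simpa using h)
    (by simpa using h)
  rw [two_mul]
  simpa [show j ≠ 0 by omega] using this

lemma hasSum_even_inv_abs_pow {j : ℕ} (hj : 2 ≤ j) :
    HasSum (fun n : ℤ => if Even n then (|(n : ℝ)| ^ j)⁻¹ else 0) ((2 ^ j)⁻¹ * (2 * rzeta j)) := by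
  have hinj : Function.Injective fun n : ℤ => 2 * n := fun a b h => by simpa using h
  refine (hinj.hasSum_iff fun x hx => ?_).1 ?_
  · rw [if_neg]
    rintro ⟨r, rfl⟩
    exact hx ⟨r, by simp; ring⟩
  · refine ((hasSum_inv_abs_pow hj).mul_left _).congr_fun ?_ |> id
    intro n
    simp [abs_mul, mul_pow, mul_comm]

lemma oddSum_eq {j : ℕ} (hj : 2 ≤ j) : oddSum j = 2 * (1 - (2 ^ j)⁻¹) * rzeta j := by
  have h := (hasSum_inv_abs_pow hj).sub (hasSum_even_inv_abs_pow hj)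
  have h2 : HasSum (fun d : ℤ => if Odd d then (|(d : ℝ)| ^ j)⁻¹ else 0)
      (2 * rzeta j - (2 ^ j)⁻¹ * (2 * rzeta j)) := by
    refine h.congr_fun fun d => ?_
    rcases Int.even_or_odd d with hd | hd
    · rw [if_neg (by simpa using hd), if_pos hd, sub_self]
    · rw [if_pos hd, if_neg (by simpa using hd), sub_zero]
  rw [(hasSum_oddSum hj).unique h2]; ring

lemma hasSum_mul_of_nonneg {f g : ℤ → ℝ} {A B : ℝ} (hf : HasSum f A) (hg : HasSum g B)
    (hf0 : ∀ n, 0 ≤ f n) (hg0 : ∀ n, 0 ≤ g n) :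
    HasSum (fun p : ℤ × ℤ => f p.1 * g p.2) (A * B) :=
  hf.mul hg (hf.summable.mul_of_nonneg hg.summable hf0 hg0)

lemma mixedSum_eq {k : ℕ} (hk : 5 ≤ k) :
    mixedSum k = rzeta ((k - 2 : ℕ) : ℝ) * (π ^ 2 / 6) * (1 + 8 * (2 ^ k)⁻¹) := by
  have o1 := hasSum_oddSum (k := k - 2) (by omega)
  have o2 := hasSum_oddSum (k := 2) le_rfl
  have v1 := hasSum_even_inv_abs_pow (j := k - 2) (by omega)
  have v2 := hasSum_even_inv_abs_pow (j := 2) le_rfl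
  have m1 := hasSum_mul_of_nonneg o1 v2 (fun _ => by split_ifs <;> positivity)
    (fun _ => by split_ifs <;> positivity)
  have m2 := hasSum_mul_of_nonneg v1 o2 (fun _ => by split_ifs <;> positivity)
    (fun _ => by split_ifs <;> positivity)
  have h := (hasSum_mixedSum hk).unique <| (m1.add m2).congr_fun fun p => by
    have e1 := Int.not_even_iff_odd (n := p.1)
    have e2 := Int.not_even_iff_odd (n := p.2)
    simp only [Int.odd_add, ← e1, ← e2]
    by_cases h1 : Even p.1 <;> by_cases h2 : Even p.2 <;> simp [h1, h2]
  rw [h, oddSum_eq (by omega), oddSum_eq le_rfl]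
  have hz : rzeta ((2 : ℕ) : ℝ) = π ^ 2 / 6 := by
    unfold rzeta
    have := riemannZeta_two
    norm_num [this]
    norm_cast
  rw [hz]
  have : (2 : ℝ) ^ k = 2 ^ (k - 2) * 4 := by
    rw [show (4 : ℝ) = 2 ^ 2 by norm_num, ← pow_add]; congr 1; omega
  rw [this]
  field_simp
  ring

end LatticeDiscrepancy

namespace LatticeDiscrepancy

lemma Sk_succ_le (k m : ℕ) :
    (Sk k ((m : ℝ) + 1) : ℝ) ≤ 3 ^ k * 2 ^ ((k : ℝ) / 2) * ((m : ℝ) + 1) ^ ((k : ℝ) / 2) := by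
  have h := Sk_le k (m + 1)
  push_cast at h
  refine h.trans ?_
  rw [mul_assoc, ← Real.mul_rpow (by norm_num) (by positivity)]
  gcongr
  linarith [m.cast_nonneg (α := ℝ)]

lemma Sk_succ_sq_le (k m : ℕ) :
    (Sk k ((m : ℝ) + 1) : ℝ) ^ 2 ≤ (3 ^ k * 2 ^ ((k : ℝ) / 2)) ^ 2 * ((m : ℝ) + 1) ^ (k : ℝ) := by
  have e : ((m : ℝ) + 1) ^ (k : ℝ) = (((m : ℝ) + 1) ^ ((k : ℝ) / 2)) ^ 2 := by
    rw [← Real.rpow_natCast, ← Real.rpow_mul (by positivity)]; congr 1; push_cast; ring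
  rw [e, ← mul_pow]
  gcongr
  exact Sk_succ_le k m

lemma two_pi_pow {k : ℕ} (hk : 1 ≤ k) : 2 * (2 * π) ^ (k - 1) = 2 ^ k * π ^ k / π := by
  obtain ⟨j, rfl⟩ : ∃ j, k = j + 1 := ⟨k - 1, by omega⟩
  rw [Nat.add_sub_cancel, mul_pow]
  field_simp
  ring

lemma besselInt_eq {j : ℕ} (hj : 2 ≤ j) : besselInt j =
    4 * π * Real.Gamma ((j : ℝ) - 1) / (Real.Gamma ((j : ℝ) / 2) ^ 2 * 2 ^ j) := by
  have hj0 : (2 : ℝ) ≤ j := by exact_mod_cast hj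
  have h1 : 0 < Real.Gamma ((j : ℝ) / 2) := Real.Gamma_pos_of_pos (by linarith)
  rw [eq_div_iff (by positivity), ← besselInt_mul_Gamma_sq j hj]; ring

lemma pi_rpow_half_sq (k : ℕ) : (π ^ ((k : ℝ) / 2)) ^ 2 = π ^ k := by
  rw [← Real.rpow_natCast, ← Real.rpow_mul Real.pi_pos.le, ← Real.rpow_natCast]
  congr 1; push_cast; ring

lemma besselInt_add_two_eq {k : ℕ} (hk : 1 ≤ k) :
    2 * (2 * π) ^ (k - 1) * besselInt (k + 2) = Vk k ^ 2 * Real.Gamma ((k : ℝ) + 1) := by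
  have h1 : Real.Gamma ((k : ℝ) / 2 + 1) ≠ 0 := (Real.Gamma_pos_of_pos (by positivity)).ne'
  rw [two_pi_pow hk, besselInt_eq (by omega)]
  unfold Vk
  rw [div_pow, pi_rpow_half_sq]
  have e1 : ((k + 2 : ℕ) : ℝ) - 1 = k + 1 := by push_cast; ring
  have e2 : ((k + 2 : ℕ) : ℝ) / 2 = k / 2 + 1 := by push_cast; ring
  rw [e1, e2]
  field_simp
  ring

/-- The leading polar coefficients of the two Dirichlet series match. -/
lemma residue_first {k : ℕ} (hk : 1 ≤ k) :
    2 * (2 * π) ^ (k - 1) * besselInt (k + 2) / Real.Gamma ((k : ℝ) + 1) = Vk k ^ 2 := by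
  have h1 : Real.Gamma ((k : ℝ) + 1) ≠ 0 := (Real.Gamma_pos_of_pos (by positivity)).ne'
  rw [besselInt_add_two_eq hk, mul_div_cancel_right₀ _ h1]

lemma residue_second {k : ℕ} (hk : 1 ≤ k) :
    2 * (2 * π) ^ (k - 1) * (besselInt (k + 2) / 2) / Real.Gamma ((k : ℝ) + 1 - 1) =
      2 * Vk k * (π ^ ((k : ℝ) / 2) * (1 / 2) / Real.Gamma ((k : ℝ) / 2 + 1 - 1)) := by
  have hk0 : (0 : ℝ) < k := by exact_mod_cast hk
  have h1 : Real.Gamma (k : ℝ) ≠ 0 := (Real.Gamma_pos_of_pos hk0).ne'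
  have h2 : Real.Gamma ((k : ℝ) / 2) ≠ 0 := (Real.Gamma_pos_of_pos (by positivity)).ne'
  have e1 : 2 * (2 * π) ^ (k - 1) * (besselInt (k + 2) / 2) =
    2 * (2 * π) ^ (k - 1) * besselInt (k + 2) / 2 := by ring
  rw [e1, besselInt_add_two_eq hk, add_sub_cancel_right, add_sub_cancel_right,
    Real.Gamma_add_one hk0.ne']
  unfold Vk
  rw [Real.Gamma_add_one (by positivity)]
  field_simp

lemma residue_third {k : ℕ} (hk : 5 ≤ k) :
    2 * (2 * π) ^ (k - 1) * (besselInt (k + 2) / 12 +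
        mixedSum k / oddSum k * besselInt k / (4 * π ^ 2)) / Real.Gamma ((k : ℝ) + 1 - 2) -
      2 * Vk k * (π ^ ((k : ℝ) / 2) * (1 / 12) / Real.Gamma ((k : ℝ) / 2 + 1 - 2)) = Ck k := by
  have hk0 : (5 : ℝ) ≤ k := by exact_mod_cast hk
  have h1 : Real.Gamma ((k : ℝ) - 1) ≠ 0 := (Real.Gamma_pos_of_pos (by linarith)).ne'
  have h2 : Real.Gamma ((k : ℝ) / 2) ≠ 0 := (Real.Gamma_pos_of_pos (by positivity)).ne'
  have h3 : Real.Gamma ((k : ℝ) / 2 - 1) ≠ 0 := (Real.Gamma_pos_of_pos (by linarith)).ne'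
  have g1 : Real.Gamma ((k : ℝ) + 1) = k * ((k - 1) * Real.Gamma ((k : ℝ) - 1)) := by
    rw [← Real.Gamma_add_one (by linarith), sub_add_cancel, ← Real.Gamma_add_one (by linarith)]
  have g2 : Real.Gamma ((k : ℝ) / 2 + 1) =
      k / 2 * ((k / 2 - 1) * Real.Gamma ((k : ℝ) / 2 - 1)) := by
    rw [← Real.Gamma_add_one (by linarith), sub_add_cancel, ← Real.Gamma_add_one (by linarith)]
  rw [show (k : ℝ) + 1 - 2 = k - 1 by ring, show (k : ℝ) / 2 + 1 - 2 = k / 2 - 1 by ring]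
  have p1 : 2 * (2 * π) ^ (k - 1) * (besselInt (k + 2) / 12) / Real.Gamma ((k : ℝ) - 1) =
      k * (k - 1) / 12 * Vk k ^ 2 := by
    rw [← mul_div_assoc, besselInt_add_two_eq (by omega), g1]
    field_simp
  have p2 : 2 * Vk k * (π ^ ((k : ℝ) / 2) * (1 / 12) / Real.Gamma ((k : ℝ) / 2 - 1)) =
      k * (k - 2) / 24 * Vk k ^ 2 := by
    have : π ^ ((k : ℝ) / 2) = Vk k * Real.Gamma ((k : ℝ) / 2 + 1) := by
      unfold Vk
      rw [div_mul_cancel₀ _ (Real.Gamma_pos_of_pos (by positivity)).ne']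
    rw [this, g2]
    generalize Real.Gamma ((k : ℝ) / 2 - 1) = g at *
    field_simp
    ring
  have p3 : 2 * (2 * π) ^ (k - 1) * (mixedSum k / oddSum k * besselInt k / (4 * π ^ 2)) /
      Real.Gamma ((k : ℝ) - 1) = π ^ (k : ℝ) * rzeta ((k : ℝ) - 2) *
        (1 + (2 : ℝ) ^ ((3 : ℝ) - (k : ℝ))) /
      (12 * (Real.Gamma ((k : ℝ) / 2)) ^ 2 * rzeta2 (k : ℝ)) := by
    have e1 : (2 : ℝ) ^ ((3 : ℝ) - (k : ℝ)) = 8 * (2 ^ k)⁻¹ := by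
      rw [Real.rpow_sub (by norm_num), Real.rpow_natCast]
      norm_num [div_eq_mul_inv]
    have e2 : mixedSum k / oddSum k =
        rzeta ((k : ℝ) - 2) * π ^ 2 * (1 + 8 * (2 ^ k)⁻¹) / (12 * rzeta2 k) := by
      rw [mixedSum_eq hk, oddSum_eq (by omega), rzeta2, Real.rpow_neg (by norm_num),
        Real.rpow_natCast, Nat.cast_sub (by omega), Nat.cast_ofNat, mul_assoc 2]
      generalize (1 - ((2 : ℝ) ^ k)⁻¹) * rzeta k = z
      ring
    rw [e2, e1, two_pi_pow (by omega), besselInt_eq (by omega), Real.rpow_natCast]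
    generalize rzeta2 (k : ℝ) = z
    have hpi := Real.pi_ne_zero
    field_simp
  rw [mul_add, add_div, p1, p2, p3]
  unfold Ck
  ring

lemma Pk_sq_div_cpow (k m : ℕ) (w : ℂ) :
    ((Pk k ((m : ℝ) + 1) : ℝ) : ℂ) ^ 2 / ((m : ℂ) + 1) ^ w =
      (((Sk k ((m : ℝ) + 1) : ℝ) ^ 2 : ℝ) : ℂ) / ((m : ℂ) + 1) ^ w -
      2 * Vk k * (((Sk k ((m : ℝ) + 1) : ℝ) : ℂ) / ((m : ℂ) + 1) ^ (w - ((k : ℝ) / 2 : ℝ))) +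
      (Vk k : ℂ) ^ 2 * (1 / ((m : ℂ) + 1) ^ (w - k)) := by
  have h0 : (m : ℂ) + 1 ≠ 0 := by exact_mod_cast m.succ_ne_zero
  have e : ((((m : ℝ) + 1) ^ ((k : ℝ) / 2) : ℝ) : ℂ) =
      ((m : ℂ) + 1) ^ (((k : ℝ) / 2 : ℝ) : ℂ) := by
    rw [Complex.ofReal_cpow (by positivity)]; push_cast; rfl
  have e2 : ((m : ℂ) + 1) ^ (k : ℂ) = (((m : ℂ) + 1) ^ (((k : ℝ) / 2 : ℝ) : ℂ)) ^ 2 := by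
    rw [← Complex.cpow_nat_mul]; congr 1; push_cast; ring
  rw [Complex.cpow_sub _ _ h0, Complex.cpow_sub _ _ h0, e2, Pk, Complex.ofReal_sub,
    Complex.ofReal_mul, e]
  have h1 : ((m : ℂ) + 1) ^ w ≠ 0 := by simp [Complex.cpow_eq_zero_iff, h0]
  have h2 : ((m : ℂ) + 1) ^ (((k : ℝ) / 2 : ℝ) : ℂ) ≠ 0 := by
    rw [Ne, Complex.cpow_eq_zero_iff]; exact fun h => h0 h.1
  generalize ((m : ℂ) + 1) ^ (((k : ℝ) / 2 : ℝ) : ℂ) = X at *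
  generalize ((m : ℂ) + 1) ^ w = Y at *
  push_cast
  field_simp
  ring

lemma summable_norm_div_cpow {a : ℕ → ℝ} (ha : ∀ m, 0 ≤ a m) {p C : ℝ}
    (hbound : ∀ m, a m ≤ C * ((m : ℝ) + 1) ^ p) {w : ℂ} (hw : p + 1 < w.re) :
    Summable fun m : ℕ => ‖(a m : ℂ) / ((m : ℂ) + 1) ^ w‖ := by
  refine (summable_div_rpow ha hbound hw).congr fun m => ?_
  rw [norm_div, Complex.norm_real, Real.norm_of_nonneg (ha m)]
  have : (m : ℂ) + 1 = (((m : ℝ) + 1 : ℝ) : ℂ) := by push_cast; rfl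
  rw [this, Complex.norm_cpow_eq_rpow_re_of_pos (by positivity)]

end LatticeDiscrepancy

namespace LatticeDiscrepancy

lemma tsum_one_div_cpow {z : ℂ} (hz : 1 < z.re) :
    ∑' m : ℕ, 1 / ((m : ℂ) + 1) ^ z = riemannZeta z := by
  rw [zeta_eq_tsum_one_div_nat_add_one_cpow hz]

lemma dirichlet_Sk_sq {k : ℕ} (hk : 5 ≤ k) :
    ∃ H : ℂ → ℂ, DifferentiableOn ℂ H {w | (k : ℝ) - 2 < w.re} ∧ ∀ w : ℂ, (k : ℝ) + 1 < w.re →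
      ∑' m : ℕ, (((Sk k ((m : ℝ) + 1) : ℝ) ^ 2 : ℝ) : ℂ) / ((m : ℂ) + 1) ^ w =
        H w + ((2 * (2 * π) ^ (k - 1) * besselInt (k + 2) / Real.Gamma ((k : ℝ) + 1) : ℝ) : ℂ) /
          (w - ((k : ℝ) + 1 : ℝ)) +
        ((2 * (2 * π) ^ (k - 1) * (besselInt (k + 2) / 2) / Real.Gamma ((k : ℝ) + 1 - 1) : ℝ) : ℂ) /
          (w - ((k : ℝ) + 1 - 1 : ℝ)) +
        ((2 * (2 * π) ^ (k - 1) * (besselInt (k + 2) / 12 +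
          mixedSum k / oddSum k * besselInt k / (4 * π ^ 2)) /
            Real.Gamma ((k : ℝ) + 1 - 2) : ℝ) : ℂ) / (w - ((k : ℝ) + 1 - 2 : ℝ)) := by
  obtain ⟨C, hC⟩ := Sk_sq_expansion hk
  obtain ⟨H, hH, h⟩ := dirichlet_continuation (a := fun m => (Sk k ((m : ℝ) + 1) : ℝ) ^ 2)
    (e := (k : ℝ) + 1) (fun m => sq_nonneg _) (Sk_succ_sq_le k) (by positivity) le_rfl
    (A := 2 * (2 * π) ^ (k - 1) * besselInt (k + 2))
    (B := 2 * (2 * π) ^ (k - 1) * (besselInt (k + 2) / 2))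
    (D := 2 * (2 * π) ^ (k - 1) * (besselInt (k + 2) / 12 +
          mixedSum k / oddSum k * besselInt k / (4 * π ^ 2)))
    (C := C) (fun t ht ht1 => by
      convert hC t ht ht1 using 3
      ring)
  refine ⟨H, hH.mono fun w hw => ?_, h⟩
  simp only [Set.mem_ofPred_eq] at hw ⊢
  linarith

lemma dirichlet_Sk {k : ℕ} (hk : 5 ≤ k) :
    ∃ H : ℂ → ℂ, DifferentiableOn ℂ H {w | (k : ℝ) / 2 - 2 < w.re} ∧
      ∀ w : ℂ, (k : ℝ) / 2 + 1 < w.re →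
      ∑' m : ℕ, ((Sk k ((m : ℝ) + 1) : ℝ) : ℂ) / ((m : ℂ) + 1) ^ w =
        H w + ((π ^ ((k : ℝ) / 2) / Real.Gamma ((k : ℝ) / 2 + 1) : ℝ) : ℂ) /
          (w - ((k : ℝ) / 2 + 1 : ℝ)) +
        ((π ^ ((k : ℝ) / 2) * (1 / 2) / Real.Gamma ((k : ℝ) / 2 + 1 - 1) : ℝ) : ℂ) /
          (w - ((k : ℝ) / 2 + 1 - 1 : ℝ)) +
        ((π ^ ((k : ℝ) / 2) * (1 / 12) / Real.Gamma ((k : ℝ) / 2 + 1 - 2) : ℝ) : ℂ) /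
          (w - ((k : ℝ) / 2 + 1 - 2 : ℝ)) := by
  obtain ⟨C, hC⟩ := Sk_expansion hk
  obtain ⟨H, hH, h⟩ := dirichlet_continuation (a := fun m => (Sk k ((m : ℝ) + 1) : ℝ))
    (e := (k : ℝ) / 2 + 1) (fun m => Nat.cast_nonneg _) (Sk_succ_le k) (by positivity) le_rfl
    (A := π ^ ((k : ℝ) / 2)) (B := π ^ ((k : ℝ) / 2) * (1 / 2))
    (D := π ^ ((k : ℝ) / 2) * (1 / 12)) (C := C) (fun t ht ht1 => by
      convert hC t ht ht1 using 3
      ring)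
  refine ⟨H, hH.mono fun w hw => ?_, h⟩
  simp only [Set.mem_ofPred_eq] at hw ⊢
  linarith

lemma hasSum_Pk_sq_div_cpow (k : ℕ) {w : ℂ} (hw : (k : ℝ) + 1 < w.re) :
    (Summable fun m : ℕ => ‖((Pk k ((m : ℝ) + 1) : ℝ) : ℂ) ^ 2 / ((m : ℂ) + 1) ^ w‖) ∧
    ∑' m : ℕ, ((Pk k ((m : ℝ) + 1) : ℝ) : ℂ) ^ 2 / ((m : ℂ) + 1) ^ w =
      (∑' m : ℕ, (((Sk k ((m : ℝ) + 1) : ℝ) ^ 2 : ℝ) : ℂ) / ((m : ℂ) + 1) ^ w) -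
      2 * Vk k * (∑' m : ℕ, ((Sk k ((m : ℝ) + 1) : ℝ) : ℂ) /
        ((m : ℂ) + 1) ^ (w - ((k : ℝ) / 2 : ℝ))) +
      (Vk k : ℂ) ^ 2 * riemannZeta (w - k) := by
  have s1 := summable_norm_div_cpow (a := fun m => (Sk k ((m : ℝ) + 1) : ℝ) ^ 2)
    (fun m => sq_nonneg _) (Sk_succ_sq_le k) hw
  have s2 := summable_norm_div_cpow (a := fun m => (Sk k ((m : ℝ) + 1) : ℝ))
    (fun m => Nat.cast_nonneg _) (Sk_succ_le k) (w := w - ((k : ℝ) / 2 : ℝ))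
    (by rw [Complex.sub_re, Complex.ofReal_re]; linarith)
  have hz : 1 < (w - k).re := by rw [Complex.sub_re, Complex.natCast_re]; linarith
  have s3 := summable_norm_div_cpow (a := fun _ => 1) (p := 0) (C := 1)
    (fun _ => zero_le_one) (fun m => by simp) (w := w - k) (by linarith)
  simp only [Complex.ofReal_one] at s3
  constructor
  · refine ((s1.add (s2.mul_left ‖(2 * Vk k : ℂ)‖)).add
      (s3.mul_left ‖(Vk k : ℂ) ^ 2‖)).of_nonneg_of_le
      (fun m => norm_nonneg _) fun m => ?_
    rw [Pk_sq_div_cpow, ← norm_mul, ← norm_mul]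
    exact (norm_add_le _ _).trans (add_le_add_left (norm_sub_le _ _) _)
  · simp only [Pk_sq_div_cpow]
    rw [(((s1.of_norm).sub (s2.of_norm.mul_left _)).tsum_add (s3.of_norm.mul_left _)),
      (s1.of_norm).tsum_sub (s2.of_norm.mul_left _), tsum_mul_left, tsum_mul_left,
      tsum_one_div_cpow hz]

end LatticeDiscrepancy

open Complex

/-- `D(s, P_k × P_k)` continues to `{Re s > 0}` with a single simple pole
at `s = 1` of residue `C_k`, for `k ≥ 5`. -/
theorem DPkPk_continuation_high_dim (k : ℕ) (hk : 5 ≤ k) :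
    ∃ G : ℂ → ℂ, DifferentiableOn ℂ G {s : ℂ | 0 < s.re} ∧
      ∀ s : ℂ, 3 < s.re →
        Summable (fun m : ℕ =>
          ‖((Pk k ((m : ℝ) + 1) : ℂ)) ^ 2 / ((m : ℂ) + 1) ^ (s + (k : ℂ) - 2)‖) ∧
        (∑' m : ℕ, ((Pk k ((m : ℝ) + 1) : ℂ)) ^ 2 / ((m : ℂ) + 1) ^ (s + (k : ℂ) - 2))
          = G s + (Ck k : ℂ) / (s - 1) := by
  obtain ⟨H₁, hd₁, h₁⟩ := LatticeDiscrepancy.dirichlet_Sk_sq hk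
  obtain ⟨H₂, hd₂, h₂⟩ := LatticeDiscrepancy.dirichlet_Sk hk
  refine ⟨fun s => H₁ (s + k - 2) - 2 * Vk k * H₂ (s + k - 2 - ((k : ℝ) / 2 : ℝ)) +
    (Vk k : ℂ) ^ 2 * riemannZeta₀ (s - 2), ?_, fun s hs => ?_⟩
  · refine ((hd₁.comp (by fun_prop) fun s hs => ?_).sub
      ((hd₂.comp (by fun_prop) fun s hs => ?_).const_mul _)).add
      (((differentiable_riemannZeta₀.comp (by fun_prop)).differentiableOn).const_mul _)
    all_goals
      simp only [Set.mem_ofPred_eq, sub_re, add_re, natCast_re, re_ofNat, ofReal_re] at hs ⊢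
      linarith
  have hw : (k : ℝ) + 1 < (s + (k : ℂ) - 2).re := by
    rw [sub_re, add_re, natCast_re, re_ofNat]; linarith
  obtain ⟨hsum, htsum⟩ := LatticeDiscrepancy.hasSum_Pk_sq_div_cpow k hw
  refine ⟨hsum, htsum.trans ?_⟩
  rw [h₁ _ hw, h₂ _ (by rw [sub_re, ofReal_re]; linarith),
    LatticeDiscrepancy.residue_first (by omega),
    LatticeDiscrepancy.residue_second (by omega), ← LatticeDiscrepancy.residue_third hk]
  have hV : π ^ ((k : ℝ) / 2) / Real.Gamma ((k : ℝ) / 2 + 1) = Vk k := rfl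
  rw [hV]
  have hz : riemannZeta (s + k - 2 - k) = riemannZeta₀ (s - 2) + 1 / (s - 3) := by
    have hs3 : s - 2 ≠ 1 := fun h => by
      have := congrArg re h
      rw [sub_re, re_ofNat, one_re] at this
      linarith
    rw [show s + k - 2 - k = s - 2 by ring, riemannZeta_eq_inv_sub_add hs3,
      show s - 2 - 1 = s - 3 by ring, one_div, add_comm]
  rw [hz]
  have d1 : s + (k : ℂ) - 2 - ((k : ℝ) + 1 : ℝ) = s - 3 := by push_cast; ring
  have d2 : s + (k : ℂ) - 2 - ((k : ℝ) + 1 - 1 : ℝ) = s - 2 := by push_cast; ring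
  have d3 : s + (k : ℂ) - 2 - ((k : ℝ) + 1 - 2 : ℝ) = s - 1 := by push_cast; ring
  have d4 : s + (k : ℂ) - 2 - ((k : ℝ) / 2 : ℝ) - ((k : ℝ) / 2 + 1 : ℝ) = s - 3 := by
    push_cast; ring
  have d5 : s + (k : ℂ) - 2 - ((k : ℝ) / 2 : ℝ) - ((k : ℝ) / 2 + 1 - 1 : ℝ) = s - 2 := by
    push_cast; ring
  have d6 : s + (k : ℂ) - 2 - ((k : ℝ) / 2 : ℝ) - ((k : ℝ) / 2 + 1 - 2 : ℝ) = s - 1 := by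
    push_cast; ring
  rw [d1, d2, d3, d4, d5, d6]
  beta_reduce
  generalize 2 * (2 * π) ^ (k - 1) * (LatticeDiscrepancy.besselInt (k + 2) / 12 +
    LatticeDiscrepancy.mixedSum k / LatticeDiscrepancy.oddSum k * LatticeDiscrepancy.besselInt k /
      (4 * π ^ 2)) / Real.Gamma ((k : ℝ) + 1 - 2) = x
  generalize π ^ ((k : ℝ) / 2) * (1 / 2) / Real.Gamma ((k : ℝ) / 2 + 1 - 1) = y
  generalize π ^ ((k : ℝ) / 2) * (1 / 12) / Real.Gamma ((k : ℝ) / 2 + 1 - 2) = z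
  push_cast
  ring
end
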